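/- Let K be a number field, S a finite set of places of K containing all the archimedean ones, and φ an endomorphism of ℙ¹ defined over K of degree d ≥ 2 with good reduction outside S. Then the number of K-rational preperiodic points of φ satisfies |PrePer(φ,K)| ≤ max{ T(|S|) + CV(d,|S|), 3·L₁(d,|S|) + 3 }, where T(s) = 12·7^{4s}, CV(d,s) = (3B(s)+13)d + 27B(s) + C(5,s) + 6C(3,s) + 32, L₁(d,s) = (d−1)(1 + d(1 + B(s))), B(s) = 2^{16s} and C(n,s) = e^{(6n)^{3n}(ns+1−n)}. In particular |PrePer(φ,K)| is bounded by a quadratic polynomial in d whose coefficients depend only on |S|. -/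

import Mathlib

open NumberField IsDedekindDomain MvPolynomial
open scoped Classical nonZeroDivisors

set_option synthInstance.maxHeartbeats 1000000
set_option maxHeartbeats 1000000

noncomputable section

/-- The projective line over `K`. -/
abbrev P1 (K : Type*) [Field K] := Projectivization K (Fin 2 → K)

variable {K : Type*} [Field K] [NumberField K]

/-- The additive `v`-adic valuation (order) of `x ∈ K`, with junk value `0` at `x = 0`,
normalized so that it is surjective onto `ℤ`. -/
def ordAt (v : HeightOneSpectrum (𝓞 K)) (x : K) : ℤ :=
  if hx : x = 0 then 0
  else - Multiplicative.toAdd (WithZero.unzero ((v.valuation K).ne_zero_iff.mpr hx))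

/-- `min (v(x), v(y))` for a pair of coordinates, not both zero. -/
def minOrd (v : HeightOneSpectrum (𝓞 K)) (x y : K) : ℤ :=
  if x = 0 then ordAt v y else if y = 0 then ordAt v x else min (ordAt v x) (ordAt v y)

/-- The `v`-adic logarithmic distance between two points of `ℙ¹(K)`:
`δ_v(P,Q) = v(x₁y₂ - x₂y₁) - min(v x₁, v y₁) - min(v x₂, v y₂)`, with value `⊤` when `P = Q`
(it is independent of the choice of homogeneous coordinates, so we compute it on the chosen
representatives). -/
def logDist (v : HeightOneSpectrum (𝓞 K)) (P Q : P1 K) : WithTop ℤ :=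
  if P = Q then ⊤
  else ((ordAt v (P.rep 0 * Q.rep 1 - P.rep 1 * Q.rep 0)
        - minOrd v (P.rep 0) (P.rep 1) - minOrd v (Q.rep 0) (Q.rep 1) : ℤ) : WithTop ℤ)

/-- An endomorphism of `ℙ¹` of degree `d` defined over `K`, given by a pair of homogeneous
forms of degree `d` with no common zero over the algebraic closure, together with the induced
self-map of `ℙ¹(K)`. -/
structure P1Map (K : Type*) [Field K] (d : ℕ) where
  toFun : P1 K → P1 K
  F : MvPolynomial (Fin 2) K
  G : MvPolynomial (Fin 2) K
  homF : F.IsHomogeneous d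
  homG : G.IsHomogeneous d
  coprime : ∀ x y : AlgebraicClosure K,
    aeval ![x, y] F = 0 → aeval ![x, y] G = 0 → x = 0 ∧ y = 0
  compat : ∀ (x y : K) (hxy : ![x, y] ≠ 0)
    (h : ![eval ![x, y] F, eval ![x, y] G] ≠ 0),
    toFun (Projectivization.mk K ![x, y] hxy) =
      Projectivization.mk K ![eval ![x, y] F, eval ![x, y] G] h

variable {d : ℕ}

/-- `φ` has good reduction at the finite place `v`: some representing pair of forms has
coefficients in the valuation ring at `v`, not all in the maximal ideal, and the reductions
of the two forms modulo `v` have no common zero in `ℙ¹` of the algebraic closure of the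
residue field. -/
def GoodReductionAt (φ : P1Map K d) (v : HeightOneSpectrum (𝓞 K)) : Prop :=
  ∃ c : K, c ≠ 0 ∧
    ∃ F₀ G₀ : MvPolynomial (Fin 2) (v.valuation (K := K)).valuationSubring,
      MvPolynomial.map ((v.valuation (K := K)).valuationSubring.subtype) F₀ = C c * φ.F ∧
      MvPolynomial.map ((v.valuation (K := K)).valuationSubring.subtype) G₀ = C c * φ.G ∧
      ((∃ m, F₀.coeff m ∉ IsLocalRing.maximalIdeal (v.valuation (K := K)).valuationSubring) ∨
        (∃ m, G₀.coeff m ∉ IsLocalRing.maximalIdeal (v.valuation (K := K)).valuationSubring)) ∧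
      ∀ x y : AlgebraicClosure
          (IsLocalRing.ResidueField (v.valuation (K := K)).valuationSubring),
        eval ![x, y] (MvPolynomial.map
          ((algebraMap (IsLocalRing.ResidueField (v.valuation (K := K)).valuationSubring)
              (AlgebraicClosure _)).comp
            (IsLocalRing.residue _)) F₀) = 0 →
        eval ![x, y] (MvPolynomial.map
          ((algebraMap (IsLocalRing.ResidueField (v.valuation (K := K)).valuationSubring)
              (AlgebraicClosure _)).comp
            (IsLocalRing.residue _)) G₀) = 0 →
        x = 0 ∧ y = 0

/-- `φ` has good reduction outside `S`, where `S` consists of all archimedean places together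
with the finite places in `T`. -/
def GoodReductionOutside (φ : P1Map K d) (T : Finset (HeightOneSpectrum (𝓞 K))) : Prop :=
  ∀ v ∉ T, GoodReductionAt φ v

/-- `P` is a periodic point of `φ`. -/
def IsPeriodicPoint (φ : P1Map K d) (P : P1 K) : Prop :=
  ∃ n, 0 < n ∧ φ.toFun^[n] P = P

/-- `P` is a preperiodic point of `φ`. -/
def IsPreperiodicPoint (φ : P1Map K d) (P : P1 K) : Prop :=
  ∃ m, IsPeriodicPoint φ (φ.toFun^[m] P)

/-- `P` is a tail point of `φ`: preperiodic but not periodic. -/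
def IsTailPoint (φ : P1Map K d) (P : P1 K) : Prop :=
  IsPreperiodicPoint φ P ∧ ¬ IsPeriodicPoint φ P

/-- The set `Tail(φ,K,P)` of `K`-rational tail points of `P`: non-periodic points having `P`
in their forward orbit. -/
def TailOf (φ : P1Map K d) (P : P1 K) : Set (P1 K) :=
  {Q | ¬ IsPeriodicPoint φ Q ∧ ∃ n, φ.toFun^[n] Q = P}

/-- `P = [a:b]` is a critical point of `φ = [F:G]`: the algebraic condition
`φ([x:y]) = φ([a:b])`, i.e. the form `G(a,b)·F(X,Y) - F(a,b)·G(X,Y)`, vanishes to order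
at least `2` at `[a:b]`. -/
def IsCriticalPt (φ : P1Map K d) (P : P1 K) : Prop :=
  ∃ (a b : K) (hab : ![a, b] ≠ 0), P = Projectivization.mk K ![a, b] hab ∧
    (C b * X 0 - C a * X 1) ^ 2 ∣
      (C (eval ![a, b] φ.G) * φ.F - C (eval ![a, b] φ.F) * φ.G)

/-- `P` belongs to a critical cycle of `φ`: it lies in the orbit of a critical periodic
point. -/
def InCriticalCycle (φ : P1Map K d) (P : P1 K) : Prop :=
  ∃ Q, IsCriticalPt φ Q ∧ IsPeriodicPoint φ Q ∧ ∃ n, φ.toFun^[n] Q = P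

/-- The cardinality `|S|` of the set of places `S` consisting of all archimedean places
together with the finite places in `T`. -/
def sCard (K : Type*) [Field K] [NumberField K] (T : Finset (HeightOneSpectrum (𝓞 K))) : ℕ :=
  T.card + Fintype.card (InfinitePlace K)

/-- `B(s) = 2^{16 s}`. -/
def Bconst (s : ℕ) : ℕ := 2 ^ (16 * s)

/-- `C(n,s) = e^{(6n)^{3n} (n s + 1 - n)}`. -/
def Cconst (n s : ℕ) : ℝ := Real.exp ((6 * n : ℝ) ^ (3 * n) * (n * s + 1 - n))

/-- `CV(d,s) = (3B(s)+13)d + 27B(s) + C(5,s) + 6C(3,s) + 32`. -/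
def CVconst (d s : ℕ) : ℝ :=
  (3 * (Bconst s : ℝ) + 13) * d + 27 * (Bconst s : ℝ) + Cconst 5 s + 6 * Cconst 3 s + 32

/-- `L₁(d,s) = (d-1)(1 + d(1 + B(s)))`. -/
def L1const (d s : ℕ) : ℕ := (d - 1) * (1 + d * (1 + Bconst s))

/-- `L₂(d,s) = max{(2(C(3,s)+2)+1)d + 1, (d-1)(1 + B(s)(B(s) + C(3,s) + 3))}`. -/
def L2const (d s : ℕ) : ℝ :=
  max ((2 * (Cconst 3 s + 2) + 1) * d + 1)
    (((d : ℝ) - 1) * (1 + (Bconst s : ℝ) * ((Bconst s : ℝ) + Cconst 3 s + 3)))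

/-- `L₃(d,s) = ((1 + 3B(s))B(s) + 1)(d-1)`. -/
def L3const (d s : ℕ) : ℕ := ((1 + 3 * Bconst s) * Bconst s + 1) * (d - 1)

/-- `L₄(d,s) = (C(3,s) + 3)(d-1)`. -/
def L4const (d s : ℕ) : ℝ := (Cconst 3 s + 3) * ((d : ℝ) - 1)

end

/-!
For two points of `ℙ¹(K)`, let their distance outside `S` be the sum of their logarithmic `v`-adic
distances over the places `v ∉ S`. Good reduction says that `φ` does not decrease it; more
precisely, the distances from a point to the points of a fibre of `φᵏ` add up to at most the
distance of the images. On the other hand, by the pigeonhole principle at each place of `S`, two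
large sets of points have large subsets whose mutual cross ratios are small at all places of `S`,
and the product formula turns this into lower bounds for distances outside `S`.

A periodic point keeps its distances outside `S` along its orbit. So for periodic points `a, a', b,
b'` whose cross ratio `x`, and that of their images `y`, are both small at `S`, the quotient
`(x - y) / (1 - x)` is integral outside `S` and small at `S`, hence zero. The equality of cross
ratios is a bilinear condition `b' ⬝ M φ(b') = 0`, a nonzero form of degree `d + 1` in `b'`, which
bounds the number of periodic points linearly in `d`.

The shadow of a preperiodic point `y` is the periodic point `p` with the same image under a high
iterate. If `y ≠ p` and `q ≠ p` is another periodic point, then `y` and `p` lie in one fibre of an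
iterate which fixes `p` and `q`, so the distance from `q` to `p` dominates its sum with the distance
from `q` to `y`, and the latter is zero. Hence many nonperiodic points and many periodic ones which
are not their shadows are at total distance zero outside `S`, against the product formula. If there
are few periodic points, it remains to bound the tails over a single one: its distance to the points
of a tail at least doubles with each step but the last, while the points which reach it first are at
bounded total distance from the others, and this again contradicts the product formula.
-/

section Wedge

variable {R : Type*} [CommRing R]

/-- The determinant of two vectors of `R²`. Two nonzero vectors over a field represent the same
point of the projective line exactly when it vanishes. -/
def wedge (u w : Fin 2 → R) : R := u 0 * w 1 - u 1 * w 0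

lemma wedge_self (u : Fin 2 → R) : wedge u u = 0 := by
  rw [wedge]; ring

lemma wedge_swap (u w : Fin 2 → R) : wedge u w = -wedge w u := by
  rw [wedge, wedge]; ring

lemma wedge_smul_left (c : R) (u w : Fin 2 → R) : wedge (c • u) w = c * wedge u w := by
  simp only [wedge, Pi.smul_apply, smul_eq_mul]; ring

lemma wedge_smul_right (c : R) (u w : Fin 2 → R) : wedge u (c • w) = c * wedge u w := by
  simp only [wedge, Pi.smul_apply, smul_eq_mul]; ring

lemma wedge_mul_wedge_sub (a a' b b' : Fin 2 → R) :
    wedge a b * wedge a' b' - wedge a a' * wedge b b' = wedge a b' * wedge a' b := by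
  simp only [wedge]; ring

end Wedge

section Thinning

lemma exists_card_filter_mem_between {ι β : Type*} (A : Finset ι) (g : ι → β)
    (hfib : ∀ t, 2 * (A.filter fun a => g a = t).card ≤ A.card) :
    ∃ G : Finset β, A.card ≤ 4 * (A.filter fun a => g a ∈ G).card ∧
      4 * (A.filter fun a => g a ∈ G).card ≤ 3 * A.card := by
  suffices H : ∀ G : Finset β, A.card ≤ 4 * (A.filter fun a => g a ∈ G).card →
      ∃ G' : Finset β, A.card ≤ 4 * (A.filter fun a => g a ∈ G').card ∧
        4 * (A.filter fun a => g a ∈ G').card ≤ 3 * A.card by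
    refine H (A.image g) ?_
    rw [Finset.filter_true_of_mem fun a ha => Finset.mem_image_of_mem g ha]
    lia
  intro G
  induction G using Finset.induction_on with
  | empty => exact fun h => ⟨∅, h, by simp⟩
  | insert t G _ ih =>
    intro h
    by_cases hG : A.card ≤ 4 * (A.filter fun a => g a ∈ G).card
    · exact ih hG
    · refine ⟨insert t G, h, ?_⟩
      have hle : (A.filter fun a => g a ∈ insert t G).card ≤
          (A.filter fun a => g a = t).card + (A.filter fun a => g a ∈ G).card := by
        simp only [Finset.mem_insert, Finset.filter_or]
        exact Finset.card_union_le _ _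
      have := hfib t
      lia

lemma exists_subsets_forall_ne {ι β : Type*} (A B : Finset ι) (g : ι → β)
    (hfib : ∀ t, 2 * (A.filter fun a => g a = t).card ≤ A.card) :
    ∃ A' ⊆ A, ∃ B' ⊆ B, A.card ≤ 4 * A'.card ∧ B.card ≤ 2 * B'.card ∧
      ∀ a ∈ A', ∀ b ∈ B', g a ≠ g b := by
  obtain ⟨G, hlow, hupp⟩ := exists_card_filter_mem_between A g hfib
  have hA := Finset.card_filter_add_card_filter_not (s := A) fun a => g a ∈ G
  have hB := Finset.card_filter_add_card_filter_not (s := B) fun b => g b ∈ G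
  by_cases h : B.card ≤ 2 * (B.filter fun b => g b ∈ G).card
  · refine ⟨A.filter fun a => g a ∉ G, Finset.filter_subset _ _,
      B.filter fun b => g b ∈ G, Finset.filter_subset _ _, by lia, h, fun a ha b hb hab => ?_⟩
    exact (Finset.mem_filter.1 ha).2 (hab ▸ (Finset.mem_filter.1 hb).2)
  · refine ⟨A.filter fun a => g a ∈ G, Finset.filter_subset _ _,
      B.filter fun b => g b ∉ G, Finset.filter_subset _ _, hlow, by lia, fun a ha b hb hab => ?_⟩
    exact (Finset.mem_filter.1 hb).2 (hab ▸ (Finset.mem_filter.1 ha).2)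

/-- The ball is one of minimal radius among those centred at a point of `A`, passing through a
point of `A` and containing a fraction `1 / M` of `A`. -/
lemma exists_ball_card_le {ι : Type*} (δ : ι → ι → ℝ) (A : Finset ι) {M : ℕ} (hM : 1 ≤ M)
    (hδ : ∀ i ∈ A, ∀ j ∈ A, i ≠ j → 0 < δ i j) (hcard : M < A.card) :
    ∃ c, ∃ r > 0, A.card ≤ M * (A.filter fun i => δ i c ≤ r).card ∧
      ∀ E ⊆ A, (∀ i ∈ E, ∀ j ∈ E, δ i j < r) → M * E.card < A.card := by
  let Q : Finset (ι × ι) := (A ×ˢ A).filter fun p =>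
    A.card ≤ M * (A.filter fun i => δ i p.1 ≤ δ p.2 p.1).card
  have exists_mem_Q : ∀ E ⊆ A, A.card ≤ M * E.card → ∃ p ∈ Q, p.1 ∈ E ∧ p.2 ∈ E := by
    intro E hE hc
    obtain ⟨i, hi⟩ : E.Nonempty :=
      Finset.card_pos.1 (Nat.pos_of_mul_pos_left (by lia : 0 < M * E.card))
    obtain ⟨j, hj, hmax⟩ := Finset.exists_max_image E (fun k => δ k i) ⟨i, hi⟩
    refine ⟨(i, j), Finset.mem_filter.2 ⟨Finset.mk_mem_product (hE hi) (hE hj), ?_⟩, hi, hj⟩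
    exact hc.trans (Nat.mul_le_mul_left _ (Finset.card_le_card fun k hk =>
      Finset.mem_filter.2 ⟨hE hk, hmax k hk⟩))
  obtain ⟨q, hq, -⟩ := exists_mem_Q A subset_rfl (Nat.le_mul_of_pos_left _ hM)
  obtain ⟨⟨c, e⟩, hp, hmin⟩ := Finset.exists_min_image Q (fun p => δ p.2 p.1) ⟨q, hq⟩
  obtain ⟨hmem, hball⟩ := Finset.mem_filter.1 hp
  have hc : c ∈ A := (Finset.mem_product.1 hmem).1
  refine ⟨c, δ e c, ?_, hball, fun E hE hlt => ?_⟩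
  · by_contra! hr
    have hsub : A.filter (fun i => δ i c ≤ δ e c) ⊆ {c} := fun i hi => by
      obtain ⟨hiA, hi⟩ := Finset.mem_filter.1 hi
      by_contra hne
      exact (hδ i hiA c hc fun h => hne (Finset.mem_singleton.2 h)).not_ge (hi.trans hr)
    have := Nat.mul_le_mul_left M (Finset.card_le_card hsub)
    simp only [Finset.card_singleton] at this hball
    lia
  · by_contra! hcE
    obtain ⟨p, hp, hp₁, hp₂⟩ := exists_mem_Q E hE hcE
    exact (hmin p hp).not_gt (hlt _ hp₂ _ hp₁)

lemma exists_subset_norm_sub_lt {ι : Type*} (z : ι → ℂ) (E : Finset ι) {r : ℝ} (hr : 0 < r)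
    (n : ℕ) (hE : ∀ i ∈ E, ‖z i‖ ≤ n * r) :
    ∃ E' ⊆ E, E.card ≤ (4 * n + 1) ^ 2 * E'.card ∧ ∀ i ∈ E', ∀ j ∈ E', ‖z i - z j‖ < r := by
  let J : Finset ℤ := Finset.Icc (-(2 * n)) (2 * n)
  have card_J : J.card = 4 * n + 1 := by rw [Int.card_Icc]; lia
  let cell : ι → ℤ × ℤ := fun i => (⌊2 * (z i).re / r⌋, ⌊2 * (z i).im / r⌋)
  have floor_mem : ∀ y : ℝ, |y| ≤ n * r → ⌊2 * y / r⌋ ∈ J := by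
    intro y hy
    obtain ⟨hy₁, hy₂⟩ := abs_le.1 hy
    refine Finset.mem_Icc.2 ⟨?_, ?_⟩
    · rw [Int.le_floor, le_div_iff₀ hr]; push_cast; linarith
    · rw [← Int.lt_add_one_iff, Int.floor_lt, div_lt_iff₀ hr]; push_cast; linarith
  have cell_mem : ∀ i ∈ E, cell i ∈ J ×ˢ J := fun i hi => Finset.mk_mem_product
    (floor_mem _ ((Complex.abs_re_le_norm _).trans (hE i hi)))
    (floor_mem _ ((Complex.abs_im_le_norm _).trans (hE i hi)))
  have abs_sub_lt : ∀ y y' : ℝ, ⌊2 * y / r⌋ = ⌊2 * y' / r⌋ → |y - y'| < r / 2 := by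
    intro y y' h
    have h := Int.abs_sub_lt_one_of_floor_eq_floor h
    rw [← sub_div, abs_div, abs_of_pos hr, div_lt_one hr, ← mul_sub, abs_mul, abs_two] at h
    linarith
  obtain ⟨k, -, hk⟩ := Finset.exists_le_card_fiber_of_nsmul_le_card_of_maps_to
    (b := (E.card : ℚ) / (J ×ˢ J).card) cell_mem
    ⟨(0, 0), Finset.mk_mem_product (Finset.mem_Icc.2 (by lia)) (Finset.mem_Icc.2 (by lia))⟩
    (by rw [nsmul_eq_mul, mul_div_cancel₀]; rw [Finset.card_product, card_J]; positivity)
  refine ⟨_, Finset.filter_subset (fun i => cell i = k) E, ?_, fun i hi j hj => ?_⟩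
  · rw [Finset.card_product, card_J, div_le_iff₀ (by positivity)] at hk
    rw [sq, mul_comm]
    exact_mod_cast hk
  · have h : cell i = cell j := (Finset.mem_filter.1 hi).2.trans (Finset.mem_filter.1 hj).2.symm
    have hre := abs_sub_lt _ _ (congrArg Prod.fst h)
    have him := abs_sub_lt _ _ (congrArg Prod.snd h)
    rw [← Complex.sub_re] at hre
    rw [← Complex.sub_im] at him
    linarith [Complex.norm_le_abs_re_add_abs_im (z i - z j)]

end Thinning

noncomputable section Disc

variable {K : Type*} [Field K] {f : AbsoluteValue K ℝ} {c : K} {r : ℝ} {u w : Fin 2 → K}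

/-- The norm on `K²` attached to the disc of centre `c` and radius `r` in the affine line; the
standard maximum norm is the case `c = 0`, `r = 1`. -/
def discNorm (f : AbsoluteValue K ℝ) (c : K) (r : ℝ) (u : Fin 2 → K) : ℝ :=
  max (f (u 0 - c * u 1)) (r * f (u 1))

lemma discNorm_nonneg : 0 ≤ discNorm f c r u :=
  (f.nonneg _).trans (le_max_left _ _)

lemma discNorm_pos (hr : 0 < r) (hu : u ≠ 0) : 0 < discNorm f c r u := by
  by_cases h : u 1 = 0
  · refine lt_max_of_lt_left (f.pos fun h₀ => hu ?_)
    rw [h, mul_zero, sub_zero] at h₀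
    exact funext (Fin.forall_fin_two.2 ⟨h₀, h⟩)
  · exact lt_max_of_lt_right (mul_pos hr (f.pos h))

lemma discNorm_smul (α : K) : discNorm f c r (α • u) = f α * discNorm f c r u := by
  have h : (α • u) 0 - c * (α • u) 1 = α * (u 0 - c * u 1) := by
    simp only [Pi.smul_apply, smul_eq_mul]; ring
  rw [discNorm, h, Pi.smul_apply, smul_eq_mul, map_mul, map_mul, mul_left_comm,
    ← mul_max_of_nonneg _ _ (f.nonneg _), discNorm]

lemma discNorm_add_le (hr : 0 ≤ r) :
    discNorm f c r (u + w) ≤ discNorm f c r u + discNorm f c r w := by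
  have h : (u + w) 0 - c * (u + w) 1 = (u 0 - c * u 1) + (w 0 - c * w 1) := by
    simp only [Pi.add_apply]; ring
  rw [discNorm, h]
  refine max_le ((f.add_le _ _).trans (add_le_add (le_max_left _ _) (le_max_left _ _))) ?_
  refine (mul_le_mul_of_nonneg_left (f.add_le _ _) hr).trans ?_
  rw [mul_add]
  exact add_le_add (le_max_right _ _) (le_max_right _ _)

lemma wedge_eq_sub_mul (c : K) (u w : Fin 2 → K) :
    wedge u w = (u 0 - c * u 1) * w 1 - (w 0 - c * w 1) * u 1 := by
  rw [wedge]; ring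

lemma mul_abv_mul_le (hr : 0 ≤ r) :
    r * f ((u 0 - c * u 1) * w 1) ≤ discNorm f c r u * discNorm f c r w := by
  rw [map_mul, mul_left_comm]
  exact mul_le_mul (le_max_left _ _) (le_max_right _ _) (mul_nonneg hr (f.nonneg _))
    discNorm_nonneg

lemma mul_abv_wedge_le (hr : 0 ≤ r) :
    r * f (wedge u w) ≤ 2 * discNorm f c r u * discNorm f c r w := by
  have h₁ := mul_abv_mul_le (f := f) (c := c) (u := u) (w := w) hr
  have h₂ := mul_abv_mul_le (f := f) (c := c) (u := w) (w := u) hr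
  have h₃ := mul_le_mul_of_nonneg_left
    (f.sub_le_add ((u 0 - c * u 1) * w 1) ((w 0 - c * w 1) * u 1)) hr
  rw [← wedge_eq_sub_mul] at h₃
  linarith

section Nonarchimedean

variable (hf : IsNonarchimedean f)
include hf

lemma discNorm_add_le_max (hr : 0 ≤ r) :
    discNorm f c r (u + w) ≤ max (discNorm f c r u) (discNorm f c r w) := by
  have h : (u + w) 0 - c * (u + w) 1 = (u 0 - c * u 1) + (w 0 - c * w 1) := by
    simp only [Pi.add_apply]; ring
  rw [discNorm, h]
  refine max_le ((hf _ _).trans (max_le_max (le_max_left _ _) (le_max_left _ _))) ?_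
  refine (mul_le_mul_of_nonneg_left (hf _ _) hr).trans ?_
  rw [mul_max_of_nonneg _ _ hr]
  exact max_le_max (le_max_right _ _) (le_max_right _ _)

lemma mul_abv_wedge_le_of_isNonarchimedean (hr : 0 ≤ r) :
    r * f (wedge u w) ≤ discNorm f c r u * discNorm f c r w := by
  rw [wedge_eq_sub_mul c, sub_eq_add_neg]
  refine (mul_le_mul_of_nonneg_left (hf _ _) hr).trans ?_
  rw [f.map_neg, mul_max_of_nonneg _ _ hr]
  exact max_le (mul_abv_mul_le hr) ((mul_abv_mul_le hr).trans_eq (mul_comm _ _))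

/-- The ultrametric inequality for the chordal distance, from the linear relation between three
vectors of the plane. -/
lemma abv_wedge_mul_discNorm_le (hr : 0 ≤ r) (x : Fin 2 → K) :
    f (wedge u w) * discNorm f c r x ≤
      max (f (wedge u x) * discNorm f c r w) (f (wedge x w) * discNorm f c r u) := by
  have h : wedge u w • x = wedge u x • w + wedge x w • u := by
    ext i
    simp only [wedge, Pi.add_apply, Pi.smul_apply, smul_eq_mul]
    fin_cases i <;> (simp only [Fin.zero_eta, Fin.mk_one]; ring)
  simpa only [← discNorm_smul, h] using discNorm_add_le_max hf hr

end Nonarchimedean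

/-- Two points have the same residue class if their chordal distance, for the norm attached to a
disc, is smaller than the largest possible value `1`. -/
def SameResidue (f : AbsoluteValue K ℝ) (c : K) (r : ℝ) (u w : Fin 2 → K) : Prop :=
  r * f (wedge u w) < discNorm f c r u * discNorm f c r w

lemma SameResidue.symm (h : SameResidue f c r u w) : SameResidue f c r w u := by
  rwa [SameResidue, wedge_swap, f.map_neg, mul_comm (discNorm f c r w)]

lemma SameResidue.trans (hf : IsNonarchimedean f) (hr : 0 ≤ r) {x : Fin 2 → K}
    (hux : SameResidue f c r u x) (hxw : SameResidue f c r x w) : SameResidue f c r u w := by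
  have hx : 0 < discNorm f c r x := pos_of_mul_pos_right
    ((mul_nonneg hr (f.nonneg _)).trans_lt hux) discNorm_nonneg
  have hu : 0 < discNorm f c r u := pos_of_mul_pos_left
    ((mul_nonneg hr (f.nonneg _)).trans_lt hux) hx.le
  have hw : 0 < discNorm f c r w := pos_of_mul_pos_right
    ((mul_nonneg hr (f.nonneg _)).trans_lt hxw) hx.le
  refine lt_of_mul_lt_mul_right ?_ hx.le
  calc r * f (wedge u w) * discNorm f c r x
      ≤ max (r * f (wedge u x) * discNorm f c r w) (r * f (wedge x w) * discNorm f c r u) := by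
        simpa only [mul_assoc, mul_max_of_nonneg _ _ hr] using
          mul_le_mul_of_nonneg_left (abv_wedge_mul_discNorm_le hf hr x) hr
    _ < discNorm f c r u * discNorm f c r w * discNorm f c r x := by
        refine max_lt ?_ ?_
        · rw [mul_right_comm (discNorm f c r u)]
          exact mul_lt_mul_of_pos_right hux hw
        · rw [mul_comm (discNorm f c r u * _), mul_comm (discNorm f c r u), ← mul_assoc]
          exact mul_lt_mul_of_pos_right hxw hu

/-- The affine coordinate of the point of the projective line represented by `u`; junk value `0`
at infinity. -/
def affineCoord (u : Fin 2 → K) : K := u 0 / u 1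

lemma discNorm_eq_abv_mul (hu : u 1 ≠ 0) :
    discNorm f c r u = f (u 1) * max (f (affineCoord u - c)) r := by
  rw [mul_max_of_nonneg _ _ (f.nonneg _), ← map_mul, affineCoord, mul_sub, mul_div_cancel₀ _ hu,
    mul_comm (u 1) c, mul_comm (f (u 1)) r, discNorm]

lemma abv_wedge_eq_abv_mul (hu : u 1 ≠ 0) (hw : w 1 ≠ 0) :
    f (wedge u w) = f (u 1) * f (w 1) * f (affineCoord u - affineCoord w) := by
  rw [← map_mul, ← map_mul, wedge, affineCoord, affineCoord]
  congr 1
  field_simp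

end Disc

section Separated

variable {K ι : Type*} [Field K] {f : AbsoluteValue K ℝ} {θ : ℝ} {vec : ι → Fin 2 → K}
  {A B A' B' : Finset ι}

/-- Two finite families of points of the projective line, given by homogeneous coordinates, are
separated if, for the chordal distance attached to some disc, every point of `A` is almost as far
as possible from every point of `B`, and the cross ratios of two points of `A` with two points of
`B` have absolute value at most `θ`. -/
def Separated (f : AbsoluteValue K ℝ) (θ : ℝ) (vec : ι → Fin 2 → K) (A B : Finset ι) : Prop :=
  ∃ (c : K) (r : ℝ), 0 < r ∧
    (∀ a ∈ A, ∀ b ∈ B, discNorm f c r (vec a) * discNorm f c r (vec b) ≤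
      2 * r * f (wedge (vec a) (vec b))) ∧
    ∀ a ∈ A, ∀ a' ∈ A, ∀ b ∈ B, ∀ b' ∈ B,
      f (wedge (vec a) (vec a')) * f (wedge (vec b) (vec b')) ≤
        θ * (f (wedge (vec a) (vec b)) * f (wedge (vec a') (vec b')))

lemma Separated.mono (h : Separated f θ vec A B) (hA : A' ⊆ A) (hB : B' ⊆ B) :
    Separated f θ vec A' B' := by
  obtain ⟨c, r, hr, hdist, hcross⟩ := h
  exact ⟨c, r, hr, fun a ha b hb => hdist a (hA ha) b (hB hb), fun a ha a' ha' b hb b' hb' =>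
    hcross a (hA ha) a' (hA ha') b (hB hb) b' (hB hb')⟩

lemma Separated.symm (h : Separated f θ vec A B) : Separated f θ vec B A := by
  have abv_swap : ∀ u w : Fin 2 → K, f (wedge u w) = f (wedge w u) := fun u w => by
    rw [wedge_swap, f.map_neg]
  obtain ⟨c, r, hr, hdist, hcross⟩ := h
  refine ⟨c, r, hr, fun b hb a ha => ?_, fun b hb b' hb' a ha a' ha' => ?_⟩
  · rw [mul_comm, abv_swap]
    exact hdist a ha b hb
  · rw [mul_comm, abv_swap (vec b) (vec a), abv_swap (vec b') (vec a')]
    exact hcross a ha a' ha' b hb b' hb'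

lemma separated_of_not_sameResidue (hf : IsNonarchimedean f) {c : K} {r : ℝ} (hr : 0 < r)
    (h : ∀ a ∈ A, ∀ b ∈ B, ¬ SameResidue f c r (vec a) (vec b)) : Separated f 1 vec A B := by
  have far : ∀ a ∈ A, ∀ b ∈ B,
      discNorm f c r (vec a) * discNorm f c r (vec b) ≤ r * f (wedge (vec a) (vec b)) :=
    fun a ha b hb => not_lt.1 (h a ha b hb)
  have near : ∀ u w, r * f (wedge u w) ≤ discNorm f c r u * discNorm f c r w := fun u w =>
    mul_abv_wedge_le_of_isNonarchimedean hf hr.le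
  have nonneg : ∀ u w, 0 ≤ r * f (wedge u w) := fun u w => mul_nonneg hr.le (f.nonneg _)
  refine ⟨c, r, hr, fun a ha b hb => ?_, fun a ha a' ha' b hb b' hb' => ?_⟩
  · linarith [far a ha b hb, nonneg (vec a) (vec b)]
  · rw [one_mul]
    refine le_of_mul_le_mul_left ?_ (mul_pos hr hr)
    calc r * r * (f (wedge (vec a) (vec a')) * f (wedge (vec b) (vec b')))
        = r * f (wedge (vec a) (vec a')) * (r * f (wedge (vec b) (vec b'))) := by ring
      _ ≤ discNorm f c r (vec a) * discNorm f c r (vec a') *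
          (discNorm f c r (vec b) * discNorm f c r (vec b')) :=
        mul_le_mul (near _ _) (near _ _) (nonneg _ _) ((nonneg _ _).trans (near _ _))
      _ = discNorm f c r (vec a) * discNorm f c r (vec b) *
          (discNorm f c r (vec a') * discNorm f c r (vec b')) := by ring
      _ ≤ r * f (wedge (vec a) (vec b)) * (r * f (wedge (vec a') (vec b'))) :=
        mul_le_mul (far a ha b hb) (far a' ha' b' hb')
          (mul_nonneg discNorm_nonneg discNorm_nonneg) (nonneg _ _)
      _ = r * r * (f (wedge (vec a) (vec b)) * f (wedge (vec a') (vec b'))) := by ring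

lemma two_mul_card_le_of_sameResidue (hf : IsNonarchimedean f) {c : K} {r : ℝ} (hr : 0 < r)
    (hA : ∀ i ∈ A, vec i 1 ≠ 0)
    (hball : A.card ≤ 2 * (A.filter fun i => f (affineCoord (vec i) - c) ≤ r).card)
    (hsmall : ∀ E ⊆ A, (∀ i ∈ E, ∀ j ∈ E, f (affineCoord (vec i) - affineCoord (vec j)) < r) →
      2 * E.card < A.card) {E : Finset ι} (hEA : E ⊆ A)
    (hE : ∀ i ∈ E, ∀ j ∈ E, SameResidue f c r (vec i) (vec j)) :
    2 * E.card ≤ A.card := by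
  let x : ι → K := fun i => affineCoord (vec i)
  have abv_lt : ∀ i ∈ E, ∀ j ∈ E,
      r * f (x i - x j) < max (f (x i - c)) r * max (f (x j - c)) r := by
    intro i hi j hj
    have h := hE i hi j hj
    rw [SameResidue, abv_wedge_eq_abv_mul (hA i (hEA hi)) (hA j (hEA hj)),
      discNorm_eq_abv_mul (hA i (hEA hi)), discNorm_eq_abv_mul (hA j (hEA hj)), mul_left_comm,
      mul_mul_mul_comm _ (max _ _)] at h
    exact lt_of_mul_lt_mul_left h (mul_nonneg (f.nonneg _) (f.nonneg _))
  by_cases h : ∃ i ∈ E, f (x i - c) ≤ r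
  · obtain ⟨i, hi, hic⟩ := h
    have hin : ∀ j ∈ E, f (x j - c) ≤ r := by
      intro j hj
      by_contra! hjc
      have hji : f (x j - c) ≤ f (x i - x j) := by
        have := hf (x j - x i) (x i - c)
        rw [sub_add_sub_cancel, f.map_sub (x j) (x i)] at this
        exact (le_max_iff.1 this).resolve_right (hic.trans_lt hjc).not_ge
      have := abv_lt i hi j hj
      rw [max_eq_right hic, max_eq_left hjc.le] at this
      exact hji.not_gt (lt_of_mul_lt_mul_left this hr.le)
    refine (hsmall E hEA fun j hj k hk => ?_).le
    have := abv_lt j hj k hk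
    rw [max_eq_right (hin j hj), max_eq_right (hin k hk)] at this
    exact lt_of_mul_lt_mul_left this hr.le
  · have hsub : E ⊆ A.filter fun i => ¬ f (x i - c) ≤ r := fun i hi =>
      Finset.mem_filter.2 ⟨hEA hi, fun hic => h ⟨i, hi, hic⟩⟩
    have := Finset.card_le_card hsub
    have := Finset.card_filter_add_card_filter_not (s := A) fun i => f (x i - c) ≤ r
    lia

lemma affineCoord_injOn (hA : ∀ i ∈ A, vec i 1 ≠ 0)
    (hinj : ∀ i ∈ A, ∀ j ∈ A, wedge (vec i) (vec j) = 0 → i = j) :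
    Set.InjOn (fun i => affineCoord (vec i)) A := by
  intro i hi j hj hij
  have h := (div_eq_div_iff (hA i hi) (hA j hj)).1 hij
  exact hinj i hi j hj (by rw [wedge, h]; ring)

/-- Points in different residue classes, for the chordal distance of a disc of minimal radius
containing half of `A`, are at maximal distance. -/
lemma exists_separated_of_isNonarchimedean (hf : IsNonarchimedean f) (B : Finset ι)
    (hA : ∀ i ∈ A, vec i 1 ≠ 0)
    (hinj : ∀ i ∈ A, ∀ j ∈ A, wedge (vec i) (vec j) = 0 → i = j) (hcard : 2 < A.card) :
    ∃ A' ⊆ A, ∃ B' ⊆ B, A.card ≤ 4 * A'.card ∧ B.card ≤ 2 * B'.card ∧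
      Separated f 1 vec A' B' := by
  obtain ⟨c, r, hr, hball, hsmall⟩ := exists_ball_card_le
    (fun i j => f (affineCoord (vec i) - affineCoord (vec j))) A one_le_two
    (fun i hi j hj hij => f.pos (sub_ne_zero.2 fun h => hij (affineCoord_injOn hA hinj hi hj h)))
    hcard
  let g : ι → Set (Fin 2 → K) := fun i => {w | SameResidue f (affineCoord (vec c)) r (vec i) w}
  have sameResidue_of_eq : ∀ i j, vec j 1 ≠ 0 → g i = g j →
      SameResidue f (affineCoord (vec c)) r (vec i) (vec j) := by
    intro i j hj hij
    have hself : vec j ∈ g j := by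
      have hpos := discNorm_pos (f := f) (c := affineCoord (vec c)) hr fun h => hj (congrFun h 1)
      rw [Set.mem_ofPred_eq, SameResidue, wedge_self, map_zero, mul_zero]
      exact mul_pos hpos hpos
    rwa [← hij] at hself
  obtain ⟨A', hA', B', hB', hcA, hcB, hne⟩ := exists_subsets_forall_ne A B g fun t =>
    two_mul_card_le_of_sameResidue hf hr hA hball hsmall (Finset.filter_subset _ _)
      fun i hi j hj => sameResidue_of_eq i j (hA j (Finset.mem_filter.1 hj).1)
        ((Finset.mem_filter.1 hi).2.trans (Finset.mem_filter.1 hj).2.symm)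
  refine ⟨A', hA', B', hB', hcA, hcB, separated_of_not_sameResidue hf hr fun a ha b hb hab =>
    hne a ha b hb (Set.ext fun w => ⟨hab.symm.trans hf hr.le, hab.trans hf hr.le⟩)⟩

lemma separated_of_affineCoord (hA₁ : ∀ i ∈ A, vec i 1 ≠ 0) (hB₁ : ∀ i ∈ B, vec i 1 ≠ 0) {c : K}
    {r : ℝ} (hr : 0 < r) (hA : ∀ i ∈ A, f (affineCoord (vec i) - c) ≤ r)
    (hB : ∀ i ∈ B, 20 * r ≤ f (affineCoord (vec i) - c)) : Separated f (1 / 4) vec A B := by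
  let x : ι → K := fun i => affineCoord (vec i)
  have dist_le : ∀ a ∈ A, ∀ b ∈ B, f (x b - c) ≤ 20 / 19 * f (x a - x b) := by
    intro a ha b hb
    have h := f.add_le (x b - x a) (x a - c)
    rw [sub_add_sub_cancel, f.map_sub (x b) (x a)] at h
    linarith [hA a ha, hB b hb]
  refine ⟨c, r, hr, fun a ha b hb => ?_, fun a ha a' ha' b hb b' hb' => ?_⟩
  · have h : max (f (x a - c)) r * max (f (x b - c)) r ≤ 2 * r * f (x a - x b) := by
      rw [max_eq_right (hA a ha), max_eq_left (by linarith [hB b hb])]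
      nlinarith [dist_le a ha b hb, f.nonneg (x a - x b)]
    rw [discNorm_eq_abv_mul (hA₁ a ha), discNorm_eq_abv_mul (hB₁ b hb),
      abv_wedge_eq_abv_mul (hA₁ a ha) (hB₁ b hb), mul_mul_mul_comm, mul_left_comm (2 * r)]
    exact mul_le_mul_of_nonneg_left h (mul_nonneg (f.nonneg _) (f.nonneg _))
  · have haa' : f (x a - x a') ≤ 2 * r := by
      have := f.add_le (x a - c) (c - x a')
      rw [sub_add_sub_cancel, f.map_sub c] at this
      linarith [hA a ha, hA a' ha']
    have hbb' : f (x b - x b') ≤ f (x b - c) + f (x b' - c) := by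
      simpa only [sub_add_sub_cancel, f.map_sub c] using f.add_le (x b - c) (c - x b')
    have h : f (x a - x a') * f (x b - x b') ≤ 1 / 4 * (f (x a - x b) * f (x a' - x b')) := by
      have hb₀ := hB b hb
      have hb₀' := hB b' hb'
      calc f (x a - x a') * f (x b - x b') ≤ 2 * r * (f (x b - c) + f (x b' - c)) :=
            mul_le_mul haa' hbb' (f.nonneg _) (by positivity)
        _ ≤ 1 / 5 * (f (x b - c) * f (x b' - c)) := by nlinarith
        _ ≤ 1 / 5 * (20 / 19 * f (x a - x b) * (20 / 19 * f (x a' - x b'))) := by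
            gcongr
            · exact dist_le a ha b hb
            · exact dist_le a' ha' b' hb'
        _ ≤ 1 / 4 * (f (x a - x b) * f (x a' - x b')) := by
            linarith [mul_nonneg (f.nonneg (x a - x b)) (f.nonneg (x a' - x b'))]
    rw [abv_wedge_eq_abv_mul (hA₁ a ha) (hA₁ a' ha'), abv_wedge_eq_abv_mul (hB₁ b hb) (hB₁ b' hb'),
      abv_wedge_eq_abv_mul (hA₁ a ha) (hB₁ b hb), abv_wedge_eq_abv_mul (hA₁ a' ha') (hB₁ b' hb')]
    have := mul_le_mul_of_nonneg_left h (mul_nonneg (mul_nonneg (f.nonneg (vec a 1))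
      (f.nonneg (vec a' 1))) (mul_nonneg (f.nonneg (vec b 1)) (f.nonneg (vec b' 1))))
    linarith

/-- A disc of minimal radius `r` containing a small but fixed proportion of `A` separates it from
the points at distance at least `20 r`; the disc of radius `400 r` contains at most half of `A`,
being covered by a bounded number of discs of smaller radius. -/
lemma exists_separated_of_complex (e : K →+* ℂ) (hf : ∀ x, f x = ‖e x‖) (B : Finset ι)
    (hA : ∀ i ∈ A, vec i 1 ≠ 0) (hB : ∀ i ∈ B, vec i 1 ≠ 0)
    (hinj : ∀ i ∈ A, ∀ j ∈ A, wedge (vec i) (vec j) = 0 → i = j)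
    (hcard : 2 * 1601 ^ 2 < A.card) :
    ∃ A' ⊆ A, ∃ B' ⊆ B, A.card ≤ 2 * 1601 ^ 2 * A'.card ∧ B.card ≤ 2 * B'.card ∧
      Separated f (1 / 4) vec A' B' := by
  let x : ι → K := fun i => affineCoord (vec i)
  obtain ⟨c, r, hr, hball, hsmall⟩ := exists_ball_card_le (fun i j => f (x i - x j)) A
    (by norm_num : 1 ≤ 2 * 1601 ^ 2)
    (fun i hi j hj hij => f.pos (sub_ne_zero.2 fun h => hij (affineCoord_injOn hA hinj hi hj h)))
    hcard
  have half : 2 * (A.filter fun i => f (x i - x c) ≤ 400 * r).card ≤ A.card := by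
    obtain ⟨E, hE, hcardE, hlt⟩ := exists_subset_norm_sub_lt (fun i => e (x i - x c))
      (A.filter fun i => f (x i - x c) ≤ 400 * r) hr 400
      fun i hi => by simpa only [hf, Nat.cast_ofNat] using (Finset.mem_filter.1 hi).2
    have := hsmall E (hE.trans (Finset.filter_subset _ _)) fun i hi j hj => by
      simpa only [hf, ← map_sub, sub_sub_sub_cancel_right] using hlt i hi j hj
    lia
  have hAnot := Finset.card_filter_add_card_filter_not (s := A) fun i => f (x i - x c) ≤ 400 * r
  have hBnot := Finset.card_filter_add_card_filter_not (s := B) fun i => f (x i - x c) ≤ 20 * r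
  by_cases h : B.card ≤ 2 * (B.filter fun i => f (x i - x c) ≤ 20 * r).card
  · refine ⟨A.filter fun i => ¬ f (x i - x c) ≤ 400 * r, Finset.filter_subset _ _,
      B.filter fun i => f (x i - x c) ≤ 20 * r, Finset.filter_subset _ _, by lia, h,
      (separated_of_affineCoord (fun i hi => hB i (Finset.mem_filter.1 hi).1)
        (fun i hi => hA i (Finset.mem_filter.1 hi).1) (by positivity : 0 < 20 * r)
        (fun i hi => (Finset.mem_filter.1 hi).2) fun i hi => ?_).symm⟩
    linarith [(Finset.mem_filter.1 hi).2]
  · refine ⟨A.filter fun i => f (x i - x c) ≤ r, Finset.filter_subset _ _,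
      B.filter fun i => ¬ f (x i - x c) ≤ 20 * r, Finset.filter_subset _ _, hball, by lia,
      separated_of_affineCoord (fun i hi => hA i (Finset.mem_filter.1 hi).1)
        (fun i hi => hB i (Finset.mem_filter.1 hi).1) hr
        (fun i hi => (Finset.mem_filter.1 hi).2) fun i hi => ?_⟩
    linarith [(Finset.mem_filter.1 hi).2]

end Separated

open NumberField.HeightOneSpectrum (adicAbv isNonarchimedean_adicAbv)

noncomputable section Places

variable {K : Type*} [Field K] [NumberField K] (T : Finset (HeightOneSpectrum (𝓞 K)))

/-- The places in `S`: all archimedean ones, and the finite ones in `T`. -/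
abbrev SPlace (K : Type*) [Field K] [NumberField K] (T : Finset (HeightOneSpectrum (𝓞 K))) :=
  InfinitePlace K ⊕ {v // v ∈ T}

variable {T}

/-- The absolute value attached to a place in `S`; at a real or complex place it extends the usual
one on `ℚ`, so that it enters the product formula with the exponent `SPlace.mult`. -/
def SPlace.abv : SPlace K T → AbsoluteValue K ℝ :=
  Sum.elim (fun w => w.1) (fun v => adicAbv K v.1)

/-- The exponent of the absolute value of a place in `S` in the product formula. -/
def SPlace.mult : SPlace K T → ℕ :=
  Sum.elim (fun w => w.mult) (fun _ => 1)

/-- The bound on cross ratios achieved by separation at a place in `S`. -/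
def SPlace.sepConst : SPlace K T → ℝ :=
  Sum.elim (fun _ => 1 / 4) (fun _ => 1)

lemma card_sPlace : Fintype.card (SPlace K T) = sCard K T := by
  rw [Fintype.card_sum, Fintype.card_coe, sCard, add_comm]

/-- The families `A` and `B` are separated at every place in `S`. -/
def SeparatedOn (T : Finset (HeightOneSpectrum (𝓞 K))) {ι : Type*} (vec : ι → Fin 2 → K)
    (A B : Finset ι) : Prop :=
  ∀ v : SPlace K T, Separated v.abv v.sepConst vec A B

variable {ι : Type*} {vec : ι → Fin 2 → K} {A B : Finset ι}

lemma SeparatedOn.mono (h : SeparatedOn T vec A B) {A' B' : Finset ι} (hA : A' ⊆ A)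
    (hB : B' ⊆ B) : SeparatedOn T vec A' B' :=
  fun v => (h v).mono hA hB

lemma exists_separated (v : SPlace K T) {m : ℕ} (hA : ∀ i ∈ A, vec i 1 ≠ 0)
    (hB : ∀ i ∈ B, vec i 1 ≠ 0) (hinj : ∀ i ∈ A, ∀ j ∈ A, wedge (vec i) (vec j) = 0 → i = j)
    (hcA : 10 ^ 7 * m ≤ A.card) (hcB : 10 ^ 7 * m ≤ B.card) :
    ∃ A' ⊆ A, ∃ B' ⊆ B, m ≤ A'.card ∧ m ≤ B'.card ∧ Separated v.abv v.sepConst vec A' B' := by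
  rcases Nat.eq_zero_or_pos m with rfl | hm
  · exact ⟨∅, A.empty_subset, ∅, B.empty_subset, zero_le, zero_le, 0, 1, one_pos,
      fun _ h => absurd h (Finset.notMem_empty _), fun _ h => absurd h (Finset.notMem_empty _)⟩
  rcases v with w | v
  · obtain ⟨A', hA', B', hB', hcA', hcB', hsep⟩ := exists_separated_of_complex w.embedding
      (fun x => (InfinitePlace.norm_embedding_eq w x).symm) B hA hB hinj (by lia)
    exact ⟨A', hA', B', hB', by lia, by lia, hsep⟩
  · obtain ⟨A', hA', B', hB', hcA', hcB', hsep⟩ := exists_separated_of_isNonarchimedean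
      (isNonarchimedean_adicAbv K v.1) B hA hinj (by lia)
    exact ⟨A', hA', B', hB', by lia, by lia, hsep⟩

lemma exists_separatedOn {m : ℕ} (hA : ∀ i ∈ A, vec i 1 ≠ 0) (hB : ∀ i ∈ B, vec i 1 ≠ 0)
    (hinj : ∀ i ∈ A, ∀ j ∈ A, wedge (vec i) (vec j) = 0 → i = j)
    (hcA : (10 ^ 7) ^ sCard K T * m ≤ A.card) (hcB : (10 ^ 7) ^ sCard K T * m ≤ B.card) :
    ∃ A' ⊆ A, ∃ B' ⊆ B, m ≤ A'.card ∧ m ≤ B'.card ∧ SeparatedOn T vec A' B' := by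
  suffices H : ∀ V : Finset (SPlace K T), (10 ^ 7) ^ V.card * m ≤ A.card →
      (10 ^ 7) ^ V.card * m ≤ B.card → ∃ A' ⊆ A, ∃ B' ⊆ B, m ≤ A'.card ∧ m ≤ B'.card ∧
        ∀ v ∈ V, Separated v.abv v.sepConst vec A' B' by
    rw [← card_sPlace, ← Finset.card_univ] at hcA hcB
    obtain ⟨A', hA', B', hB', hm, hm', h⟩ := H _ hcA hcB
    exact ⟨A', hA', B', hB', hm, hm', fun v => h v (Finset.mem_univ v)⟩
  clear hcA hcB
  intro V
  induction V using Finset.induction_on generalizing A B with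
  | empty =>
    rw [Finset.card_empty, pow_zero, one_mul]
    exact fun hcA hcB => ⟨A, subset_rfl, B, subset_rfl, hcA, hcB,
      fun v hv => absurd hv (Finset.notMem_empty v)⟩
  | insert v V hv ih =>
    rw [Finset.card_insert_of_notMem hv, pow_succ', mul_assoc]
    intro hcA hcB
    obtain ⟨A₁, hA₁, B₁, hB₁, hcA₁, hcB₁, hsep₁⟩ := exists_separated v hA hB hinj hcA hcB
    obtain ⟨A₂, hA₂, B₂, hB₂, hcA₂, hcB₂, hsep₂⟩ := ih (fun i hi => hA i (hA₁ hi))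
      (fun i hi => hB i (hB₁ hi)) (fun i hi j hj => hinj i (hA₁ hi) j (hA₁ hj)) hcA₁ hcB₁
    exact ⟨A₂, hA₂.trans hA₁, B₂, hB₂.trans hB₁, hcA₂, hcB₂,
      (Finset.forall_mem_insert ..).2 ⟨hsep₁.mono hA₂ hB₂, hsep₂⟩⟩

end Places

noncomputable section LogDist

section Local

variable {K : Type*} [Field K] {f : AbsoluteValue K ℝ} {u w : Fin 2 → K} {P Q R : P1 K}

/-- The maximum norm on `K²`. -/
def maxNorm (f : AbsoluteValue K ℝ) (u : Fin 2 → K) : ℝ :=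
  max (f (u 0)) (f (u 1))

lemma maxNorm_eq_discNorm : maxNorm f u = discNorm f 0 1 u := by
  simp [maxNorm, discNorm]

lemma maxNorm_pos (hu : u ≠ 0) : 0 < maxNorm f u :=
  maxNorm_eq_discNorm (f := f) ▸ discNorm_pos one_pos hu

lemma maxNorm_smul (c : K) : maxNorm f (c • u) = f c * maxNorm f u := by
  rw [maxNorm_eq_discNorm, discNorm_smul, maxNorm_eq_discNorm]

/-- The logarithmic `f`-adic distance `log (‖u‖ ‖w‖ / |u ∧ w|)` between the points with homogeneous
coordinates `u` and `w`. -/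
def vecLogDist (f : AbsoluteValue K ℝ) (u w : Fin 2 → K) : ℝ :=
  Real.log (maxNorm f u) + Real.log (maxNorm f w) - Real.log (f (wedge u w))

/-- The logarithmic `f`-adic distance between two points of the projective line: the larger it is,
the closer the points are. Its value at a pair of equal points is meaningless. -/
def pointLogDist (f : AbsoluteValue K ℝ) (P Q : P1 K) : ℝ :=
  vecLogDist f P.rep Q.rep

lemma vecLogDist_comm (u w : Fin 2 → K) : vecLogDist f u w = vecLogDist f w u := by
  rw [vecLogDist, vecLogDist, wedge_swap, f.map_neg, add_comm (Real.log _)]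

lemma vecLogDist_smul_left {c : K} (hc : c ≠ 0) (h : wedge u w ≠ 0) :
    vecLogDist f (c • u) w = vecLogDist f u w := by
  have hu : u ≠ 0 := fun hu => h (by simp [wedge, hu])
  rw [vecLogDist, wedge_smul_left, maxNorm_smul, map_mul,
    Real.log_mul (f.pos hc).ne' (maxNorm_pos hu).ne',
    Real.log_mul (f.pos hc).ne' (f.pos h).ne', vecLogDist]
  ring

lemma eq_smul_of_wedge_eq_zero (hw : w ≠ 0) (h : wedge u w = 0) : ∃ c : K, u = c • w := by
  rw [wedge] at h
  by_cases h₀ : w 0 = 0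
  · have h₁ : w 1 ≠ 0 := fun h₁ => hw (funext (Fin.forall_fin_two.2 ⟨h₀, h₁⟩))
    refine ⟨u 1 / w 1, funext (Fin.forall_fin_two.2 ⟨?_, ?_⟩)⟩
    · simpa [h₀, h₁] using h
    · simp [h₁]
  · refine ⟨u 0 / w 0, funext (Fin.forall_fin_two.2 ⟨?_, ?_⟩)⟩ <;>
      simp only [Pi.smul_apply, smul_eq_mul] <;> field_simp
    linear_combination -h

lemma wedge_rep_ne_zero (h : P ≠ Q) : wedge P.rep Q.rep ≠ 0 := by
  intro h₀
  obtain ⟨c, hc⟩ := eq_smul_of_wedge_eq_zero Q.rep_nonzero h₀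
  rw [← P.mk_rep, ← Q.mk_rep] at h
  exact h ((Projectivization.mk_eq_mk_iff' K _ _ P.rep_nonzero Q.rep_nonzero).2 ⟨c, hc.symm⟩)

lemma eq_of_rep_one_eq_zero (hP : P.rep 1 = 0) (hQ : Q.rep 1 = 0) : P = Q :=
  by_contra fun h => wedge_rep_ne_zero h (by rw [wedge, hP, hQ, mul_zero, zero_mul, sub_zero])

lemma le_card_filter_rep_one_ne_zero {A : Finset (P1 K)} {n : ℕ}
    (h : n + 1 ≤ A.card) :
    n ≤ (A.filter fun P => P.rep 1 ≠ 0).card := by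
  have hsum := Finset.card_filter_add_card_filter_not (s := A) fun P : P1 K => P.rep 1 ≠ 0
  have hinf : (A.filter fun P : P1 K => ¬P.rep 1 ≠ 0).card ≤ 1 :=
    Finset.card_le_one.2 fun P hP Q hQ => eq_of_rep_one_eq_zero
      (not_not.1 (Finset.mem_filter.1 hP).2) (not_not.1 (Finset.mem_filter.1 hQ).2)
  lia

lemma exists_eq_smul_rep_mk (hu : u ≠ 0) :
    ∃ c : K, c ≠ 0 ∧ u = c • (Projectivization.mk K u hu).rep := by
  obtain ⟨a, ha⟩ := Projectivization.exists_smul_eq_mk_rep K u hu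
  exact ⟨↑a⁻¹, Units.ne_zero _, by rw [← ha, Units.smul_def, smul_smul, Units.inv_mul, one_smul]⟩

lemma pointLogDist_mk (hu : u ≠ 0) (hw : w ≠ 0) (h : wedge u w ≠ 0) :
    pointLogDist f (Projectivization.mk K u hu) (Projectivization.mk K w hw) =
      vecLogDist f u w := by
  obtain ⟨a, ha, hau⟩ := exists_eq_smul_rep_mk hu
  obtain ⟨b, hb, hbw⟩ := exists_eq_smul_rep_mk hw
  rw [pointLogDist]
  generalize (Projectivization.mk K u hu).rep = p at *
  generalize (Projectivization.mk K w hw).rep = q at *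
  subst hau hbw
  have hpq : wedge p (b • q) ≠ 0 := right_ne_zero_of_mul (wedge_smul_left a p _ ▸ h)
  have hqp : wedge q p ≠ 0 := by
    rw [wedge_swap, neg_ne_zero]
    exact right_ne_zero_of_mul (wedge_smul_right b p q ▸ hpq)
  rw [vecLogDist_smul_left ha hpq, vecLogDist_comm p (b • q), vecLogDist_smul_left hb hqp,
    vecLogDist_comm]

lemma pointLogDist_comm (P Q : P1 K) : pointLogDist f P Q = pointLogDist f Q P :=
  vecLogDist_comm _ _

lemma pointLogDist_nonneg (hf : IsNonarchimedean f) (h : P ≠ Q) : 0 ≤ pointLogDist f P Q := by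
  have hle := mul_abv_wedge_le_of_isNonarchimedean (c := 0) (u := P.rep) (w := Q.rep) hf zero_le_one
  rw [one_mul, ← maxNorm_eq_discNorm, ← maxNorm_eq_discNorm] at hle
  rw [pointLogDist, vecLogDist, sub_nonneg, ← Real.log_mul (maxNorm_pos P.rep_nonzero).ne'
    (maxNorm_pos Q.rep_nonzero).ne']
  exact Real.log_le_log (f.pos (wedge_rep_ne_zero h)) hle

lemma min_pointLogDist_le (hf : IsNonarchimedean f) (hPQ : P ≠ Q) (hQR : Q ≠ R) (hPR : P ≠ R) :
    min (pointLogDist f P Q) (pointLogDist f Q R) ≤ pointLogDist f P R := by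
  have hle := abv_wedge_mul_discNorm_le (c := 0) (u := P.rep) (w := R.rep) hf zero_le_one Q.rep
  simp only [← maxNorm_eq_discNorm] at hle
  have hP := maxNorm_pos (f := f) P.rep_nonzero
  have hQ := maxNorm_pos (f := f) Q.rep_nonzero
  have hR := maxNorm_pos (f := f) R.rep_nonzero
  have wPQ := f.pos (wedge_rep_ne_zero hPQ)
  have wQR := f.pos (wedge_rep_ne_zero hQR)
  have wPR := f.pos (wedge_rep_ne_zero hPR)
  have hlog := Real.log_le_log (mul_pos wPR hQ) hle
  simp only [pointLogDist, vecLogDist, min_le_iff]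
  rw [Real.log_mul wPR.ne' hQ.ne'] at hlog
  rcases max_choice (f (wedge P.rep Q.rep) * maxNorm f R.rep)
    (f (wedge Q.rep R.rep) * maxNorm f P.rep) with h | h <;> rw [h] at hlog
  · rw [Real.log_mul wPQ.ne' hR.ne'] at hlog
    left; linarith
  · rw [Real.log_mul wQR.ne' hP.ne'] at hlog
    right; linarith

/-- The logarithm of the `f`-absolute value of the cross ratio
`(a ∧ a') (b ∧ b') / ((a ∧ b) (a' ∧ b'))`. -/
def logCrossRatio (f : AbsoluteValue K ℝ) (a a' b b' : P1 K) : ℝ :=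
  Real.log (f (wedge a.rep a'.rep)) + Real.log (f (wedge b.rep b'.rep)) -
    Real.log (f (wedge a.rep b.rep)) - Real.log (f (wedge a'.rep b'.rep))

lemma logCrossRatio_le_log {a a' b b' : P1 K} {θ : ℝ} (haa' : a ≠ a') (hbb' : b ≠ b')
    (hab : a ≠ b) (hab' : a' ≠ b') (hθ : 0 < θ)
    (h : f (wedge a.rep a'.rep) * f (wedge b.rep b'.rep) ≤
      θ * (f (wedge a.rep b.rep) * f (wedge a'.rep b'.rep))) :
    logCrossRatio f a a' b b' ≤ Real.log θ := by
  have waa' := f.pos (wedge_rep_ne_zero haa')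
  have wbb' := f.pos (wedge_rep_ne_zero hbb')
  have wab := f.pos (wedge_rep_ne_zero hab)
  have wab' := f.pos (wedge_rep_ne_zero hab')
  have hlog := Real.log_le_log (mul_pos waa' wbb') h
  rw [Real.log_mul waa'.ne' wbb'.ne', Real.log_mul hθ.ne' (mul_pos wab wab').ne',
    Real.log_mul wab.ne' wab'.ne'] at hlog
  rw [logCrossRatio]
  linarith

end Local

section Global

variable {K : Type*} [Field K] [NumberField K] {T : Finset (HeightOneSpectrum (𝓞 K))}
  {P Q : P1 K}

/-- The total logarithmic distance between two points over all places outside `S`. -/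
def logDistOff (T : Finset (HeightOneSpectrum (𝓞 K))) (P Q : P1 K) : ℝ :=
  ∑ᶠ v : {v // v ∉ T}, pointLogDist (adicAbv K v.1) P Q

/-- The logarithm of the part of `|x|` outside `S`. -/
def logAbvOff (T : Finset (HeightOneSpectrum (𝓞 K))) (x : K) : ℝ :=
  ∑ᶠ v : {v // v ∉ T}, Real.log (adicAbv K v.1 x)

/-- The logarithmic height of the vector `u` outside `S`. -/
def logHeightOff (T : Finset (HeightOneSpectrum (𝓞 K))) (u : Fin 2 → K) : ℝ :=
  ∑ᶠ v : {v // v ∉ T}, Real.log (maxNorm (adicAbv K v.1) u)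

lemma hasFiniteMulSupport_adicAbv {x : K} (hx : x ≠ 0) :
    (fun v : HeightOneSpectrum (𝓞 K) => adicAbv K v x).HasFiniteMulSupport := by
  have h := (FinitePlace.hasFiniteMulSupport hx).fun_comp_of_injective
    (FinitePlace.equivHeightOneSpectrum (K := K)).symm.injective
  simpa only [FinitePlace.equivHeightOneSpectrum_symm_apply, FinitePlace.norm_embedding] using h

lemma hasFiniteSupport_log_adicAbv (x : K) :
    (fun v : HeightOneSpectrum (𝓞 K) => Real.log (adicAbv K v x)).HasFiniteSupport := by
  rcases eq_or_ne x 0 with rfl | hx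
  · simp [Function.HasFiniteSupport]
  · refine (hasFiniteMulSupport_adicAbv hx).subset fun v hv h => hv ?_
    simp only [h, Real.log_one]

lemma hasFiniteSupport_log_maxNorm (u : Fin 2 → K) :
    (fun v : HeightOneSpectrum (𝓞 K) => Real.log (maxNorm (adicAbv K v) u)).HasFiniteSupport := by
  refine ((hasFiniteSupport_log_adicAbv (u 0)).union (hasFiniteSupport_log_adicAbv (u 1))).subset
    fun v hv => ?_
  rcases max_choice (adicAbv K v (u 0)) (adicAbv K v (u 1)) with h | h <;>
    rw [Function.mem_support, maxNorm, h] at hv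
  exacts [Or.inl hv, Or.inr hv]

lemma hasFiniteSupport_pointLogDist (P Q : P1 K) :
    (fun v : {v // v ∉ T} => pointLogDist (adicAbv K v.1) P Q).HasFiniteSupport :=
  ((hasFiniteSupport_log_maxNorm P.rep).add (hasFiniteSupport_log_maxNorm Q.rep)).sub
    (hasFiniteSupport_log_adicAbv (wedge P.rep Q.rep)) |>.comp_of_injective
      Subtype.val_injective

lemma logDistOff_eq (P Q : P1 K) :
    logDistOff T P Q = logHeightOff T P.rep + logHeightOff T Q.rep -
      logAbvOff T (wedge P.rep Q.rep) := by
  have hval : Function.Injective (Subtype.val : {v // v ∉ T} → _) := Subtype.val_injective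
  have hP := (hasFiniteSupport_log_maxNorm P.rep).fun_comp_of_injective hval
  have hQ := (hasFiniteSupport_log_maxNorm Q.rep).fun_comp_of_injective hval
  have hw := (hasFiniteSupport_log_adicAbv (wedge P.rep Q.rep)).fun_comp_of_injective hval
  rw [logHeightOff, logHeightOff, logAbvOff, ← finsum_add_distrib hP hQ,
    ← finsum_sub_distrib (hP.fun_add hQ) hw]
  rfl

lemma sum_logDistOff_le {ι : Type*} (X : Finset ι) (p q : ι → P1 K)
    (h : ∀ v ∉ T, ∑ x ∈ X, pointLogDist (adicAbv K v) (p x) (q x) ≤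
      pointLogDist (adicAbv K v) P Q) :
    ∑ x ∈ X, logDistOff T (p x) (q x) ≤ logDistOff T P Q := by
  simp only [logDistOff]
  rw [← finsum_sum_comm _ _ fun x _ => hasFiniteSupport_pointLogDist (p x) (q x)]
  exact finsum_le_finsum' (.sum (fun x => hasFiniteSupport_pointLogDist (p x) (q x)) X)
    (hasFiniteSupport_pointLogDist P Q) fun v => h v.1 v.2

lemma logDistOff_comm (P Q : P1 K) : logDistOff T P Q = logDistOff T Q P :=
  finsum_congr fun _ => pointLogDist_comm _ _

lemma logDistOff_nonneg (h : P ≠ Q) : 0 ≤ logDistOff T P Q :=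
  finsum_nonneg fun v => pointLogDist_nonneg (isNonarchimedean_adicAbv K v.1) h

lemma sum_mult_mul_log_abv {x : K} (hx : x ≠ 0) :
    ∑ v : SPlace K T, (v.mult : ℝ) * Real.log (v.abv x) = -logAbvOff T x := by
  have hpos : ∀ v : HeightOneSpectrum (𝓞 K), 0 < adicAbv K v x := fun v => (adicAbv K v).pos hx
  have hfin : ∑ᶠ v : HeightOneSpectrum (𝓞 K), Real.log (adicAbv K v x) =
      ∑ v ∈ T, Real.log (adicAbv K v x) + logAbvOff T x := by
    rw [logAbvOff, finsum_subtype_eq_finsum_cond (· ∉ T) (f := fun v : HeightOneSpectrum (𝓞 K) =>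
      Real.log (adicAbv K v x)), ← finsum_mem_coe_finset, ← finsum_mem_univ,
      ← Set.union_compl_self (T : Set (HeightOneSpectrum (𝓞 K)))]
    exact finsum_mem_union' disjoint_compl_right
      ((hasFiniteSupport_log_adicAbv x).subset Set.inter_subset_right)
      ((hasFiniteSupport_log_adicAbv x).subset Set.inter_subset_right)
  have hinf : ∑ w : InfinitePlace K, (w.mult : ℝ) * Real.log (w x) +
      ∑ᶠ v : HeightOneSpectrum (𝓞 K), Real.log (adicAbv K v x) = 0 := by
    have h := prod_abs_eq_one hx
    rw [← finprod_comp_equiv FinitePlace.equivHeightOneSpectrum.symm] at h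
    simp only [FinitePlace.equivHeightOneSpectrum_symm_apply, FinitePlace.norm_embedding] at h
    have hlog := congrArg Real.log h
    have hw : ∀ w ∈ Finset.univ, (fun w : InfinitePlace K => w x ^ w.mult) w ≠ 0 :=
      fun w _ => pow_ne_zero _ (InfinitePlace.pos_iff.2 hx).ne'
    rw [Real.log_one, Real.log_mul (Finset.prod_ne_zero_iff.2 hw)
      (finprod_induction (0 < ·) one_pos (fun _ _ => mul_pos) hpos).ne',
      Real.log_finprod hpos, Real.log_prod hw] at hlog
    simpa only [Real.log_pow] using hlog
  rw [hfin, ← add_assoc, ← Finset.sum_coe_sort T] at hinf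
  rw [eq_neg_iff_add_eq_zero, ← hinf, Fintype.sum_sum_type]
  simp only [SPlace.mult, SPlace.abv, Sum.elim_inl, Sum.elim_inr, Nat.cast_one, one_mul]
  rfl

lemma sum_mult_mul_logCrossRatio {a a' b b' : P1 K} (haa' : a ≠ a') (hbb' : b ≠ b')
    (hab : a ≠ b) (hab' : a' ≠ b') :
    ∑ v : SPlace K T, v.mult * logCrossRatio v.abv a a' b b' =
      logDistOff T a a' + logDistOff T b b' - logDistOff T a b - logDistOff T a' b' := by
  simp only [logCrossRatio, mul_sub, mul_add, Finset.sum_sub_distrib, Finset.sum_add_distrib]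
  rw [sum_mult_mul_log_abv (wedge_rep_ne_zero haa'), sum_mult_mul_log_abv (wedge_rep_ne_zero hbb'),
    sum_mult_mul_log_abv (wedge_rep_ne_zero hab), sum_mult_mul_log_abv (wedge_rep_ne_zero hab')]
  simp only [logDistOff_eq]
  ring

end Global

end LogDist

noncomputable section SeparatedPair

section Averaging

lemma exists_le_div_of_sum_le {ι : Type*} {A : Finset ι} {g : ι → ℝ} {H : ℝ} {n : ℕ}
    (hg : ∀ a ∈ A, 0 ≤ g a) (hn : 0 < n) (hA : n ≤ A.card) (h : ∑ a ∈ A, g a ≤ H) :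
    ∃ a ∈ A, g a ≤ H / n := by
  refine Finset.exists_le_of_sum_le (Finset.card_pos.1 (hn.trans_le hA)) (h.trans ?_)
  have hn' : (0 : ℝ) < n := Nat.cast_pos.2 hn
  have hH : 0 ≤ H / n := div_nonneg ((Finset.sum_nonneg hg).trans h) hn'.le
  calc H = n * (H / n) := by field_simp
    _ ≤ A.card * (H / n) := mul_le_mul_of_nonneg_right (Nat.cast_le.2 hA) hH
    _ = ∑ _ ∈ A, H / n := by rw [Finset.sum_const, nsmul_eq_mul]

lemma exists_ne_add_le_of_sum_le {ι : Type*} {A : Finset ι} {g g' : ι → ℝ} {H : ℝ} {n : ℕ}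
    (hg : ∀ a ∈ A, 0 ≤ g a) (hg' : ∀ a ∈ A, 0 ≤ g' a) (hn : 0 < n) (hA : n < A.card)
    (h : ∑ a ∈ A, g a ≤ H) (h' : ∑ a ∈ A, g' a ≤ H) :
    ∃ a ∈ A, ∃ a' ∈ A, a ≠ a' ∧ g a + g' a' ≤ 2 * H / n := by
  obtain ⟨a, ha, hga⟩ := exists_le_div_of_sum_le hg hn hA.le h
  obtain ⟨a', ha', hga'⟩ := exists_le_div_of_sum_le (A := A.erase a)
    (fun x hx => hg' x (Finset.mem_of_mem_erase hx)) hn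
    (by rw [Finset.card_erase_of_mem ha]; lia)
    ((Finset.sum_le_sum_of_subset_of_nonneg (A.erase_subset a) fun x hx _ => hg' x hx).trans h')
  refine ⟨a, ha, a', Finset.mem_of_mem_erase ha', (Finset.ne_of_mem_erase ha').symm, ?_⟩
  rw [two_mul, add_div]
  exact add_le_add hga hga'

lemma exists_forall_not_of_card_lt {ι σ : Type*} [Fintype σ] {B : Finset ι} {bad : σ → ι → Prop}
    (h : ∀ v, ∀ b ∈ B, ∀ b' ∈ B, bad v b → bad v b' → b = b') (hB : Fintype.card σ < B.card) :
    ∃ b ∈ B, ∀ v, ¬bad v b := by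
  by_contra! hbad
  obtain ⟨b₀, hb₀⟩ := Finset.card_pos.1 (hB.trans_le' zero_le)
  have : Nonempty σ := ⟨(hbad b₀ hb₀).choose⟩
  choose! g hg using hbad
  refine hB.not_ge (Finset.card_le_card_of_injOn g (fun _ _ => Finset.mem_univ _) ?_)
  exact fun b hb b' hb' e => h (g b) b hb b' hb' (hg b hb) (e ▸ hg b' hb')

end Averaging

section Disc

variable {K : Type*} [Field K] {f : AbsoluteValue K ℝ} {c : K} {r M : ℝ}

lemma abv_wedge_mul_discNorm_le_add (hr : 0 ≤ r) (u w x : Fin 2 → K) :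
    f (wedge u w) * discNorm f c r x ≤
      f (wedge x w) * discNorm f c r u + f (wedge x u) * discNorm f c r w := by
  have h : wedge u w • x = wedge x w • u + (-wedge x u) • w := by
    refine funext (Fin.forall_fin_two.2 ⟨?_, ?_⟩) <;>
      simp only [wedge, Pi.smul_apply, Pi.add_apply, smul_eq_mul] <;> ring
  simpa only [← h, discNorm_smul, f.map_neg] using
    discNorm_add_le (f := f) (c := c) (u := wedge x w • u) (w := (-wedge x u) • w) hr

/-- The points with homogeneous coordinates `u` and `w` are far apart, up to the factor `M`, as seen
from the disc of centre `c` and radius `r`. -/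
def FarApart (f : AbsoluteValue K ℝ) (c : K) (r M : ℝ) (u w : Fin 2 → K) : Prop :=
  discNorm f c r u * discNorm f c r w ≤ M * (r * f (wedge u w))

lemma FarApart.of_quadruple {a a' b b' : Fin 2 → K} {E : ℝ} (hr : 0 < r) (hE : 0 ≤ E)
    (ha : a ≠ 0) (ha' : a' ≠ 0) (hab : FarApart f c r 2 a b) (hab' : FarApart f c r 2 a' b')
    (h : f (wedge a b) * f (wedge a' b') ≤ E * (f (wedge a a') * f (wedge b b'))) :
    FarApart f c r (8 * E) b b' := by
  have ha := discNorm_pos (f := f) (c := c) hr ha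
  have ha' := discNorm_pos (f := f) (c := c) hr ha'
  set N := discNorm f c r
  have haa' := mul_abv_wedge_le (f := f) (c := c) (u := a) (w := a') hr.le
  have hN : ∀ u, 0 ≤ N u := fun _ => discNorm_nonneg
  have : 0 ≤ f (wedge b b') := f.nonneg _
  refine le_of_mul_le_mul_left ?_ (mul_pos ha ha')
  calc N a * N a' * (N b * N b') = N a * N b * (N a' * N b') := by ring
    _ ≤ 2 * (r * f (wedge a b)) * (2 * (r * f (wedge a' b'))) :=
      mul_le_mul hab hab' (mul_nonneg (hN _) (hN _))
        (mul_nonneg zero_le_two (mul_nonneg hr.le (f.nonneg _)))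
    _ = 4 * (r * r) * (f (wedge a b) * f (wedge a' b')) := by ring
    _ ≤ 4 * (r * r) * (E * (f (wedge a a') * f (wedge b b'))) :=
      mul_le_mul_of_nonneg_left h (by positivity)
    _ = r * f (wedge a a') * (4 * E * (r * f (wedge b b'))) := by ring
    _ ≤ 2 * N a * N a' * (4 * E * (r * f (wedge b b'))) :=
      mul_le_mul_of_nonneg_right haa' (by positivity)
    _ = N a * N a' * (8 * E * (r * f (wedge b b'))) := by ring

lemma FarApart.left_or_right {b b' x : Fin 2 → K} (hr : 0 < r) (hM : 0 ≤ M) (hb : b ≠ 0)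
    (hb' : b' ≠ 0) (hx : x ≠ 0) (h : FarApart f c r M b b') :
    FarApart f c r (2 * M) x b ∨ FarApart f c r (2 * M) x b' := by
  by_contra! hcon
  simp only [FarApart, not_le] at hcon h
  have hb := discNorm_pos (f := f) (c := c) hr hb
  have hb' := discNorm_pos (f := f) (c := c) hr hb'
  have hx := discNorm_pos (f := f) (c := c) hr hx
  have hplücker := abv_wedge_mul_discNorm_le_add (f := f) (c := c) hr.le b b' x
  set N := discNorm f c r
  have h₁ := mul_lt_mul_of_pos_right hcon.1 hb'
  have h₂ := mul_lt_mul_of_pos_right hcon.2 hb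
  have h₃ := mul_le_mul_of_nonneg_left h hx.le
  have h₄ := mul_le_mul_of_nonneg_left hplücker (mul_nonneg (mul_nonneg zero_le_two hM) hr.le)
  linarith

lemma abv_wedge_mul_le_of_farApart {p q b b' : Fin 2 → K} (hr : 0 < r) (hpb : FarApart f c r M p b)
    (hqb : FarApart f c r M q b') :
    f (wedge p q) * f (wedge b b') ≤ (2 * M) ^ 2 * (f (wedge p b) * f (wedge q b')) := by
  have hpq := mul_abv_wedge_le (f := f) (c := c) (u := p) (w := q) hr.le
  have hbb' := mul_abv_wedge_le (f := f) (c := c) (u := b) (w := b') hr.le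
  rw [FarApart] at hpb hqb
  set N := discNorm f c r
  have hN : ∀ u, 0 ≤ N u := fun _ => discNorm_nonneg
  refine le_of_mul_le_mul_left ?_ (mul_pos hr hr)
  calc r * r * (f (wedge p q) * f (wedge b b')) = r * f (wedge p q) * (r * f (wedge b b')) := by
        ring
    _ ≤ 2 * N p * N q * (2 * N b * N b') :=
      mul_le_mul hpq hbb' (mul_nonneg hr.le (f.nonneg _))
        (mul_nonneg (mul_nonneg zero_le_two (hN _)) (hN _))
    _ = 4 * (N p * N b * (N q * N b')) := by ring
    _ ≤ 4 * (M * (r * f (wedge p b)) * (M * (r * f (wedge q b')))) := by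
      have := hpb.trans' (mul_nonneg (hN p) (hN b))
      have := mul_nonneg (hN q) (hN b')
      gcongr
    _ = r * r * ((2 * M) ^ 2 * (f (wedge p b) * f (wedge q b'))) := by ring

end Disc

section Unbalanced

variable {X : Type*} {D : X → X → ℝ} {H : ℝ} {A B : Finset X}

/-- The configuration which the product formula excludes when `D` is the distance outside `S` and
`A`, `B` are large: the points of `A` are in total at distance at most `H` from every point of `B`,
and either `H ≤ 0`, or there are two points whose distance exceeds by at least `H / 4` the sum of
their distances from any two points of `B`. -/
def Unbalanced (D : X → X → ℝ) (H : ℝ) (A B : Finset X) : Prop :=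
  (∀ b ∈ B, ∑ a ∈ A, D a b ≤ H) ∧
    (H ≤ 0 ∨ ∃ p q, p ≠ q ∧ p ∉ B ∧ q ∉ B ∧ ∀ b ∈ B, ∀ b' ∈ B, b ≠ b' →
      H / 4 ≤ D p q - D p b - D q b')

lemma Unbalanced.mono (h : Unbalanced D H A B) (hD : ∀ ⦃x y⦄, x ≠ y → 0 ≤ D x y)
    (hAB : Disjoint A B) {A' B' : Finset X} (hA : A' ⊆ A) (hB : B' ⊆ B) :
    Unbalanced D H A' B' := by
  refine ⟨fun b hb => (Finset.sum_le_sum_of_subset_of_nonneg hA fun a ha _ => ?_).trans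
    (h.1 b (hB hb)), h.2.imp_right ?_⟩
  · exact hD (Finset.disjoint_iff_ne.1 hAB a ha b (hB hb))
  · rintro ⟨p, q, hpq, hp, hq, hle⟩
    exact ⟨p, q, hpq, fun hp' => hp (hB hp'), fun hq' => hq (hB hq'),
      fun b hb b' hb' => hle b (hB hb) b' (hB hb')⟩

end Unbalanced

section Global

variable {K : Type*} [Field K] [NumberField K] {T : Finset (HeightOneSpectrum (𝓞 K))}
  {A B : Finset (P1 K)}

namespace SPlace

lemma one_le_mult (v : SPlace K T) : 1 ≤ v.mult := by
  rcases v with w | _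
  exacts [InfinitePlace.mult_pos, le_rfl]

lemma mult_le_two (v : SPlace K T) : v.mult ≤ 2 := by
  rcases v with w | _
  · rw [mult, Sum.elim_inl, InfinitePlace.mult]
    split_ifs <;> norm_num
  · exact one_le_two

lemma sepConst_pos (v : SPlace K T) : 0 < v.sepConst := by
  rcases v with _ | _ <;> norm_num [sepConst]

lemma log_sepConst_nonpos (v : SPlace K T) : Real.log v.sepConst ≤ 0 := by
  refine Real.log_nonpos v.sepConst_pos.le ?_
  rcases v with _ | _ <;> norm_num [sepConst]

lemma log_sepConst_inl_le (w : InfinitePlace K) :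
    Real.log (sepConst (Sum.inl w : SPlace K T)) ≤ -1 := by
  rw [sepConst, Sum.elim_inl, Real.log_le_iff_le_exp (by norm_num), Real.exp_neg, one_div]
  exact inv_anti₀ (Real.exp_pos _) (Real.exp_one_lt_three.le.trans (by norm_num))

end SPlace

section Quadruple

variable {a a' b b' : P1 K}

lemma SeparatedOn.logCrossRatio_le (hsep : SeparatedOn T Projectivization.rep A B)
    (hAB : Disjoint A B) (ha : a ∈ A) (ha' : a' ∈ A) (hb : b ∈ B) (hb' : b' ∈ B) (haa' : a ≠ a')
    (hbb' : b ≠ b') (v : SPlace K T) :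
    logCrossRatio v.abv a a' b b' ≤ Real.log v.sepConst := by
  obtain ⟨-, -, -, -, hcross⟩ := hsep v
  exact logCrossRatio_le_log haa' hbb' (Finset.disjoint_iff_ne.1 hAB a ha b hb)
    (Finset.disjoint_iff_ne.1 hAB a' ha' b' hb') v.sepConst_pos (hcross a ha a' ha' b hb b' hb')

lemma SeparatedOn.neg_add_le_logCrossRatio (hsep : SeparatedOn T Projectivization.rep A B)
    (hAB : Disjoint A B) (ha : a ∈ A) (ha' : a' ∈ A) (hb : b ∈ B) (hb' : b' ∈ B) (haa' : a ≠ a')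
    (hbb' : b ≠ b') (v : SPlace K T) :
    -(logDistOff T a b + logDistOff T a' b') ≤ logCrossRatio v.abv a a' b b' := by
  have hnonpos : ∀ v : SPlace K T, logCrossRatio v.abv a a' b b' ≤ 0 := fun v =>
    (hsep.logCrossRatio_le hAB ha ha' hb hb' haa' hbb' v).trans v.log_sepConst_nonpos
  have hmult : ∀ v : SPlace K T, v.mult * logCrossRatio v.abv a a' b b' ≤ 0 := fun v =>
    mul_nonpos_of_nonneg_of_nonpos (Nat.cast_nonneg _) (hnonpos v)
  have hsum := sum_mult_mul_logCrossRatio (T := T) haa' hbb'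
    (Finset.disjoint_iff_ne.1 hAB a ha b hb) (Finset.disjoint_iff_ne.1 hAB a' ha' b' hb')
  have haa' := logDistOff_nonneg (T := T) haa'
  have hbb' := logDistOff_nonneg (T := T) hbb'
  calc -(logDistOff T a b + logDistOff T a' b')
      ≤ ∑ v : SPlace K T, v.mult * logCrossRatio v.abv a a' b b' := by linarith
    _ ≤ v.mult * logCrossRatio v.abv a a' b b' := by
      rw [← Finset.add_sum_erase _ _ (Finset.mem_univ v)]
      exact add_le_of_nonpos_right (Finset.sum_nonpos fun v _ => hmult v)
    _ ≤ 1 * logCrossRatio v.abv a a' b b' :=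
      mul_le_mul_of_nonpos_right (Nat.one_le_cast.2 v.one_le_mult) (hnonpos v)
    _ = logCrossRatio v.abv a a' b b' := one_mul _

/-- At an archimedean place the cross ratio is at most `1 / 4`, and `log (1 / 4) ≤ -1`. -/
lemma SeparatedOn.one_le_add (hsep : SeparatedOn T Projectivization.rep A B)
    (hAB : Disjoint A B) (ha : a ∈ A) (ha' : a' ∈ A) (hb : b ∈ B) (hb' : b' ∈ B) (haa' : a ≠ a')
    (hbb' : b ≠ b') : 1 ≤ logDistOff T a b + logDistOff T a' b' := by
  obtain ⟨w⟩ : Nonempty (InfinitePlace K) := inferInstance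
  have hlower := hsep.neg_add_le_logCrossRatio hAB ha ha' hb hb' haa' hbb' (Sum.inl w)
  have hupper := hsep.logCrossRatio_le hAB ha ha' hb hb' haa' hbb' (Sum.inl w)
  linarith [SPlace.log_sepConst_inl_le (T := T) w]

end Quadruple

/-- At every place in `S`, any two points of `B` are far apart up to the factor `M`. -/
def SpreadOn (T : Finset (HeightOneSpectrum (𝓞 K))) (M : ℝ) (B : Finset (P1 K)) : Prop :=
  ∀ v : SPlace K T, ∃ c r, 0 < r ∧
    ∀ b ∈ B, ∀ b' ∈ B, b ≠ b' → FarApart v.abv c r M b.rep b'.rep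

lemma SeparatedOn.spreadOn (hsep : SeparatedOn T Projectivization.rep A B) (hAB : Disjoint A B)
    {η : ℝ} (hη : ∀ b ∈ B, ∀ b' ∈ B, ∃ a ∈ A, ∃ a' ∈ A, a ≠ a' ∧
      logDistOff T a b + logDistOff T a' b' ≤ η) : SpreadOn T (8 * Real.exp η) B := by
  intro v
  obtain ⟨c, r, hr, hfar, -⟩ := hsep v
  refine ⟨c, r, hr, fun b hb b' hb' hbb' => ?_⟩
  obtain ⟨a, ha, a', ha', haa', hle⟩ := hη b hb b' hb'
  have hcross := hsep.neg_add_le_logCrossRatio hAB ha ha' hb hb' haa' hbb' v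
  have hfar' : ∀ a ∈ A, ∀ b ∈ B, FarApart v.abv c r 2 a.rep b.rep := fun a ha b hb => by
    rw [FarApart, ← mul_assoc]; exact hfar a ha b hb
  refine .of_quadruple hr (Real.exp_nonneg η) a.rep_nonzero a'.rep_nonzero (hfar' a ha b hb)
    (hfar' a' ha' b' hb') ?_
  have waa' := v.abv.pos (wedge_rep_ne_zero haa')
  have wbb' := v.abv.pos (wedge_rep_ne_zero hbb')
  have wab := v.abv.pos (wedge_rep_ne_zero (Finset.disjoint_iff_ne.1 hAB a ha b hb))
  have wab' := v.abv.pos (wedge_rep_ne_zero (Finset.disjoint_iff_ne.1 hAB a' ha' b' hb'))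
  rw [← Real.log_le_log_iff (by positivity) (by positivity), Real.log_mul wab.ne' wab'.ne',
    Real.log_mul (Real.exp_ne_zero _) (by positivity), Real.log_mul waa'.ne' wbb'.ne',
    Real.log_exp]
  rw [logCrossRatio] at hcross
  linarith

lemma exists_forall_farApart {M : ℝ} (hM : 0 ≤ M) {c : SPlace K T → K}
    {r : SPlace K T → ℝ} (hr : ∀ v, 0 < r v)
    (hfar : ∀ v : SPlace K T, ∀ b ∈ B, ∀ b' ∈ B, b ≠ b' →
      FarApart v.abv (c v) (r v) M b.rep b'.rep) (hB : sCard K T < B.card) (x : P1 K) :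
    ∃ b ∈ B, ∀ v : SPlace K T, FarApart v.abv (c v) (r v) (2 * M) x.rep b.rep := by
  obtain ⟨b, hb, h⟩ := exists_forall_not_of_card_lt
    (bad := fun v b => ¬FarApart v.abv (c v) (r v) (2 * M) x.rep b.rep)
    (fun v b hb b' hb' hxb hxb' => by_contra fun hbb' =>
      ((hfar v b hb b' hb' hbb').left_or_right (hr v) hM b.rep_nonzero b'.rep_nonzero
        x.rep_nonzero).elim hxb hxb') (card_sPlace.trans_lt hB)
  exact ⟨b, hb, fun v => not_not.1 (h v)⟩

lemma SpreadOn.exists_pair_le {M : ℝ} (hM : 1 ≤ M) (hspread : SpreadOn T M B)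
    (hB : sCard K T + 1 < B.card) {p q : P1 K} (hpq : p ≠ q) (hp : p ∉ B) (hq : q ∉ B) :
    ∃ b ∈ B, ∃ b' ∈ B, b ≠ b' ∧ logDistOff T p q - logDistOff T p b - logDistOff T q b' ≤
      sCard K T * (2 * Real.log ((4 * M) ^ 2)) := by
  choose c r hr hfar using hspread
  obtain ⟨b, hb, hpb⟩ := exists_forall_farApart (by linarith) hr hfar (by lia) p
  obtain ⟨b', hb', hqb'⟩ := exists_forall_farApart (B := B.erase b) (by linarith) hr
    (fun v x hx y hy => hfar v x (Finset.mem_of_mem_erase hx) y (Finset.mem_of_mem_erase hy))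
    (by rw [Finset.card_erase_of_mem hb]; lia) q
  have hbb' : b ≠ b' := (Finset.ne_of_mem_erase hb').symm
  have hb' := Finset.mem_of_mem_erase hb'
  refine ⟨b, hb, b', hb', hbb', ?_⟩
  have hpb' : p ≠ b := fun h => hp (h ▸ hb)
  have hqb : q ≠ b' := fun h => hq (h ▸ hb')
  have hlocal : ∀ v ∈ Finset.univ (α := SPlace K T),
      v.mult * logCrossRatio v.abv p q b b' ≤ 2 * Real.log ((4 * M) ^ 2) := fun v _ => by
    have hcross := abv_wedge_mul_le_of_farApart (hr v) (hpb v) (hqb' v)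
    rw [show 2 * (2 * M) = 4 * M by ring] at hcross
    have hlog := logCrossRatio_le_log hpq hbb' hpb' hqb (by positivity) hcross
    have hnonneg : 0 ≤ Real.log ((4 * M) ^ 2) := Real.log_nonneg (by nlinarith)
    have hmult : (v.mult : ℝ) ≤ 2 := by exact_mod_cast v.mult_le_two
    exact (mul_le_mul_of_nonneg_left hlog (Nat.cast_nonneg _)).trans
      (mul_le_mul_of_nonneg_right hmult hnonneg)
  have hsum := Finset.sum_le_sum hlocal
  rw [sum_mult_mul_logCrossRatio hpq hbb' hpb' hqb, Finset.sum_const, Finset.card_univ,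
    card_sPlace, nsmul_eq_mul] at hsum
  linarith [logDistOff_nonneg (T := T) hbb']

lemma sCard_pos : 0 < sCard K T :=
  Nat.add_pos_right _ Fintype.card_pos

lemma log_sq_four_mul_eight_mul_exp_le {η : ℝ} (hη : 1 ≤ η) :
    Real.log ((4 * (8 * Real.exp η)) ^ 2) ≤ 9 * η := by
  have h : Real.log ((4 * (8 * Real.exp η)) ^ 2) = 10 * Real.log 2 + 2 * η := by
    rw [Real.log_pow, ← mul_assoc, Real.log_mul (by norm_num) (Real.exp_ne_zero _), Real.log_exp,
      show (4 * 8 : ℝ) = 2 ^ 5 by norm_num, Real.log_pow]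
    push_cast; ring
  linarith [Real.log_two_lt_d9]

lemma SeparatedOn.not_unbalanced {H : ℝ} (hsep : SeparatedOn T Projectivization.rep A B)
    (hAB : Disjoint A B) (hA : 200 * sCard K T ≤ A.card) (hB : 200 * sCard K T ≤ B.card) :
    ¬Unbalanced (logDistOff T) H A B := by
  rintro ⟨hH, hpq⟩
  have hs := sCard_pos (K := K) (T := T)
  set s := sCard K T
  obtain ⟨n, hn⟩ : ∃ n, n + 1 = 200 * s := ⟨200 * s - 1, by lia⟩
  have hn₀ : 0 < n := by lia
  set η : ℝ := 2 * H / n with hη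
  have hnonneg : ∀ b ∈ B, ∀ a ∈ A, 0 ≤ logDistOff T a b := fun b hb a ha =>
    logDistOff_nonneg (Finset.disjoint_iff_ne.1 hAB a ha b hb)
  have hpick : ∀ b ∈ B, ∀ b' ∈ B, ∃ a ∈ A, ∃ a' ∈ A, a ≠ a' ∧
      logDistOff T a b + logDistOff T a' b' ≤ η := fun b hb b' hb' =>
    exists_ne_add_le_of_sum_le (hnonneg b hb) (hnonneg b' hb') hn₀ (by lia) (hH b hb) (hH b' hb')
  have hη₁ : 1 ≤ η := by
    obtain ⟨b, hb, b', hb', hbb'⟩ := Finset.one_lt_card.1 (show 1 < B.card by lia)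
    obtain ⟨a, ha, a', ha', haa', hle⟩ := hpick b hb b' hb'
    exact (hsep.one_le_add hAB ha ha' hb hb' haa' hbb').trans hle
  have hnη : n * η = 2 * H := by rw [hη]; field_simp
  rcases hpq with h | ⟨p, q, hpq, hp, hq, hle⟩
  · have : 0 < n * η := by positivity
    linarith
  obtain ⟨b, hb, b', hb', hbb', hle'⟩ := SpreadOn.exists_pair_le
    (by linarith [Real.add_one_le_exp η]) (hsep.spreadOn hAB hpick) (by lia) hpq hp hq
  have hs' : (1 : ℝ) ≤ s := Nat.one_le_cast.2 hs
  have hn' : (n : ℝ) + 1 = 200 * s := by exact_mod_cast hn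
  have hlog := mul_le_mul_of_nonneg_left (log_sq_four_mul_eight_mul_exp_le hη₁) s.cast_nonneg
  nlinarith [hle b hb b' hb' hbb']

/-- The number of points, when `|S| = s`, that forces two sets to have large separated subsets. -/
def separationBound (s : ℕ) : ℕ := (10 ^ 7) ^ s * (200 * s) + 1

lemma not_unbalanced {H : ℝ} (hAB : Disjoint A B) (hA : separationBound (sCard K T) ≤ A.card)
    (hB : separationBound (sCard K T) ≤ B.card) : ¬Unbalanced (logDistOff T) H A B := by
  intro h
  obtain ⟨A', hA', B', hB', hcA, hcB, hsep⟩ := exists_separatedOn (vec := Projectivization.rep)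
    (fun _ hi => (Finset.mem_filter.1 hi).2) (fun _ hi => (Finset.mem_filter.1 hi).2)
    (fun _ _ _ _ h₀ => by_contra fun hne => wedge_rep_ne_zero hne h₀)
    (le_card_filter_rep_one_ne_zero hA) (le_card_filter_rep_one_ne_zero hB)
  have hA' : A' ⊆ A := hA'.trans (Finset.filter_subset _ _)
  have hB' : B' ⊆ B := hB'.trans (Finset.filter_subset _ _)
  exact hsep.not_unbalanced (Finset.disjoint_of_subset_left hA'
    (Finset.disjoint_of_subset_right hB' hAB)) hcA hcB
    (h.mono (fun _ _ => logDistOff_nonneg) hAB hA' hB')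

end Global

end SeparatedPair

noncomputable section Forms

variable {K : Type*} [Field K] {f : AbsoluteValue K ℝ} {n : ℕ} {u : Fin 2 → K}

lemma vecCons_eta {α : Type*} (u : Fin 2 → α) : ![u 0, u 1] = u :=
  FinVec.etaExpand_eq u

/-- The functions on `K²` given by binary forms of degree `n` with `f`-integral coefficients. -/
inductive IntegralForm (f : AbsoluteValue K ℝ) (n : ℕ) : ((Fin 2 → K) → K) → Prop
  | monomial {c : K} (hc : f c ≤ 1) {i j : ℕ} (h : i + j = n) :
      IntegralForm f n fun u => c * u 0 ^ i * u 1 ^ j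
  | add {F G : (Fin 2 → K) → K} (hF : IntegralForm f n F) (hG : IntegralForm f n G) :
      IntegralForm f n fun u => F u + G u

namespace IntegralForm

variable {F : (Fin 2 → K) → K}

lemma sum {ι : Type*} {s : Finset ι} {F : ι → (Fin 2 → K) → K}
    (h : ∀ i ∈ s, IntegralForm f n (F i)) : IntegralForm f n fun u => ∑ i ∈ s, F i u := by
  induction s using Finset.induction_on with
  | empty => simpa using monomial (f := f) (c := 0) (by simp) (add_zero n)
  | insert a s ha ih =>
    simp only [Finset.sum_insert ha]
    exact (h a (s.mem_insert_self a)).add (ih fun i hi => h i (Finset.mem_insert_of_mem hi))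

lemma neg (h : IntegralForm f n F) : IntegralForm f n fun u => -F u := by
  induction h with
  | monomial hc h => simpa only [neg_mul] using monomial ((f.map_neg _).trans_le hc) h
  | add _ _ hF hG => simpa only [neg_add] using hF.add hG

lemma swap (h : IntegralForm f n F) : IntegralForm f n fun u => F ![u 1, u 0] := by
  induction h with
  | monomial hc h => simpa [mul_right_comm] using monomial hc ((add_comm _ _).trans h)
  | add _ _ hF hG => exact hF.add hG

lemma const_mul (h : IntegralForm f n F) {a : K} (ha : f a ≤ 1) :
    IntegralForm f n fun u => a * F u := by
  induction h with
  | monomial hc h =>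
    simpa only [mul_assoc] using
      monomial ((map_mul f _ _).trans_le (mul_le_one₀ ha (f.nonneg _) hc)) h
  | add _ _ hF hG => simpa only [mul_add] using hF.add hG

lemma abv_le_one (hf : IsNonarchimedean f) (h : IntegralForm f n F) (hu : maxNorm f u ≤ 1) :
    f (F u) ≤ 1 := by
  induction h with
  | monomial hc h =>
    rw [map_mul, map_mul, map_pow, map_pow]
    exact mul_le_one₀ (mul_le_one₀ hc (by positivity)
      (pow_le_one₀ (f.nonneg _) ((le_max_left _ _).trans hu))) (by positivity)
      (pow_le_one₀ (f.nonneg _) ((le_max_right _ _).trans hu))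
  | add _ _ hF hG => exact (hf _ _).trans (max_le hF hG)

lemma apply_eq_of_degree_zero (h : IntegralForm f 0 F) (u w : Fin 2 → K) : F u = F w := by
  induction h with
  | monomial _ h =>
    obtain ⟨rfl, rfl⟩ := Nat.add_eq_zero_iff.1 h
    simp
  | add _ _ hF hG => exact congrArg₂ _ hF hG

lemma exists_sub_eq_mul (h : IntegralForm f (n + 1) F) {α : K} (hα : f α ≤ 1) :
    ∃ G, IntegralForm f n G ∧
      ∀ u, F u - u 1 ^ (n + 1) * F ![α, 1] = (u 0 - α * u 1) * G u := by
  induction h with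
  | @monomial c hc i j h =>
    refine ⟨fun u => ∑ k ∈ Finset.range i, c * α ^ (i - 1 - k) * u 0 ^ k * u 1 ^ (i - 1 - k + j),
      sum fun k hk => monomial ?_ (by have := Finset.mem_range.1 hk; lia), fun u => ?_⟩
    · rw [map_mul, map_pow]
      exact mul_le_one₀ hc (by positivity) (pow_le_one₀ (f.nonneg _) hα)
    · have hsum : ∑ k ∈ Finset.range i, c * α ^ (i - 1 - k) * u 0 ^ k * u 1 ^ (i - 1 - k + j) =
          c * u 1 ^ j * ∑ k ∈ Finset.range i, u 0 ^ k * (α * u 1) ^ (i - 1 - k) := by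
        rw [Finset.mul_sum]
        refine Finset.sum_congr rfl fun k _ => ?_
        rw [mul_pow, pow_add]
        ring
      have hgeom := geom_sum₂_mul (u 0) (α * u 1) i
      rw [mul_pow] at hgeom
      simp only [hsum]
      simp only [← h, pow_add, Matrix.cons_val_zero, Matrix.cons_val_one, one_pow, mul_one]
      linear_combination (-c * u 1 ^ j) * hgeom
  | add _ _ hF hG =>
    obtain ⟨F', hF', hF⟩ := hF
    obtain ⟨G', hG', hG⟩ := hG
    exact ⟨_, hF'.add hG', fun u => by linear_combination hF u + hG u⟩

end IntegralForm

/-- The vector `u` has a coordinate `1` and is `f`-integral. -/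
def IsNormalized (f : AbsoluteValue K ℝ) (u : Fin 2 → K) : Prop :=
  (u 1 = 1 ∧ f (u 0) ≤ 1) ∨ (u 0 = 1 ∧ f (u 1) ≤ 1)

lemma IsNormalized.ne_zero (h : IsNormalized f u) : u ≠ 0 := by
  rintro rfl
  rcases h with h | h <;> simp at h

lemma IsNormalized.maxNorm_eq_one (h : IsNormalized f u) : maxNorm f u = 1 := by
  rw [maxNorm]
  rcases h with ⟨h, hle⟩ | ⟨h, hle⟩
  · rw [h, map_one, max_eq_right hle]
  · rw [h, map_one, max_eq_left hle]

lemma exists_isNormalized_smul (hu : u ≠ 0) : ∃ c : K, c ≠ 0 ∧ IsNormalized f (c • u) := by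
  have hpos := maxNorm_pos (f := f) hu
  rcases le_total (f (u 0)) (f (u 1)) with h | h
  · rw [maxNorm, max_eq_right h] at hpos
    have h₁ : u 1 ≠ 0 := f.pos_iff.1 hpos
    refine ⟨(u 1)⁻¹, inv_ne_zero h₁, .inl ⟨inv_mul_cancel₀ h₁, ?_⟩⟩
    rwa [Pi.smul_apply, smul_eq_mul, map_mul, map_inv₀, inv_mul_le_one₀ hpos]
  · rw [maxNorm, max_eq_left h] at hpos
    have h₀ : u 0 ≠ 0 := f.pos_iff.1 hpos
    refine ⟨(u 0)⁻¹, inv_ne_zero h₀, .inr ⟨inv_mul_cancel₀ h₀, ?_⟩⟩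
    rwa [Pi.smul_apply, smul_eq_mul, map_mul, map_inv₀, inv_mul_le_one₀ hpos]

lemma exists_isNormalized_mk_eq (f : AbsoluteValue K ℝ) (P : P1 K) :
    ∃ (u : Fin 2 → K) (hu : u ≠ 0), IsNormalized f u ∧ Projectivization.mk K u hu = P := by
  obtain ⟨c, -, h⟩ := exists_isNormalized_smul (f := f) P.rep_nonzero
  refine ⟨c • P.rep, h.ne_zero, h, ?_⟩
  conv_rhs => rw [← P.mk_rep]
  exact (Projectivization.mk_eq_mk_iff' K _ _ _ _).2 ⟨c, rfl⟩

lemma IntegralForm.exists_eq_wedge_mul {F : (Fin 2 → K) → K} {a : Fin 2 → K}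
    (h : IntegralForm f (n + 1) F) (ha : IsNormalized f a) (h₀ : F a = 0) :
    ∃ G, IntegralForm f n G ∧ ∀ u, F u = wedge a u * G u := by
  rcases ha with ⟨h₁, hα⟩ | ⟨h₁, hα⟩
  · obtain ⟨G, hG, hFG⟩ := h.exists_sub_eq_mul hα
    have ha : ![a 0, 1] = a := h₁ ▸ vecCons_eta a
    refine ⟨_, hG.neg, fun u => ?_⟩
    have hu := hFG u
    rw [ha, h₀] at hu
    rw [wedge, h₁]
    linear_combination hu
  · obtain ⟨G, hG, hFG⟩ := h.swap.exists_sub_eq_mul hα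
    have ha : ![1, a 1] = a := h₁ ▸ vecCons_eta a
    refine ⟨_, hG.swap, fun u => ?_⟩
    have hu := hFG ![u 1, u 0]
    simp only [Matrix.cons_val_zero, Matrix.cons_val_one, vecCons_eta, ha, h₀] at hu
    rw [wedge, h₁]
    linear_combination hu

lemma IntegralForm.abv_le_prod {ι : Type*} (hf : IsNonarchimedean f) {vec : ι → Fin 2 → K}
    {s : Finset ι} (hs : ∀ i ∈ s, IsNormalized f (vec i))
    (hne : ∀ i ∈ s, ∀ j ∈ s, i ≠ j → wedge (vec i) (vec j) ≠ 0) (hu : maxNorm f u ≤ 1)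
    {F : (Fin 2 → K) → K} (h : IntegralForm f n F) (h₀ : ∀ i ∈ s, F (vec i) = 0) :
    f (F u) ≤ ∏ i ∈ s, f (wedge (vec i) u) := by
  induction s using Finset.induction_on generalizing n F with
  | empty => simpa using h.abv_le_one hf hu
  | insert a s ha ih =>
    simp only [Finset.forall_mem_insert] at hs hne h₀
    cases n with
    | zero =>
      rw [h.apply_eq_of_degree_zero u (vec a), h₀.1, map_zero]
      exact Finset.prod_nonneg fun _ _ => f.nonneg _
    | succ n =>
      obtain ⟨G, hG, hFG⟩ := h.exists_eq_wedge_mul hs.1 h₀.1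
      rw [Finset.prod_insert ha, hFG, map_mul]
      refine mul_le_mul_of_nonneg_left
        (ih hs.2 (fun i hi j hj => (hne.2 i hi).2 j hj) hG fun i hi => ?_) (f.nonneg _)
      exact (mul_eq_zero.1 ((hFG _).symm.trans (h₀.2 i hi))).resolve_left
        (hne.1.2 i hi (ne_of_mem_of_not_mem hi ha).symm)

lemma integralForm_eval {p : MvPolynomial (Fin 2) K} (hp : p.IsHomogeneous n)
    (hc : ∀ m, f (p.coeff m) ≤ 1) : IntegralForm f n fun u => eval u p := by
  simp only [eval_eq', Fin.prod_univ_two, ← mul_assoc]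
  refine IntegralForm.sum fun m hm => IntegralForm.monomial (hc m) ?_
  have hdeg := hp (mem_support_iff.1 hm)
  rw [Finsupp.weight_apply, Finsupp.sum_fintype _ _ (by simp)] at hdeg
  simpa [Fin.sum_univ_two] using hdeg

end Forms

noncomputable section GoodReduction

section Local

variable {K : Type*} [Field K] {d : ℕ} {f : AbsoluteValue K ℝ} {φ : P1Map K d}
  {u w : Fin 2 → K}

lemma mk_eq_mk_iff_wedge_eq_zero (hu : u ≠ 0) (hw : w ≠ 0) :
    Projectivization.mk K u hu = Projectivization.mk K w hw ↔ wedge u w = 0 := by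
  rw [Projectivization.mk_eq_mk_iff']
  refine ⟨?_, fun h => (eq_smul_of_wedge_eq_zero hw h).imp fun _ => Eq.symm⟩
  rintro ⟨c, rfl⟩
  rw [wedge_smul_left, wedge_self, mul_zero]

lemma pointLogDist_mk_of_maxNorm_eq_one {hu : u ≠ 0} {hw : w ≠ 0} (hu₁ : maxNorm f u = 1)
    (hw₁ : maxNorm f w = 1) (h : Projectivization.mk K u hu ≠ Projectivization.mk K w hw) :
    pointLogDist f (Projectivization.mk K u hu) (Projectivization.mk K w hw) =
      -Real.log (f (wedge u w)) := by
  rw [pointLogDist_mk hu hw ((mk_eq_mk_iff_wedge_eq_zero hu hw).not.1 h), vecLogDist, hu₁, hw₁,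
    Real.log_one, add_zero, zero_sub]

/-- The lift of `φ` to the affine plane given by its pair of forms. -/
def P1Map.lift (φ : P1Map K d) (u : Fin 2 → K) : Fin 2 → K :=
  ![eval u φ.F, eval u φ.G]

lemma P1Map.lift_ne_zero (φ : P1Map K d) (hu : u ≠ 0) : φ.lift u ≠ 0 := by
  intro h
  have hzero : ∀ p : MvPolynomial (Fin 2) K, eval u p = 0 →
      aeval ![algebraMap K (AlgebraicClosure K) (u 0), algebraMap K _ (u 1)] p = 0 := by
    intro p hp
    rw [vecCons_eta fun i => algebraMap K (AlgebraicClosure K) (u i)]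
    exact (aeval_algebraMap_apply _ u p).trans (by rw [aeval_eq_eval, hp, map_zero])
  obtain ⟨h₀, h₁⟩ := φ.coprime _ _ (hzero _ (congrFun h 0)) (hzero _ (congrFun h 1))
  rw [map_eq_zero] at h₀ h₁
  exact hu (funext (Fin.forall_fin_two.2 ⟨h₀, h₁⟩))

lemma P1Map.toFun_mk (φ : P1Map K d) (hu : u ≠ 0) :
    φ.toFun (Projectivization.mk K u hu) =
      Projectivization.mk K (φ.lift u) (φ.lift_ne_zero hu) := by
  have h := φ.compat (u 0) (u 1)
  simp only [vecCons_eta] at h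
  exact h hu (φ.lift_ne_zero hu)

/-- Good reduction with respect to an absolute value: a suitable multiple of the lift of `φ` has
integral coefficients and preserves primitive integral vectors. -/
def HasGoodLift (f : AbsoluteValue K ℝ) (φ : P1Map K d) : Prop :=
  ∃ c : K, c ≠ 0 ∧ IntegralForm f d (fun u => c * eval u φ.F) ∧
    IntegralForm f d (fun u => c * eval u φ.G) ∧
    ∀ u, IsNormalized f u → maxNorm f (c • φ.lift u) = 1

namespace HasGoodLift

/-- If `x` runs through points over `z`, then the form `z ∧ φ(u)` is divisible by `∏ (x ∧ u)`. -/
lemma sum_pointLogDist_le (hφ : HasGoodLift f φ) (hf : IsNonarchimedean f) {S : Finset (P1 K)}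
    {z Y : P1 K} (hS : ∀ x ∈ S, φ.toFun x = z) (hY : φ.toFun Y ≠ z) :
    ∑ x ∈ S, pointLogDist f x Y ≤ pointLogDist f z (φ.toFun Y) := by
  obtain ⟨c, hc, hF, hG, hnorm⟩ := hφ
  choose vec hvec hvec' hmk using exists_isNormalized_mk_eq (K := K) f
  have hwedge : ∀ P Q, wedge (vec P) (vec Q) = 0 ↔ P = Q := fun P Q => by
    rw [← mk_eq_mk_iff_wedge_eq_zero (hvec P) (hvec Q), hmk, hmk]
  have hlift : ∀ P, ∃ h, φ.toFun P = Projectivization.mk K (c • φ.lift (vec P)) h := fun P => by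
    refine ⟨smul_ne_zero hc (φ.lift_ne_zero (hvec P)), ?_⟩
    conv_lhs => rw [← hmk P, φ.toFun_mk]
    rw [mk_eq_mk_iff_wedge_eq_zero, wedge_smul_right, wedge_self, mul_zero]
  have hlift_wedge : ∀ P, wedge (vec z) (c • φ.lift (vec P)) = 0 ↔ z = φ.toFun P := fun P => by
    obtain ⟨h, hP⟩ := hlift P
    rw [← mk_eq_mk_iff_wedge_eq_zero (hvec z) h, hmk, hP]
  have hform : IntegralForm f d fun u => wedge (vec z) (c • φ.lift u) := by
    have h₀ : f (vec z 0) ≤ 1 := (le_max_left _ _).trans_eq (hvec' z).maxNorm_eq_one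
    have h₁ : f (vec z 1) ≤ 1 := (le_max_right _ _).trans_eq (hvec' z).maxNorm_eq_one
    simpa [wedge, P1Map.lift, ← sub_eq_add_neg] using (hG.const_mul h₀).add (hF.const_mul h₁).neg
  have hdist : ∀ x ∈ S, pointLogDist f x Y = -Real.log (f (wedge (vec x) (vec Y))) := by
    intro x hx
    have hxY : x ≠ Y := fun h => hY (h ▸ hS x hx)
    rw [← hmk x, ← hmk Y] at hxY
    conv_lhs => rw [← hmk x, ← hmk Y]
    exact pointLogDist_mk_of_maxNorm_eq_one (hvec' x).maxNorm_eq_one (hvec' Y).maxNorm_eq_one hxY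
  have hle := hform.abv_le_prod (u := vec Y) hf (s := S) (fun x _ => hvec' x)
    (fun x _ y _ => (hwedge x y).not.2) (hvec' Y).maxNorm_eq_one.le
    fun x hx => (hlift_wedge x).2 (hS x hx).symm
  have hne : wedge (vec z) (c • φ.lift (vec Y)) ≠ 0 := (hlift_wedge Y).not.2 hY.symm
  obtain ⟨h, hφY⟩ := hlift Y
  have hz : pointLogDist f z (φ.toFun Y) = -Real.log (f (wedge (vec z) (c • φ.lift (vec Y)))) := by
    have hzY := hY.symm
    rw [hφY, ← hmk z] at hzY
    conv_lhs => rw [hφY, ← hmk z]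
    exact pointLogDist_mk_of_maxNorm_eq_one (hvec' z).maxNorm_eq_one (hnorm _ (hvec' Y)) hzY
  rw [hz, Finset.sum_congr rfl hdist, Finset.sum_neg_distrib, neg_le_neg_iff,
    ← Real.log_prod fun x hx => f.ne_zero ((hwedge x Y).not.2 fun h => hY (h ▸ hS x hx))]
  exact Real.log_le_log (f.pos hne) hle

lemma sum_pointLogDist_iterate_le (hφ : HasGoodLift f φ) (hf : IsNonarchimedean f) {k : ℕ}
    {S : Finset (P1 K)} {z Y : P1 K} (hS : ∀ x ∈ S, φ.toFun^[k] x = z) (hY : φ.toFun^[k] Y ≠ z) :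
    ∑ x ∈ S, pointLogDist f x Y ≤ pointLogDist f z (φ.toFun^[k] Y) := by
  induction k generalizing S Y with
  | zero =>
    have hsub : S ⊆ {z} := fun x hx => Finset.mem_singleton.2 (hS x hx)
    refine (Finset.sum_le_sum_of_subset_of_nonneg hsub fun x hx _ => ?_).trans_eq
      (Finset.sum_singleton _ _)
    exact Finset.mem_singleton.1 hx ▸ pointLogDist_nonneg hf (Ne.symm hY)
  | succ k ih =>
    have hz : ∀ w ∈ S.image φ.toFun, φ.toFun^[k] w = z := Finset.forall_mem_image.2 hS
    rw [← Finset.sum_fiberwise_of_maps_to fun x => Finset.mem_image_of_mem φ.toFun]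
    refine (Finset.sum_le_sum fun w hw => ?_).trans (ih hz hY)
    exact hφ.sum_pointLogDist_le hf (fun x hx => (Finset.mem_filter.1 hx).2)
      fun h => hY ((congrArg _ h).trans (hz w hw))

lemma pointLogDist_le_iterate (hφ : HasGoodLift f φ) (hf : IsNonarchimedean f) {k : ℕ}
    {P Q : P1 K} (h : φ.toFun^[k] P ≠ φ.toFun^[k] Q) :
    pointLogDist f P Q ≤ pointLogDist f (φ.toFun^[k] P) (φ.toFun^[k] Q) := by
  simpa using hφ.sum_pointLogDist_iterate_le hf (S := {P}) (by simp) h.symm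

lemma pointLogDist_toFun (hφ : HasGoodLift f φ) (hf : IsNonarchimedean f) {P Q : P1 K}
    (hP : P ∈ Function.periodicPts φ.toFun) (hQ : Q ∈ Function.periodicPts φ.toFun) (h : P ≠ Q) :
    pointLogDist f (φ.toFun P) (φ.toFun Q) = pointLogDist f P Q := by
  have hne := (Function.bijOn_periodicPts φ.toFun).injOn.ne hP hQ h
  refine le_antisymm ?_ (hφ.pointLogDist_le_iterate (k := 1) hf hne)
  obtain ⟨m, hm, hmP⟩ := hP
  obtain ⟨n, hn, hnQ⟩ := hQ
  have hpred : m * n - 1 + 1 = m * n := Nat.sub_add_cancel (Nat.mul_pos hm hn)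
  have hPk : φ.toFun^[m * n - 1] (φ.toFun P) = P := by
    rw [← Function.iterate_succ_apply, Nat.succ_eq_add_one, hpred]
    exact hmP.mul_const n
  have hQk : φ.toFun^[m * n - 1] (φ.toFun Q) = Q := by
    rw [← Function.iterate_succ_apply, Nat.succ_eq_add_one, hpred]
    exact hnQ.const_mul m
  have hle := hφ.pointLogDist_le_iterate hf (k := m * n - 1) (P := φ.toFun P) (Q := φ.toFun Q)
  rw [hPk, hQk] at hle
  exact hle h

lemma pointLogDist_fixed_le (hφ : HasGoodLift f φ) (hf : IsNonarchimedean f) {k : ℕ} {P Q : P1 K}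
    (hP : φ.toFun P = P) (h : φ.toFun^[k] Q ≠ P) (h' : φ.toFun^[k] Q ≠ Q) :
    pointLogDist f Q P ≤ pointLogDist f Q (φ.toFun^[k] Q) := by
  have hPk : φ.toFun^[k] P = P := Function.iterate_fixed hP k
  have hQP : Q ≠ P := fun hQP => h (by rw [hQP, hPk])
  have hle := hφ.pointLogDist_le_iterate hf (k := k) (P := P) (Q := Q) (by rwa [hPk, ne_comm])
  rw [hPk, pointLogDist_comm P Q] at hle
  simpa [min_eq_left hle] using min_pointLogDist_le hf hQP h.symm h'.symm

end HasGoodLift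

end Local

section Valuation

variable {K : Type*} [Field K] [NumberField K] {d : ℕ} {φ : P1Map K d}
  {v : HeightOneSpectrum (𝓞 K)} {c : K} {p : MvPolynomial (Fin 2) K}
  {p₀ : MvPolynomial (Fin 2) (v.valuation K).valuationSubring}

lemma adicAbv_le_one_iff_valuation {x : K} : adicAbv K v x ≤ 1 ↔ v.valuation K x ≤ 1 := by
  rw [HeightOneSpectrum.adicAbv_def,
    ← WithZeroMulInt.toNNReal_le_one_iff (HeightOneSpectrum.one_lt_absNorm_nnreal v)]
  norm_cast

lemma adicAbv_lt_one_iff_valuation {x : K} : adicAbv K v x < 1 ↔ v.valuation K x < 1 := by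
  rw [HeightOneSpectrum.adicAbv_def,
    ← WithZeroMulInt.toNNReal_lt_one_iff (HeightOneSpectrum.one_lt_absNorm_nnreal v)]
  norm_cast

lemma integralForm_of_map_eq (hp : p.IsHomogeneous d)
    (h : map (v.valuation K).valuationSubring.subtype p₀ = C c * p) :
    IntegralForm (adicAbv K v) d fun u => c * eval u p := by
  simpa using integralForm_eval (hp.C_mul c) fun m => by
    rw [← h, coeff_map, adicAbv_le_one_iff_valuation]
    exact (p₀.coeff m).2

lemma eval_map_residue_eq_zero {k : Type*} [CommRing k]
    (h : map (v.valuation K).valuationSubring.subtype p₀ = C c * p)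
    (g : IsLocalRing.ResidueField (v.valuation K).valuationSubring →+* k)
    (x : Fin 2 → (v.valuation K).valuationSubring)
    (hlt : adicAbv K v (c * eval (fun i => (x i : K)) p) < 1) :
    eval ![g.comp (IsLocalRing.residue _) (x 0), g.comp (IsLocalRing.residue _) (x 1)]
      (map (g.comp (IsLocalRing.residue _)) p₀) = 0 := by
  have hx : (eval x p₀ : (v.valuation K).valuationSubring) = c * eval (fun i => (x i : K)) p := by
    rw [← eval_C (f := fun i => (x i : K)) c, ← eval_mul, ← h]
    exact map_eval (v.valuation K).valuationSubring.subtype x p₀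
  have hmem : eval x p₀ ∈ IsLocalRing.maximalIdeal (v.valuation K).valuationSubring := by
    rw [Valuation.mem_maximalIdeal_iff, hx]
    exact adicAbv_lt_one_iff_valuation.1 hlt
  rw [vecCons_eta fun i => g.comp (IsLocalRing.residue _) (x i)]
  refine (map_eval (g.comp (IsLocalRing.residue _)) x p₀).symm.trans ?_
  rw [RingHom.comp_apply, (IsLocalRing.residue_eq_zero_iff _).2 hmem, map_zero]

lemma GoodReductionAt.hasGoodLift (h : GoodReductionAt φ v) : HasGoodLift (adicAbv K v) φ := by
  obtain ⟨c, hc, F₀, G₀, hF₀, hG₀, -, hred⟩ := h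
  have hF := integralForm_of_map_eq φ.homF hF₀
  have hG := integralForm_of_map_eq φ.homG hG₀
  refine ⟨c, hc, hF, hG, fun u hu => ?_⟩
  have hf := isNonarchimedean_adicAbv K v
  have hu₁ := hu.maxNorm_eq_one.le
  refine (max_le (hF.abv_le_one hf hu₁) (hG.abv_le_one hf hu₁)).eq_of_not_lt fun hlt => ?_
  obtain ⟨hltF, hltG⟩ := max_lt_iff.1 hlt
  obtain ⟨x, hx⟩ : ∃ x : Fin 2 → (v.valuation K).valuationSubring, (fun i => (x i : K)) = u :=
    ⟨fun i => ⟨u i, adicAbv_le_one_iff_valuation.1 (by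
      fin_cases i
      exacts [(le_max_left _ _).trans hu₁, (le_max_right _ _).trans hu₁])⟩, rfl⟩
  subst hx
  obtain ⟨h₀, h₁⟩ := hred _ _ (eval_map_residue_eq_zero hF₀ _ x hltF)
    (eval_map_residue_eq_zero hG₀ _ x hltG)
  rcases hu with ⟨h, -⟩ | ⟨h, -⟩
  · rw [show x 1 = 1 from Subtype.ext h, map_one] at h₁
    exact one_ne_zero h₁
  · rw [show x 0 = 1 from Subtype.ext h, map_one] at h₀
    exact one_ne_zero h₀

namespace GoodReductionOutside

variable {T : Finset (HeightOneSpectrum (𝓞 K))} {k : ℕ} {P Q z Y : P1 K}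

lemma sum_logDistOff_iterate_le (hφ : GoodReductionOutside φ T) {S : Finset (P1 K)}
    (hS : ∀ x ∈ S, φ.toFun^[k] x = z) (hY : φ.toFun^[k] Y ≠ z) :
    ∑ x ∈ S, logDistOff T x Y ≤ logDistOff T z (φ.toFun^[k] Y) :=
  sum_logDistOff_le S (fun x => x) (fun _ => Y) fun v hv =>
    (hφ v hv).hasGoodLift.sum_pointLogDist_iterate_le (isNonarchimedean_adicAbv K v) hS hY

lemma logDistOff_fixed_le (hφ : GoodReductionOutside φ T) (hP : φ.toFun P = P)
    (h : φ.toFun^[k] Q ≠ P) (h' : φ.toFun^[k] Q ≠ Q) :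
    logDistOff T Q P ≤ logDistOff T Q (φ.toFun^[k] Q) := by
  simpa using sum_logDistOff_le {()} (fun _ => Q) (fun _ => P) fun v hv => by
    simpa using (hφ v hv).hasGoodLift.pointLogDist_fixed_le (isNonarchimedean_adicAbv K v) hP h h'

end GoodReductionOutside

end Valuation

end GoodReduction

noncomputable section Tails

open Function (periodicPts)

section Combinatorics

variable {ι Y : Type*} [LinearOrder Y]

lemma exists_subset_card_eq_forall_le (e : ι → Y) {G : Finset ι} {n : ℕ} (hn : n ≤ G.card) :
    ∃ A ⊆ G, A.card = n ∧ ∀ a ∈ A, ∀ b ∈ G \ A, e a ≤ e b := by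
  induction n with
  | zero => exact ⟨∅, G.empty_subset, rfl, by simp⟩
  | succ n ih =>
    obtain ⟨A, hAG, hcard, hle⟩ := ih (by lia)
    obtain ⟨c, hc, hmin⟩ := Finset.exists_min_image (G \ A) e
      (Finset.card_pos.1 (by rw [Finset.card_sdiff_of_subset hAG]; lia))
    obtain ⟨hcG, hcA⟩ := Finset.mem_sdiff.1 hc
    refine ⟨insert c A, Finset.insert_subset hcG hAG,
      by rw [Finset.card_insert_of_notMem hcA, hcard], fun a ha b hb => ?_⟩
    have hb' := Finset.sdiff_subset_sdiff subset_rfl (Finset.subset_insert c A) hb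
    rcases Finset.mem_insert.1 ha with rfl | ha
    exacts [hmin b hb', hle a ha b hb']

lemma exists_preimages_forall_le {f : ι → ι} (e : ι → Y) {G : Finset ι}
    (hf : ∀ y ∈ G, y ∈ Set.range f) {n m : ℕ} (h : n + m ≤ G.card) :
    ∃ A ⊆ G, ∃ B : Finset ι, A.card = n ∧ B.card = m ∧
      ∀ b ∈ B, f b ∈ G ∧ ∀ a ∈ A, e a ≤ e (f b) := by
  obtain ⟨A, hAG, hcard, hle⟩ := exists_subset_card_eq_forall_le e (show n ≤ G.card by lia)
  obtain ⟨C, hC, hCm⟩ := Finset.exists_subset_card_eq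
    (show m ≤ (G \ A).card by rw [Finset.card_sdiff_of_subset hAG]; lia)
  obtain ⟨B, -, hinj, rfl⟩ := Finset.exists_subset_injOn_image_eq_of_surjOn (f := f) Set.univ C
    fun y hy => by simpa using hf y (Finset.sdiff_subset (hC hy))
  refine ⟨A, hAG, B, hcard, by rw [← hCm, Finset.card_image_of_injOn hinj], fun b hb => ?_⟩
  have hfb := hC (Finset.mem_image_of_mem f hb)
  exact ⟨Finset.sdiff_subset hfb, fun a ha => hle a ha _ hfb⟩

lemma card_filter_div_lt_le {B : Finset ι} {g : ι → ℝ} {H : ℝ} {n : ℕ}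
    (hg : ∀ b ∈ B, 0 ≤ g b) (hH : 0 < H) (hn : 0 < n) (h : ∑ b ∈ B, g b ≤ H) :
    (B.filter fun b => H / n < g b).card ≤ n := by
  have hn' : (0 : ℝ) < n := Nat.cast_pos.2 hn
  have hle : (B.filter fun b => H / n < g b).card * (H / n) ≤ n * (H / n) :=
    calc _ = ∑ b ∈ B with H / n < g b, H / n := by rw [Finset.sum_const, nsmul_eq_mul]
      _ ≤ ∑ b ∈ B with H / n < g b, g b :=
        Finset.sum_le_sum fun b hb => (Finset.mem_filter.1 hb).2.le
      _ ≤ ∑ b ∈ B, g b :=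
        Finset.sum_le_sum_of_subset_of_nonneg (Finset.filter_subset _ _) fun b hb _ => hg b hb
      _ ≤ n * (H / n) := h.trans_eq (by field_simp)
  exact_mod_cast le_of_mul_le_mul_right hle (div_pos hH hn')

lemma exists_subset_forall_le_div {κ : Type*} {D : ι → κ → ℝ} {A : Finset ι} {B : Finset κ} {H : ℝ}
    (hD : ∀ a ∈ A, ∀ b ∈ B, 0 ≤ D a b) (hA : A.Nonempty) (hAB : A.card = B.card)
    (hsum : ∀ b ∈ B, ∑ a ∈ A, D a b ≤ H) (hH : 0 < H) {n : ℕ} (hn : 0 < n) :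
    ∃ a ∈ A, ∃ B' ⊆ B, B.card ≤ n + B'.card ∧ ∀ b ∈ B', D a b ≤ H / n := by
  obtain ⟨a, ha, hle⟩ : ∃ a ∈ A, ∑ b ∈ B, D a b ≤ H :=
    Finset.exists_le_of_sum_le hA <| calc
      _ = ∑ b ∈ B, ∑ a ∈ A, D a b := Finset.sum_comm
      _ ≤ ∑ _ ∈ B, H := Finset.sum_le_sum hsum
      _ = ∑ _ ∈ A, H := by rw [Finset.sum_const, Finset.sum_const, hAB]
  refine ⟨a, ha, B.filter fun b => ¬H / n < D a b, Finset.filter_subset _ _, ?_,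
    fun b hb => not_lt.1 (Finset.mem_filter.1 hb).2⟩
  rw [← Finset.card_filter_add_card_filter_not (fun b => H / n < D a b)]
  exact Nat.add_le_add_right (card_filter_div_lt_le (hD a ha) hH hn hle) _

end Combinatorics

section Shadow

variable {X : Type*} {f : X → X} {y p q : X}

lemma iterate_mem_periodicPts (hp : p ∈ periodicPts f) (k : ℕ) : f^[k] p ∈ periodicPts f :=
  ((Function.bijOn_periodicPts f).iterate k).mapsTo hp

lemma eq_of_iterate_eq (hp : p ∈ periodicPts f) (hq : q ∈ periodicPts f) {k : ℕ}
    (h : f^[k] p = f^[k] q) : p = q :=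
  ((Function.bijOn_periodicPts f).iterate k).injOn hp hq h

lemma iterate_eq_of_le {k m : ℕ} (hkm : k ≤ m) (h : f^[k] y = f^[k] p) : f^[m] y = f^[m] p := by
  obtain ⟨j, rfl⟩ := Nat.exists_eq_add_of_le' hkm
  rw [Function.iterate_add_apply, Function.iterate_add_apply, h]

lemma iterate_eq_of_fixed (hp : f p = p) {k m : ℕ} (hkm : k ≤ m) (h : f^[k] y = p) :
    f^[m] y = p := by
  rw [iterate_eq_of_le hkm (h.trans (Function.iterate_fixed hp k).symm),
    Function.iterate_fixed hp]

/-- `p` is the shadow of the preperiodic point `y`: the periodic point whose orbit eventually runs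
along that of `y`. -/
def IsShadow (f : X → X) (y p : X) : Prop :=
  p ∈ periodicPts f ∧ ∃ k, f^[k] y = f^[k] p

lemma IsShadow.unique (hp : IsShadow f y p) (hq : IsShadow f y q) : p = q := by
  obtain ⟨hp, k, hk⟩ := hp
  obtain ⟨hq, m, hm⟩ := hq
  exact eq_of_iterate_eq hp hq ((iterate_eq_of_le (Nat.le_add_right k m) hk).symm.trans
    (iterate_eq_of_le (Nat.le_add_left m k) hm))

lemma exists_isShadow {m : ℕ} (h : f^[m] y ∈ periodicPts f) : ∃ p, IsShadow f y p := by
  obtain ⟨p, hp, hpy⟩ := ((Function.bijOn_periodicPts f).iterate m).surjOn h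
  exact ⟨p, hp, m, hpy.symm⟩

lemma IsShadow.iterate (h : IsShadow f y p) (k : ℕ) : IsShadow f (f^[k] y) (f^[k] p) := by
  obtain ⟨hp, m, hm⟩ := h
  refine ⟨iterate_mem_periodicPts hp k, m, ?_⟩
  rw [← Function.iterate_add_apply, ← Function.iterate_add_apply]
  exact iterate_eq_of_le (Nat.le_add_right m k) hm

lemma IsShadow.of_apply (h : IsShadow f (f y) p) : ∃ q, IsShadow f y q ∧ f q = p := by
  obtain ⟨hp, k, hk⟩ := h
  obtain ⟨q, hq, rfl⟩ := (Function.bijOn_periodicPts f).surjOn hp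
  exact ⟨q, ⟨hq, k + 1, hk⟩, rfl⟩

lemma exists_iterate_ne_apply_eq (hy : y ≠ p) {k : ℕ} (h : f^[k] y = p) :
    ∃ m, f^[m] y ≠ p ∧ f (f^[m] y) = p := by
  induction k generalizing y with
  | zero => exact absurd h hy
  | succ k ih =>
    by_cases hfy : f y = p
    · exact ⟨0, hy, hfy⟩
    · obtain ⟨m, hm, hm'⟩ := ih hfy h
      exact ⟨m + 1, hm, hm'⟩

end Shadow

/-- The properties of the distance `D` outside `S` for a map `f` of good reduction from which the
number of nonperiodic preperiodic points is bounded; `N` is the size from which two disjoint sets of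
points cannot be unbalanced. -/
structure TailSystem {X : Type*} (f : X → X) (D : X → X → ℝ) (N : ℕ) : Prop where
  nonneg : ∀ ⦃x y⦄, x ≠ y → 0 ≤ D x y
  symm : ∀ x y, D x y = D y x
  sum_le_iterate : ∀ ⦃k : ℕ⦄ ⦃A : Finset X⦄ ⦃y z : X⦄, (∀ a ∈ A, f^[k] a = z) → f^[k] y ≠ z →
    ∑ a ∈ A, D a y ≤ D z (f^[k] y)
  le_of_fixed : ∀ ⦃k : ℕ⦄ ⦃p y : X⦄, f p = p → f^[k] y ≠ p → f^[k] y ≠ y →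
    D y p ≤ D y (f^[k] y)
  not_unbalanced : ∀ ⦃A B : Finset X⦄ ⦃H : ℝ⦄, Disjoint A B → N ≤ A.card → N ≤ B.card →
    ¬Unbalanced D H A B
  four_le : 4 ≤ N

namespace TailSystem

variable {X : Type*} {f : X → X} {D : X → X → ℝ} {N : ℕ} {p q y : X}

lemma nonpos_of_isShadow (h : TailSystem f D N) (hp : IsShadow f y p) (hyp : y ≠ p)
    (hq : q ∈ periodicPts f) (hqp : q ≠ p) : D q y ≤ 0 := by
  obtain ⟨⟨m, hm, hpm⟩, k, hk⟩ := hp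
  obtain ⟨n, hn, hqn⟩ := hq
  have hperiod : k ≤ m * n * k := Nat.le_mul_of_pos_left k (Nat.mul_pos hm hn)
  have hp : f^[m * n * k] p = p := (hpm.mul_const n).mul_const k
  have hq : f^[m * n * k] q = q := (hqn.const_mul m).mul_const k
  have hy : f^[m * n * k] y = p := (iterate_eq_of_le hperiod hk).trans hp
  have hsum := h.sum_le_iterate (A := {y, p}) (z := p) (y := q) (k := m * n * k)
    (by simp [hy, hp]) (by rwa [hq])
  rw [Finset.sum_pair hyp, hq] at hsum
  linarith [h.symm q y]

section ManyPeriodic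

variable {A B : Finset X}

lemma not_forall_ne_of_isShadow (h : TailSystem f D N) (hA : ∀ a ∈ A, a ∈ periodicPts f)
    (hB : ∀ b ∈ B, b ∉ periodicPts f) (hAN : N ≤ A.card) (hBN : N ≤ B.card) :
    ¬∀ b ∈ B, ∃ p ∉ A, IsShadow f b p := by
  intro hshadow
  refine h.not_unbalanced (Finset.disjoint_left.2 fun a ha ha' => hB a ha' (hA a ha)) hAN hBN
    (H := 0) ⟨fun b hb => Finset.sum_nonpos fun a ha => ?_, Or.inl le_rfl⟩
  obtain ⟨p, hpA, hp⟩ := hshadow b hb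
  exact h.nonpos_of_isShadow hp (fun hbp => hB b hb (hbp ▸ hp.1)) (hA a ha)
    fun hap => hpA (hap ▸ ha)

lemma card_lt_of_two_mul_le (h : TailSystem f D N) (hA : ∀ a ∈ A, a ∈ periodicPts f)
    (hAN : 2 * N ≤ A.card) (hB : ∀ b ∈ B, b ∉ periodicPts f ∧ ∃ p, IsShadow f b p) :
    B.card < 2 * N := by
  by_contra! hBN
  obtain ⟨A₁, hA₁, hcard⟩ := Finset.exists_subset_card_eq (show N ≤ A.card by lia)
  have hcard' : N ≤ (A \ A₁).card := by rw [Finset.card_sdiff_of_subset hA₁]; lia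
  have hsplit := Finset.card_filter_add_card_filter_not (s := B) (∃ p ∈ A₁, IsShadow f · p)
  rcases le_total N (B.filter (∃ p ∈ A₁, IsShadow f · p)).card with hN | hN
  · refine h.not_forall_ne_of_isShadow (fun a ha => hA a (Finset.sdiff_subset ha))
      (fun b hb => (hB b (Finset.filter_subset _ _ hb)).1) hcard' hN fun b hb => ?_
    obtain ⟨p, hp, hbp⟩ := (Finset.mem_filter.1 hb).2
    exact ⟨p, fun hp' => (Finset.mem_sdiff.1 hp').2 hp, hbp⟩
  · refine h.not_forall_ne_of_isShadow (fun a ha => hA a (hA₁ ha))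
      (fun b hb => (hB b (Finset.filter_subset _ _ hb)).1) hcard.ge
      (B := B.filter (¬∃ p ∈ A₁, IsShadow f · p)) (by lia) fun b hb => ?_
    obtain ⟨hbB, hb⟩ := Finset.mem_filter.1 hb
    obtain ⟨p, hp⟩ := (hB b hbB).2
    exact ⟨p, fun hpA => hb ⟨p, hpA, hp⟩, hp⟩

end ManyPeriodic

section ManyTails

variable {G : Finset X}

lemma card_lt_of_isShadow (h : TailSystem f D N) (hp : f p ≠ p)
    (hG : ∀ y ∈ G, IsShadow f y p ∧ y ≠ p) (hf : ∀ y ∈ G, y ∈ Set.range f) : G.card < 2 * N := by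
  by_contra! hGN
  set e : X → ℕ := fun y => sInf {k | f^[k] y = f^[k] p} with he
  have hee : ∀ y ∈ G, f^[e y] y = f^[e y] p := fun y hy => Nat.sInf_mem (hG y hy).1.2
  obtain ⟨A, hAG, B, hA, hB, hAB⟩ := exists_preimages_forall_le e hf (n := N) (m := N) (by lia)
  obtain ⟨a₀, ha₀, hmax⟩ := Finset.exists_max_image A e
    (Finset.card_pos.1 (by linarith [h.four_le]))
  obtain ⟨k, hk⟩ : ∃ k, e a₀ = k + 1 := Nat.exists_eq_succ_of_ne_zero fun h₀ =>
    (hG a₀ (hAG ha₀)).2 (by simpa [h₀] using hee a₀ (hAG ha₀))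
  have hshadow : ∀ b ∈ B, ∃ q, IsShadow f b q ∧ f q = p := fun b hb =>
    (hG _ (hAB b hb).1).1.of_apply
  refine h.not_unbalanced (Finset.disjoint_left.2 fun b hbA hbB => ?_) hA.ge hB.ge (H := 0)
    ⟨fun b hb => ?_, Or.inl le_rfl⟩
  · obtain ⟨q, hq, hqp⟩ := hshadow b hbB
    obtain rfl := hq.unique (hG b (hAG hbA)).1
    exact hp hqp
  · obtain ⟨q, hq, hqp⟩ := hshadow b hb
    have hpq : p ≠ q := fun hpq => hp (by rw [hpq, hqp, hpq])
    have hp' : p ∈ periodicPts f := (hG _ (hAB b hb).1).1.1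
    have hne : f^[k + 1] p ≠ f^[k + 1] q := fun heq => hpq (eq_of_iterate_eq hp' hq.1 heq)
    have hbq : f^[k + 1] b ≠ f^[k + 1] q := fun heq => by
      rw [Function.iterate_succ_apply, Function.iterate_succ_apply, hqp] at heq
      have := (hAB b hb).2 a₀ ha₀
      have : e (f b) ≤ k := Nat.sInf_le heq
      lia
    calc ∑ a ∈ A, D a b ≤ D (f^[k + 1] p) (f^[k + 1] b) :=
          h.sum_le_iterate (fun a ha => iterate_eq_of_le (hk ▸ hmax a ha) (hee a (hAG ha)))
            fun heq => hpq ((IsShadow.unique ⟨hp', k + 1, heq⟩) hq)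
      _ ≤ 0 := h.nonpos_of_isShadow (hq.iterate _) hbq (iterate_mem_periodicPts hp' _) hne

lemma add_sum_le_apply (h : TailSystem f D N) (hp : f p = p) {A : Finset X}
    (hA : ∀ a ∈ A, f a = p ∧ a ≠ p) (hy : f y ≠ p) : D p y + ∑ a ∈ A, D a y ≤ D p (f y) := by
  rw [← Finset.sum_insert (f := (D · y)) fun hpA => (hA p hpA).2 rfl]
  exact h.sum_le_iterate (k := 1)
    ((Finset.forall_mem_insert _ _ _).2 ⟨hp, fun a ha => (hA a ha).1⟩) hy

lemma le_iterate (h : TailSystem f D N) (hp : f p = p) {k : ℕ} (hy : f^[k] y ≠ p) :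
    D p y ≤ D p (f^[k] y) := by
  simpa using h.sum_le_iterate (A := {p}) (z := p) (by simp [Function.iterate_fixed hp]) hy

lemma two_mul_le_apply (h : TailSystem f D N) (hp : f p = p) (hq : f q = p) (hqp : q ≠ p) {m : ℕ}
    (hm : 0 < m) (hy : f^[m] y = q) : 2 * D p y ≤ D p (f y) := by
  have hfy : f y ≠ p := fun hfy => hqp (hy ▸ iterate_eq_of_fixed hp (k := 1) hm hfy)
  have hle := h.le_of_fixed hp (hy ▸ hqp) (by rw [hy]; rintro rfl; exact hfy hq)
  have hadd := h.add_sum_le_apply hp (A := {q}) (by simp [hq, hqp]) hfy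
  rw [Finset.sum_singleton] at hadd
  rw [hy] at hle
  linarith [h.symm p y, h.symm q y]

lemma iterate_ne_and_le (h : TailSystem f D N) (hp : f p = p) (hqp : q ≠ p) {j m : ℕ}
    (hjm : j ≤ m) (hy : f^[m] y = q) : f^[j] y ≠ p ∧ D p (f^[j] y) ≤ D p q := by
  refine ⟨fun hjy => hqp (hy ▸ iterate_eq_of_fixed hp hjm hjy), ?_⟩
  rw [← Nat.sub_add_cancel hjm, Function.iterate_add_apply] at hy
  exact hy ▸ h.le_iterate hp (hy ▸ hqp)

lemma div_four_le_sub_sub (h : TailSystem f D N) (hp : f p = p) (hq : f q = p) (hqp : q ≠ p)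
    {m n : ℕ} {b b' : X} (hb : f^[m + 2] b = q) (hb' : f^[n + 2] b' = q) :
    D p q / 4 ≤ D p q - D p b - D q b' := by
  have hb'' : b' ≠ p := (h.iterate_ne_and_le hp hqp (Nat.zero_le _) hb').1
  have hadd := h.add_sum_le_apply hp (A := {q}) (by simp [hq, hqp])
    (h.iterate_ne_and_le hp hqp (j := 1) (by lia) hb').1
  rw [Finset.sum_singleton] at hadd
  have htwo : ∀ {y k}, f^[k + 2] y = q → 2 * D p (f y) ≤ D p q := fun {y k} hy =>
    (h.two_mul_le_apply hp hq hqp k.succ_pos hy).trans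
      (h.iterate_ne_and_le hp hqp (j := 2) (Nat.le_add_left 2 k) hy).2
  linarith [h.two_mul_le_apply hp hq hqp (by lia) hb, htwo hb, htwo hb', h.nonneg hb''.symm]

lemma card_lt_of_apply_eq (h : TailSystem f D N) (hp : f p = p) (hG : ∀ y ∈ G, f y = p ∧ y ≠ p)
    (hf : ∀ y ∈ G, y ∈ Set.range f) : G.card < 4 * N := by
  by_contra! hGN
  have hN := h.four_le
  obtain ⟨A, hAG, B, hA, hB, hAB⟩ :=
    exists_preimages_forall_le (fun y => -D p y) hf (n := 2 * N) (m := 2 * N) (by lia)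
  have hAne : A.Nonempty := Finset.card_pos.1 (by lia)
  obtain ⟨a₀, ha₀, hmin⟩ := Finset.exists_min_image A (D p) hAne
  set H := D p a₀
  have hfb : ∀ b ∈ B, D p (f b) ≤ H := fun b hb => neg_le_neg_iff.1 ((hAB b hb).2 a₀ ha₀)
  have hbp : ∀ b ∈ B, p ≠ b := fun b hb hpb => (hG _ (hAB b hb).1).2 (hpb ▸ hp)
  have hdisj : Disjoint A B := Finset.disjoint_left.2 fun b hbA hbB =>
    (hG _ (hAB b hbB).1).2 (hG b (hAG hbA)).1
  have hsum : ∀ b ∈ B, ∑ a ∈ A, D a b ≤ H := fun b hb => by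
    linarith [h.add_sum_le_apply hp (fun a ha => hG a (hAG ha)) (hG _ (hAB b hb).1).2,
      h.nonneg (hbp b hb), hfb b hb]
  rcases le_or_gt H 0 with hH | hH
  · exact h.not_unbalanced hdisj (by lia) (by lia) ⟨hsum, Or.inl hH⟩
  obtain ⟨q, hq, B', hBB, hcard, hqle⟩ := exists_subset_forall_le_div
    (fun a ha b hb => h.nonneg (Finset.disjoint_iff_ne.1 hdisj a ha b hb)) hAne (hA.trans hB.symm)
    hsum hH (show 0 < 4 by norm_num)
  refine h.not_unbalanced (hdisj.mono_right hBB) (by lia) (show N ≤ B'.card by lia)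
    ⟨fun b hb => hsum b (hBB hb), Or.inr ⟨p, q, (hG q (hAG hq)).2.symm,
      fun hpB => hbp p (hBB hpB) rfl, Finset.disjoint_left.1 (hdisj.mono_right hBB) hq,
      fun b hb b' hb' _ => ?_⟩⟩
  have hfb' := hG _ (hAB b (hBB hb)).1
  have htwo := h.two_mul_le_apply hp hfb'.1 hfb'.2 one_pos rfl
  push_cast at hqle
  linarith [hfb b (hBB hb), hmin q hq, hqle b' hb']

lemma card_lt_of_iterate_eq (h : TailSystem f D N) (hp : f p = p) (hq : f q = p) (hqp : q ≠ p)
    (hG : ∀ y ∈ G, ∃ m, 0 < m ∧ f^[m] y = q) (hf : ∀ y ∈ G, y ∈ Set.range f) :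
    G.card < 2 * N := by
  by_contra! hGN
  have hN := h.four_le
  have hunique : ∀ {y m n}, f^[m] y = q → f^[n] y = q → m ≤ n := fun {y m n} hm hn => by
    by_contra! hnm
    refine hqp (hm ▸ iterate_eq_of_fixed hp (k := n + 1) hnm ?_)
    rw [Function.iterate_succ_apply', hn, hq]
  have : Nonempty X := ⟨p⟩
  choose! m hmpos hm using hG
  obtain ⟨A, hAG, B, hA, hB, hAB⟩ := exists_preimages_forall_le m hf (n := N) (m := N) (by lia)
  obtain ⟨a₀, ha₀, hmax⟩ := Finset.exists_max_image A m (Finset.card_pos.1 (by lia))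
  have hbq : ∀ b ∈ B, f^[m (f b) + 1] b = q := fun b hb => hm _ (hAB b hb).1
  have hbq₂ : ∀ b ∈ B, ∃ n, f^[n + 2] b = q := fun b hb => by
    obtain ⟨n, hn⟩ := Nat.exists_eq_succ_of_ne_zero (hmpos _ (hAB b hb).1).ne'
    exact ⟨n, by rw [← hbq b hb, hn]⟩
  have hpow : ∀ n, 0 < n → f^[n] q = p := fun n hn => iterate_eq_of_fixed hp (k := 1) hn hq
  have hnot : ∀ n, f^[n + 1] q ≠ q ∧ f^[n] p ≠ q := fun n =>
    ⟨by rw [hpow _ n.succ_pos]; exact hqp.symm, by rw [Function.iterate_fixed hp]; exact hqp.symm⟩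
  refine h.not_unbalanced (H := D p q) (Finset.disjoint_left.2 fun b hbA hbB => ?_) hA.ge hB.ge
    ⟨fun b hb => ?_, Or.inr ⟨p, q, hqp.symm, fun hpB => (hnot _).2 (hbq p hpB),
      fun hqB => (hnot _).1 (hbq q hqB), fun b hb b' hb' _ => ?_⟩⟩
  · have := hunique (hbq b hbB) (hm b (hAG hbA))
    have := (hAB b hbB).2 b hbA
    lia
  · have hle := h.iterate_ne_and_le hp hqp (Nat.succ_le_succ ((hAB b hb).2 a₀ ha₀)) (hbq b hb)
    refine (h.sum_le_iterate (fun a ha => ?_) hle.1).trans hle.2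
    refine iterate_eq_of_fixed hp (Nat.succ_le_succ (hmax a ha)) ?_
    rw [Function.iterate_succ_apply', hm a (hAG ha), hq]
  · obtain ⟨n, hn⟩ := hbq₂ b hb
    obtain ⟨n', hn'⟩ := hbq₂ b' hb'
    exact h.div_four_le_sub_sub hp hq hqp hn hn'

lemma card_le_of_fixed (h : TailSystem f D N) (hp : f p = p)
    (hG : ∀ y ∈ G, y ≠ p ∧ ∃ k, f^[k] y = p) (hf : ∀ y ∈ G, y ∈ Set.range f) :
    G.card ≤ 4 * N + 2 * N * (4 * N) := by
  rw [← Finset.card_filter_add_card_filter_not (s := G) (f · = p)]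
  have : Nonempty X := ⟨p⟩
  have hlast : ∀ y ∈ G.filter (¬f · = p), ∃ m, f^[m + 1] y ≠ p ∧ f (f^[m + 1] y) = p :=
    fun y hy => by
      obtain ⟨hyG, hfy⟩ := Finset.mem_filter.1 hy
      obtain ⟨hyp, k, hk⟩ := hG y hyG
      obtain ⟨m, hm, hm'⟩ := exists_iterate_ne_apply_eq hyp hk
      rcases m with _ | m
      exacts [absurd hm' hfy, ⟨m, hm, hm'⟩]
  choose! m hne heq using hlast
  refine Nat.add_le_add (h.card_lt_of_apply_eq hp (fun y hy => ?_) fun y hy => ?_).le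
    ((Finset.card_le_mul_card_image (f := fun y => f^[m y + 1] y) _ (2 * N) fun q hq => ?_).trans
      (Nat.mul_le_mul_left _ (h.card_lt_of_apply_eq hp (fun q hq => ?_) fun q hq => ?_).le))
  · obtain ⟨hyG, hfy⟩ := Finset.mem_filter.1 hy
    exact ⟨hfy, (hG y hyG).1⟩
  · exact hf y (Finset.filter_subset _ _ hy)
  · obtain ⟨y₀, hy₀, rfl⟩ := Finset.mem_image.1 hq
    refine (h.card_lt_of_iterate_eq hp (heq y₀ hy₀) (hne y₀ hy₀) (fun y hy => ?_) fun y hy => ?_).le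
    · exact ⟨m y + 1, Nat.succ_pos _, (Finset.mem_filter.1 hy).2⟩
    · exact hf y (Finset.filter_subset _ _ (Finset.filter_subset _ _ hy))
  · obtain ⟨y, hy, rfl⟩ := Finset.mem_image.1 hq
    exact ⟨heq y hy, hne y hy⟩
  · obtain ⟨y, -, rfl⟩ := Finset.mem_image.1 hq
    exact ⟨f^[m y] y, (Function.iterate_succ_apply' f _ y).symm⟩

end ManyTails

lemma card_le_of_notMem_periodicPts (h : TailSystem f D N)
    (hper : ∀ A : Finset X, (∀ a ∈ A, a ∈ periodicPts f) → A.card ≤ 2 * N) {V : Finset X}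
    (hV : ∀ y ∈ V, y ∉ periodicPts f ∧ ∃ p, IsShadow f y p) (hf : ∀ y ∈ V, y ∈ Set.range f) :
    V.card ≤ (4 * N + 2 * N * (4 * N)) * (2 * N) := by
  rcases V.eq_empty_or_nonempty with rfl | ⟨y₀, -⟩
  · exact Nat.zero_le _
  have : Nonempty X := ⟨y₀⟩
  have hne : ∀ y ∈ V, ∀ p, IsShadow f y p → y ≠ p := fun y hy p hp hyp =>
    (hV y hy).1 (hyp ▸ hp.1)
  choose! shadow hshadow using fun y hy => (hV y hy).2
  refine (Finset.card_le_mul_card_image (f := shadow) V _ fun p _ => ?_).trans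
    (Nat.mul_le_mul_left _ (hper (V.image shadow) fun p hp => ?_))
  · have hG : ∀ y ∈ V.filter (shadow · = p), IsShadow f y p ∧ y ≠ p := fun y hy => by
      obtain ⟨hyV, rfl⟩ := Finset.mem_filter.1 hy
      exact ⟨hshadow y hyV, hne y hyV _ (hshadow y hyV)⟩
    have hf' : ∀ y ∈ V.filter (shadow · = p), y ∈ Set.range f := fun y hy =>
      hf y (Finset.filter_subset _ _ hy)
    by_cases hp : f p = p
    · refine h.card_le_of_fixed hp (fun y hy => ⟨(hG y hy).2, ?_⟩) hf'
      obtain ⟨k, hk⟩ := (hG y hy).1.2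
      exact ⟨k, hk.trans (Function.iterate_fixed hp k)⟩
    · have := h.card_lt_of_isShadow hp hG hf'
      lia
  · obtain ⟨y, hy, rfl⟩ := Finset.mem_image.1 hp
    exact (hshadow y hy).1

end TailSystem

end Tails

noncomputable section Zeros

section Dehomogenization

variable {K : Type*} [Field K] {d : ℕ} {F : MvPolynomial (Fin 2) K}

/-- The dehomogenization `F(X, 1)` of a binary form. -/
def dehomogenize (F : MvPolynomial (Fin 2) K) : Polynomial K :=
  aeval ![Polynomial.X, 1] F

lemma aeval_dehomogenize {A : Type*} [CommRing A] [Algebra K A] (t : A) :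
    Polynomial.aeval t (dehomogenize F) = aeval ![t, 1] F := by
  rw [dehomogenize, ← AlgHom.comp_apply, comp_aeval]
  congr 2
  exact funext (Fin.forall_fin_two.2 ⟨Polynomial.aeval_X t, map_one _⟩)

lemma eval_eq_pow_mul_eval_dehomogenize (hF : F.IsHomogeneous d) {u : Fin 2 → K} (hu : u 1 ≠ 0) :
    eval u F = u 1 ^ d * (dehomogenize F).eval (u 0 / u 1) := by
  simp only [← Polynomial.coe_aeval_eq_eval, aeval_dehomogenize, aeval_eq_eval, eval_eq',
    Fin.prod_univ_two, Finset.mul_sum]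
  refine Finset.sum_congr rfl fun m hm => ?_
  have hdeg : m 0 + m 1 = d := by
    have hm' := hF (mem_support_iff.1 hm)
    rw [Finsupp.weight_apply, Finsupp.sum_fintype _ _ (by simp)] at hm'
    simpa [Fin.sum_univ_two] using hm'
  simp only [Matrix.cons_val_zero, Matrix.cons_val_one, one_pow, mul_one, ← hdeg, pow_add, div_pow]
  field_simp

lemma natDegree_dehomogenize_le (hF : F.IsHomogeneous d) : (dehomogenize F).natDegree ≤ d := by
  refine (aeval_natDegree_le F hF.totalDegree_le _ fun i => ?_).trans_eq (mul_one d)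
  fin_cases i
  exacts [Polynomial.natDegree_X_le, (Polynomial.natDegree_one (R := K)).trans_le zero_le_one]

lemma eval_eq_zero_of_natDegree_dehomogenize_lt (hF : F.IsHomogeneous d)
    (h : (dehomogenize F).natDegree < d) : eval ![1, 0] F = 0 := by
  obtain ⟨n, rfl⟩ := Nat.exists_eq_add_of_lt h
  set p := dehomogenize F with hp
  have hfac : F = X 1 * p.homogenize (p.natDegree + n) := by
    refine (Polynomial.homogenize_eq_of_isHomogeneous hF hp.symm).symm.trans
      (Polynomial.homogenize_eq_of_isHomogeneous ?_ ?_)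
    · rw [add_comm _ 1]
      exact (isHomogeneous_X K 1).mul (Polynomial.isHomogeneous_homogenize p)
    · rw [map_mul, aeval_X, Matrix.cons_val_one, Matrix.cons_val_zero, one_mul,
        Polynomial.aeval_homogenize_X_one p (Nat.le_add_right _ n)]
  rw [hfac, map_mul, eval_X, Matrix.cons_val_one, Matrix.cons_val_zero, zero_mul]

end Dehomogenization

namespace P1Map

variable {K : Type*} [Field K] {d : ℕ} (φ : P1Map K d)

lemma isCoprime_dehomogenize : IsCoprime (dehomogenize φ.F) (dehomogenize φ.G) := by
  rw [Polynomial.isCoprime_iff_aeval_ne_zero_of_isAlgClosed (k := K) (AlgebraicClosure K)]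
  intro t
  simp only [aeval_dehomogenize]
  exact not_and_or.1 fun h => one_ne_zero (φ.coprime t 1 h.1 h.2).2

lemma one_lt_natDegree_dehomogenize (hd : 2 ≤ d) :
    1 < (dehomogenize φ.F).natDegree ∨ 1 < (dehomogenize φ.G).natDegree := by
  by_contra! h
  have hne : (![1, 0] : Fin 2 → K) ≠ 0 := fun h => one_ne_zero (congrFun h 0)
  refine φ.lift_ne_zero hne (funext (Fin.forall_fin_two.2 ⟨?_, ?_⟩))
  exacts [eval_eq_zero_of_natDegree_dehomogenize_lt φ.homF (h.1.trans_lt hd),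
    eval_eq_zero_of_natDegree_dehomogenize_lt φ.homG (h.2.trans_lt hd)]

lemma eq_zero_of_mul_dehomogenize_add_eq_zero (hd : 2 ≤ d) {α β : Polynomial K}
    (hα : α.natDegree ≤ 1) (hβ : β.natDegree ≤ 1)
    (h : α * dehomogenize φ.F + β * dehomogenize φ.G = 0) : α = 0 ∧ β = 0 := by
  have hcop := φ.isCoprime_dehomogenize
  generalize hF : dehomogenize φ.F = p at *
  generalize hG : dehomogenize φ.G = q at *
  have hdeg := φ.one_lt_natDegree_dehomogenize hd
  rw [hF, hG] at hdeg
  have hpβ : p ∣ β := hcop.dvd_of_dvd_mul_right ⟨-α, by linear_combination h⟩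
  have hqα : q ∣ α := hcop.symm.dvd_of_dvd_mul_right ⟨-β, by linear_combination h⟩
  rcases hdeg with hp | hq
  · have hβ₀ : β = 0 := Polynomial.eq_zero_of_dvd_of_natDegree_lt hpβ (hβ.trans_lt hp)
    rw [hβ₀, zero_mul, add_zero] at h
    exact ⟨(mul_eq_zero.1 h).resolve_right (Polynomial.ne_zero_of_natDegree_gt hp), hβ₀⟩
  · have hα₀ : α = 0 := Polynomial.eq_zero_of_dvd_of_natDegree_lt hqα (hα.trans_lt hq)
    rw [hα₀, zero_mul, zero_add] at h
    exact ⟨hα₀, (mul_eq_zero.1 h).resolve_right (Polynomial.ne_zero_of_natDegree_gt hq)⟩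

/-- The dehomogenization of the form `u ⬝ M φ(u)` of degree `d + 1`. -/
def bilinearPoly (M : Matrix (Fin 2) (Fin 2) K) : Polynomial K :=
  (Polynomial.C (M 0 0) * Polynomial.X + Polynomial.C (M 1 0)) * dehomogenize φ.F +
    (Polynomial.C (M 0 1) * Polynomial.X + Polynomial.C (M 1 1)) * dehomogenize φ.G

variable {φ} {M : Matrix (Fin 2) (Fin 2) K}

lemma bilinearPoly_ne_zero (hd : 2 ≤ d) (hM : M ≠ 0) : φ.bilinearPoly M ≠ 0 := by
  intro h
  obtain ⟨hα, hβ⟩ := φ.eq_zero_of_mul_dehomogenize_add_eq_zero hd Polynomial.natDegree_linear_le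
    Polynomial.natDegree_linear_le h
  have hcoeff : ∀ {a b : K}, Polynomial.C a * Polynomial.X + Polynomial.C b = 0 → a = 0 ∧ b = 0 :=
    fun {a b} h => ⟨by simpa [Polynomial.coeff_C] using congrArg (Polynomial.coeff · 1) h,
      by simpa using congrArg (Polynomial.coeff · 0) h⟩
  refine hM (Matrix.ext (Fin.forall_fin_two.2
    ⟨Fin.forall_fin_two.2 ⟨(hcoeff hα).1, (hcoeff hβ).1⟩,
      Fin.forall_fin_two.2 ⟨(hcoeff hα).2, (hcoeff hβ).2⟩⟩))

lemma natDegree_bilinearPoly_le : (φ.bilinearPoly M).natDegree ≤ 1 + d :=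
  Polynomial.natDegree_add_le_of_degree_le
    (Polynomial.natDegree_mul_le_of_le Polynomial.natDegree_linear_le
      (natDegree_dehomogenize_le φ.homF))
    (Polynomial.natDegree_mul_le_of_le Polynomial.natDegree_linear_le
      (natDegree_dehomogenize_le φ.homG))

lemma isRoot_bilinearPoly {u : Fin 2 → K} (hu : u 1 ≠ 0)
    (h : u ⬝ᵥ M.mulVec (φ.lift u) = 0) : (φ.bilinearPoly M).IsRoot (u 0 / u 1) := by
  simp only [lift, eval_eq_pow_mul_eval_dehomogenize φ.homF hu,
    eval_eq_pow_mul_eval_dehomogenize φ.homG hu, Matrix.mulVec, dotProduct, Fin.sum_univ_two,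
    Matrix.cons_val_zero, Matrix.cons_val_one] at h
  refine (mul_eq_zero.1 (?_ : u 1 ^ (d + 1) * _ = 0)).resolve_left (pow_ne_zero _ hu)
  rw [← h, bilinearPoly]
  simp only [Polynomial.eval_add, Polynomial.eval_mul, Polynomial.eval_C, Polynomial.eval_X,
    pow_succ]
  field_simp
  ring

lemma card_le_of_dotProduct_mulVec_lift_eq_zero (hd : 2 ≤ d) (hM : M ≠ 0) {S : Finset (P1 K)}
    (hS : ∀ x ∈ S, x.rep ⬝ᵥ M.mulVec (φ.lift x.rep) = 0) : S.card ≤ d + 2 := by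
  by_contra! hcard
  have hcard' := le_card_filter_rep_one_ne_zero (A := S) (n := d + 2) hcard
  set S' := S.filter fun P => P.rep 1 ≠ 0
  have hinj : Set.InjOn (fun P : P1 K => P.rep 0 / P.rep 1) S' := by
    intro P hP Q hQ h
    by_contra hPQ
    refine wedge_rep_ne_zero hPQ (sub_eq_zero.2 ?_)
    rwa [mul_comm (P.rep 1),
      ← div_eq_div_iff (Finset.mem_filter.1 hP).2 (Finset.mem_filter.1 hQ).2]
  have hroots : (S'.image fun P : P1 K => P.rep 0 / P.rep 1).val ⊆ (φ.bilinearPoly M).roots := by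
    intro t ht
    obtain ⟨P, hP, rfl⟩ := Finset.mem_image.1 (Finset.mem_def.2 ht)
    obtain ⟨hPS, hP₁⟩ := Finset.mem_filter.1 hP
    exact (Polynomial.mem_roots (bilinearPoly_ne_zero hd hM)).2
      (isRoot_bilinearPoly hP₁ (hS P hPS))
  have hle := Polynomial.card_le_degree_of_subset_roots hroots
  rw [Finset.card_image_of_injOn hinj] at hle
  have := natDegree_bilinearPoly_le (φ := φ) (M := M)
  lia

end P1Map

section WedgeVec

variable {K : Type*} [Field K] {d : ℕ} {φ : P1Map K d}

/-- The vector representing the linear form `u ∧ ·`. -/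
def wedgeVec (u : Fin 2 → K) : Fin 2 → K :=
  ![-u 1, u 0]

lemma wedgeVec_dotProduct (u w : Fin 2 → K) : wedgeVec u ⬝ᵥ w = wedge u w := by
  simp only [wedgeVec, wedge, dotProduct, Fin.sum_univ_two, Matrix.cons_val_zero,
    Matrix.cons_val_one, Matrix.cons_val_fin_one]
  ring

lemma wedgeVec_ne_zero {u : Fin 2 → K} (hu : u ≠ 0) : wedgeVec u ≠ 0 := fun h =>
  hu (funext (Fin.forall_fin_two.2 ⟨congrFun h 1, neg_eq_zero.1 (congrFun h 0)⟩))

lemma dotProduct_vecMulVec_wedgeVec_mulVec (p q x w : Fin 2 → K) :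
    x ⬝ᵥ (Matrix.vecMulVec (wedgeVec p) (wedgeVec q)).mulVec w = wedge p x * wedge q w := by
  rw [Matrix.vecMulVec_mulVec, dotProduct_smul, wedgeVec_dotProduct, dotProduct_comm,
    wedgeVec_dotProduct, op_smul_eq_mul]

lemma P1Map.exists_lift_rep_eq_smul (φ : P1Map K d) (x : P1 K) :
    ∃ c : K, c ≠ 0 ∧ φ.lift x.rep = c • (φ.toFun x).rep := by
  obtain ⟨c, hc, h⟩ := exists_eq_smul_rep_mk (φ.lift_ne_zero x.rep_nonzero)
  rw [← φ.toFun_mk x.rep_nonzero, x.mk_rep] at h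
  exact ⟨c, hc, h⟩

lemma P1Map.card_fibre_le (hd : 2 ≤ d) {z : P1 K} {S : Finset (P1 K)}
    (hS : ∀ x ∈ S, φ.toFun x = z) : S.card ≤ d + 2 := by
  have hM : Matrix.vecMulVec (wedgeVec z.rep) (wedgeVec z.rep) ≠ 0 :=
    Matrix.vecMulVec_ne_zero (wedgeVec_ne_zero z.rep_nonzero) (wedgeVec_ne_zero z.rep_nonzero)
  refine card_le_of_dotProduct_mulVec_lift_eq_zero (φ := φ) hd hM fun x hx => ?_
  obtain ⟨c, -, hc⟩ := φ.exists_lift_rep_eq_smul x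
  rw [dotProduct_vecMulVec_wedgeVec_mulVec, hc, hS x hx, wedge_smul_right, wedge_self, mul_zero,
    mul_zero]

end WedgeVec

end Zeros

noncomputable section PeriodicPoints

section CrossRatio

variable {K : Type*} [Field K] {f : AbsoluteValue K ℝ} {p p' q q' : Fin 2 → K}

/-- The cross ratio of two pairs of points, given by their homogeneous coordinates. -/
def crossRatio (p p' q q' : Fin 2 → K) : K :=
  wedge p p' * wedge q q' / (wedge p q * wedge p' q')

lemma one_sub_crossRatio (h : wedge p q ≠ 0) (h' : wedge p' q' ≠ 0) :
    1 - crossRatio p p' q q' = wedge p q' * wedge p' q / (wedge p q * wedge p' q') := by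
  rw [crossRatio, one_sub_div (mul_ne_zero h h'), wedge_mul_wedge_sub]

lemma abv_crossRatio_le {θ : ℝ} (h : wedge p q ≠ 0) (h' : wedge p' q' ≠ 0)
    (hle : f (wedge p p') * f (wedge q q') ≤ θ * (f (wedge p q) * f (wedge p' q'))) :
    f (crossRatio p p' q q') ≤ θ := by
  rwa [crossRatio, map_div₀, map_mul, map_mul, div_le_iff₀ (mul_pos (f.pos h) (f.pos h'))]

lemma abv_crossRatio_le_mul {θ : ℝ} (h : wedge p q ≠ 0) (h' : wedge p' q' ≠ 0)
    (hle : f (wedge p p') * f (wedge q' q) ≤ θ * (f (wedge p q') * f (wedge p' q))) :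
    f (crossRatio p p' q q') ≤ θ * f (1 - crossRatio p p' q q') := by
  rw [wedge_swap q' q, f.map_neg] at hle
  rw [one_sub_crossRatio h h', crossRatio, map_div₀, map_div₀, ← mul_div_assoc, map_mul f,
    map_mul f (wedge p q')]
  exact div_le_div_of_nonneg_right hle (f.nonneg _)

variable {d : ℕ} {φ : P1Map K d} {a a' b b' : P1 K}

lemma log_abv_one_sub_crossRatio (hab : a ≠ b) (hab' : a ≠ b') (ha'b : a' ≠ b) (ha'b' : a' ≠ b') :
    Real.log (f (1 - crossRatio a.rep a'.rep b.rep b'.rep)) =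
      pointLogDist f a b + pointLogDist f a' b' - pointLogDist f a b' - pointLogDist f a' b := by
  have w := f.pos (wedge_rep_ne_zero hab)
  have w' := f.pos (wedge_rep_ne_zero ha'b')
  have z := f.pos (wedge_rep_ne_zero hab')
  have z' := f.pos (wedge_rep_ne_zero ha'b)
  rw [one_sub_crossRatio (wedge_rep_ne_zero hab) (wedge_rep_ne_zero ha'b'), map_div₀, map_mul,
    map_mul, Real.log_div (mul_pos z z').ne' (mul_pos w w').ne', Real.log_mul z.ne' z'.ne',
    Real.log_mul w.ne' w'.ne']
  simp only [pointLogDist, vecLogDist]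
  ring

lemma one_sub_crossRatio_rep_ne_zero (hab : a ≠ b) (hab' : a ≠ b') (ha'b : a' ≠ b)
    (ha'b' : a' ≠ b') : 1 - crossRatio a.rep a'.rep b.rep b'.rep ≠ 0 := by
  rw [one_sub_crossRatio (wedge_rep_ne_zero hab) (wedge_rep_ne_zero ha'b')]
  exact div_ne_zero (mul_ne_zero (wedge_rep_ne_zero hab') (wedge_rep_ne_zero ha'b))
    (mul_ne_zero (wedge_rep_ne_zero hab) (wedge_rep_ne_zero ha'b'))

lemma HasGoodLift.abv_one_sub_crossRatio_toFun (hφ : HasGoodLift f φ) (hf : IsNonarchimedean f)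
    (ha : a ∈ Function.periodicPts φ.toFun) (ha' : a' ∈ Function.periodicPts φ.toFun)
    (hb : b ∈ Function.periodicPts φ.toFun) (hb' : b' ∈ Function.periodicPts φ.toFun)
    (hab : a ≠ b) (hab' : a ≠ b') (ha'b : a' ≠ b) (ha'b' : a' ≠ b') :
    f (1 - crossRatio (φ.toFun a).rep (φ.toFun a').rep (φ.toFun b).rep (φ.toFun b').rep) =
      f (1 - crossRatio a.rep a'.rep b.rep b'.rep) := by
  have hinj := (Function.bijOn_periodicPts φ.toFun).injOn
  have hφab := hinj.ne ha hb hab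
  have hφab' := hinj.ne ha hb' hab'
  have hφa'b := hinj.ne ha' hb ha'b
  have hφa'b' := hinj.ne ha' hb' ha'b'
  refine Real.log_injOn_pos
    (f.pos (one_sub_crossRatio_rep_ne_zero hφab hφab' hφa'b hφa'b'))
    (f.pos (one_sub_crossRatio_rep_ne_zero hab hab' ha'b ha'b')) ?_
  rw [log_abv_one_sub_crossRatio hφab hφab' hφa'b hφa'b',
    log_abv_one_sub_crossRatio hab hab' ha'b ha'b', hφ.pointLogDist_toFun hf ha hb hab,
    hφ.pointLogDist_toFun hf ha' hb' ha'b', hφ.pointLogDist_toFun hf ha hb' hab',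
    hφ.pointLogDist_toFun hf ha' hb ha'b]

end CrossRatio

section AbsoluteValue

variable {K : Type*} [Field K] {f : AbsoluteValue K ℝ} {y y' : K}

lemma abv_sub_le_max (hf : IsNonarchimedean f) (y y' : K) : f (y - y') ≤ max (f y) (f y') := by
  simpa only [sub_eq_add_neg, f.map_neg] using hf y (-y')

lemma abv_sub_lt_abv_one_sub (h : f y ≤ 1 / 4) (h' : f y' ≤ 1 / 4) :
    f (y - y') < f (1 - y) := by
  have hsub := f.sub_le y 0 y'
  have hone := f.add_le y (1 - y)
  rw [sub_zero, zero_sub, f.map_neg] at hsub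
  rw [add_sub_cancel, map_one] at hone
  linarith

lemma abv_sub_le_abv_one_sub (hf : IsNonarchimedean f) (h : f y ≤ 1)
    (h' : f y' ≤ 1) (hle : f y ≤ f (1 - y)) : f (y - y') ≤ f (1 - y) := by
  have hone := hf y (1 - y)
  rw [add_sub_cancel, map_one, max_eq_right hle] at hone
  exact ((abv_sub_le_max hf y y').trans (max_le h h')).trans hone

end AbsoluteValue

section Rigidity

variable {K : Type*} [Field K] [NumberField K] {T : Finset (HeightOneSpectrum (𝓞 K))} {x y y' : K}

lemma eq_zero_of_forall_abv_le_one (hT : ∀ v ∉ T, adicAbv K v x ≤ 1)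
    (hS : ∀ v : SPlace K T, v.abv x ≤ 1) (hlt : ∃ v : SPlace K T, v.abv x < 1) : x = 0 := by
  by_contra hx
  obtain ⟨w, hw⟩ := hlt
  have hoff : 0 ≤ -logAbvOff T x := by
    rw [logAbvOff, ← finsum_neg_distrib]
    exact finsum_nonneg fun v =>
      neg_nonneg.2 (Real.log_nonpos (AbsoluteValue.nonneg _ _) (hT v.1 v.2))
  refine (hoff.trans_eq (sum_mult_mul_log_abv hx).symm).not_gt (Finset.sum_neg' (fun v _ => ?_)
    ⟨w, Finset.mem_univ w, ?_⟩)
  · exact mul_nonpos_of_nonneg_of_nonpos (Nat.cast_nonneg _)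
      (Real.log_nonpos (v.abv.nonneg _) (hS v))
  · exact mul_neg_of_pos_of_neg (Nat.cast_pos.2 w.one_le_mult)
      (Real.log_neg (w.abv.pos hx) hw)

lemma eq_of_abv_le_sepConst (hy₁ : 1 - y ≠ 0) (hy : ∀ v : SPlace K T, v.abv y ≤ v.sepConst)
    (hy' : ∀ v : SPlace K T, v.abv y' ≤ v.sepConst)
    (hle : ∀ v : SPlace K T, v.abv y ≤ v.sepConst * v.abv (1 - y))
    (hT : ∀ v ∉ T, adicAbv K v (1 - y') = adicAbv K v (1 - y)) : y = y' := by
  have hlt : ∀ w : InfinitePlace K, SPlace.abv (Sum.inl w : SPlace K T) ((y - y') / (1 - y)) < 1 :=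
    fun w => by
      rw [map_div₀, div_lt_one (AbsoluteValue.pos _ hy₁)]
      exact abv_sub_lt_abv_one_sub (hy (Sum.inl w)) (hy' (Sum.inl w))
  refine sub_eq_zero.1 ((div_eq_zero_iff.1 (eq_zero_of_forall_abv_le_one (T := T) ?_ ?_ ?_)
    ).resolve_right hy₁)
  · intro v hv
    rw [map_div₀, div_le_one ((adicAbv K v).pos hy₁), ← sub_sub_sub_cancel_left y' y 1]
    exact (abv_sub_le_max (isNonarchimedean_adicAbv K v) _ _).trans_eq
      (by rw [hT v hv, max_self])
  · rintro (w | v)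
    · exact (hlt w).le
    · rw [map_div₀, div_le_one (AbsoluteValue.pos _ hy₁)]
      exact abv_sub_le_abv_one_sub (isNonarchimedean_adicAbv K v.1) (hy (Sum.inr v))
        (hy' (Sum.inr v)) ((hle (Sum.inr v)).trans_eq (one_mul _))
  · obtain ⟨w⟩ : Nonempty (InfinitePlace K) := inferInstance
    exact ⟨_, hlt w⟩

end Rigidity

section Normalization

variable {K : Type*} [Field K] {d : ℕ} {φ : P1Map K d}

lemma exists_subset_rep_one_ne_zero {Z : Finset (P1 K)}
    (hZ : ∀ x ∈ Z, x ∈ Function.periodicPts φ.toFun) {n : ℕ} (hn : n + 2 ≤ Z.card) :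
    ∃ Z' ⊆ Z, n ≤ Z'.card ∧ ∀ x ∈ Z', x.rep 1 ≠ 0 ∧ (φ.toFun x).rep 1 ≠ 0 := by
  have hinj : Set.InjOn φ.toFun (Z.filter fun P => P.rep 1 ≠ 0) := fun x hx y hy =>
    (Function.bijOn_periodicPts φ.toFun).injOn (hZ x (Finset.mem_filter.1 hx).1)
      (hZ y (Finset.mem_filter.1 hy).1)
  have hcard := le_card_filter_rep_one_ne_zero (n := n + 1) hn
  rw [← Finset.card_image_of_injOn hinj] at hcard
  have hcard' := le_card_filter_rep_one_ne_zero hcard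
  rw [Finset.filter_image] at hcard'
  refine ⟨(Z.filter fun P => P.rep 1 ≠ 0).filter fun P => (φ.toFun P).rep 1 ≠ 0,
    (Finset.filter_subset _ _).trans (Finset.filter_subset _ _),
    hcard'.trans Finset.card_image_le, fun x hx => ?_⟩
  obtain ⟨hx, hφx⟩ := Finset.mem_filter.1 hx
  exact ⟨(Finset.mem_filter.1 hx).2, hφx⟩

end Normalization

section Bound

variable {K : Type*} [Field K] [NumberField K] {T : Finset (HeightOneSpectrum (𝓞 K))} {d : ℕ}
  {φ : P1Map K d}

namespace GoodReductionOutside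

variable {A B : Finset (P1 K)} (hφ : GoodReductionOutside φ T) (hAB : Disjoint A B)
  (hA : ∀ a ∈ A, a ∈ Function.periodicPts φ.toFun)
  (hB : ∀ b ∈ B, b ∈ Function.periodicPts φ.toFun)
  (hsep : SeparatedOn T Projectivization.rep A B)
  (hsep' : SeparatedOn T (fun P => (φ.toFun P).rep) A B)

include hφ hAB hA hB hsep hsep'

lemma crossRatio_toFun_eq {a a' b b' : P1 K} (ha : a ∈ A) (ha' : a' ∈ A) (hb : b ∈ B)
    (hb' : b' ∈ B) : crossRatio a.rep a'.rep b.rep b'.rep =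
      crossRatio (φ.toFun a).rep (φ.toFun a').rep (φ.toFun b).rep (φ.toFun b').rep := by
  have hne := Finset.disjoint_iff_ne.1 hAB
  have hw : ∀ x ∈ A, ∀ y ∈ B, wedge x.rep y.rep ≠ 0 := fun x hx y hy =>
    wedge_rep_ne_zero (hne x hx y hy)
  have hw' : ∀ x ∈ A, ∀ y ∈ B, wedge (φ.toFun x).rep (φ.toFun y).rep ≠ 0 := fun x hx y hy =>
    wedge_rep_ne_zero ((Function.bijOn_periodicPts φ.toFun).injOn.ne (hA x hx) (hB y hy)
      (hne x hx y hy))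
  refine eq_of_abv_le_sepConst (T := T) (one_sub_crossRatio_rep_ne_zero (hne a ha b hb)
    (hne a ha b' hb') (hne a' ha' b hb) (hne a' ha' b' hb')) (fun v => ?_) (fun v => ?_)
    (fun v => ?_) fun v hv => ?_
  · obtain ⟨-, -, -, -, hcross⟩ := hsep v
    exact abv_crossRatio_le (hw a ha b hb) (hw a' ha' b' hb') (hcross a ha a' ha' b hb b' hb')
  · obtain ⟨-, -, -, -, hcross⟩ := hsep' v
    exact abv_crossRatio_le (hw' a ha b hb) (hw' a' ha' b' hb') (hcross a ha a' ha' b hb b' hb')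
  · obtain ⟨-, -, -, -, hcross⟩ := hsep v
    exact abv_crossRatio_le_mul (hw a ha b hb) (hw a' ha' b' hb') (hcross a ha a' ha' b' hb' b hb)
  · exact (hφ v hv).hasGoodLift.abv_one_sub_crossRatio_toFun (isNonarchimedean_adicAbv K v)
      (hA a ha) (hA a' ha') (hB b hb) (hB b' hb') (hne a ha b hb) (hne a ha b' hb')
      (hne a' ha' b hb) (hne a' ha' b' hb')

lemma card_le_of_separatedOn (hd : 2 ≤ d) (hcA : 1 < A.card) : B.card ≤ d + 2 := by
  obtain rfl | ⟨b, hb⟩ := B.eq_empty_or_nonempty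
  · exact zero_le
  obtain ⟨a, ha, a', ha', haa'⟩ := Finset.one_lt_card.1 hcA
  have hne := Finset.disjoint_iff_ne.1 hAB
  have hw : ∀ x ∈ A, ∀ y ∈ B, wedge x.rep y.rep ≠ 0 := fun x hx y hy =>
    wedge_rep_ne_zero (hne x hx y hy)
  have hw' : ∀ x ∈ A, ∀ y ∈ B, wedge (φ.toFun x).rep (φ.toFun y).rep ≠ 0 := fun x hx y hy =>
    wedge_rep_ne_zero ((Function.bijOn_periodicPts φ.toFun).injOn.ne (hA x hx) (hB y hy)
      (hne x hx y hy))
  -- The equality of the cross ratios of `a, a', b, x` and of their images is `x ⬝ M φ(x) = 0`.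
  let M := (wedge a.rep a'.rep * wedge (φ.toFun a).rep (φ.toFun b).rep) •
      Matrix.vecMulVec (wedgeVec b.rep) (wedgeVec (φ.toFun a').rep) -
    (wedge (φ.toFun a).rep (φ.toFun a').rep * wedge a.rep b.rep) •
      Matrix.vecMulVec (wedgeVec a'.rep) (wedgeVec (φ.toFun b).rep)
  have hM : ∀ x w, x ⬝ᵥ M.mulVec w =
      wedge a.rep a'.rep * wedge (φ.toFun a).rep (φ.toFun b).rep *
        (wedge b.rep x * wedge (φ.toFun a').rep w) -
      wedge (φ.toFun a).rep (φ.toFun a').rep * wedge a.rep b.rep *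
        (wedge a'.rep x * wedge (φ.toFun b).rep w) := fun x w => by
    simp only [M, Matrix.sub_mulVec, Matrix.smul_mulVec, dotProduct_sub, dotProduct_smul,
      dotProduct_vecMulVec_wedgeVec_mulVec, smul_eq_mul]
  have hM₀ : M ≠ 0 := by
    intro h
    have heval := hM a.rep (φ.toFun b).rep
    rw [h, Matrix.zero_mulVec, dotProduct_zero, wedge_self, mul_zero, mul_zero, sub_zero,
      wedge_swap b.rep] at heval
    exact mul_ne_zero (mul_ne_zero (wedge_rep_ne_zero haa') (hw' a ha b hb))
      (mul_ne_zero (neg_ne_zero.2 (hw a ha b hb)) (hw' a' ha' b hb)) heval.symm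
  refine P1Map.card_le_of_dotProduct_mulVec_lift_eq_zero (φ := φ) hd hM₀ fun x hx => ?_
  obtain ⟨c, -, hc⟩ := φ.exists_lift_rep_eq_smul x
  have hcross := crossRatio_toFun_eq hφ hAB hA hB hsep hsep' ha ha' hb hx
  rw [crossRatio, crossRatio, div_eq_div_iff (mul_ne_zero (hw a ha b hb) (hw a' ha' x hx))
    (mul_ne_zero (hw' a ha b hb) (hw' a' ha' x hx))] at hcross
  rw [hM, hc, wedge_smul_right, wedge_smul_right]
  linear_combination c * hcross

end GoodReductionOutside

lemma GoodReductionOutside.card_periodic_le (hφ : GoodReductionOutside φ T) (hd : 2 ≤ d)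
    {Z : Finset (P1 K)} (hZ : ∀ x ∈ Z, x ∈ Function.periodicPts φ.toFun) :
    Z.card ≤ 2 * ((10 ^ 7) ^ sCard K T * ((10 ^ 7) ^ sCard K T * (d + 3))) + 1 := by
  by_contra! hcard
  obtain ⟨Z', hZ', hcard', hrep⟩ := exists_subset_rep_one_ne_zero hZ hcard
  obtain ⟨A, hA, hcA⟩ := Finset.exists_subset_card_eq ((Nat.le_mul_of_pos_left _ two_pos).trans
    hcard')
  have hcB : (10 ^ 7) ^ sCard K T * ((10 ^ 7) ^ sCard K T * (d + 3)) ≤ (Z' \ A).card := by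
    rw [Finset.card_sdiff_of_subset hA]
    lia
  have hper : ∀ x ∈ Z', x ∈ Function.periodicPts φ.toFun := fun x hx => hZ x (hZ' hx)
  have hinj : ∀ x ∈ Z', ∀ y ∈ Z', wedge (φ.toFun x).rep (φ.toFun y).rep = 0 → x = y :=
    fun x hx y hy h => (Function.bijOn_periodicPts φ.toFun).injOn (hper x hx) (hper y hy)
      (not_ne_iff.1 fun hne => wedge_rep_ne_zero hne h)
  obtain ⟨A₁, hA₁, B₁, hB₁, hcA₁, hcB₁, hsep₁⟩ := exists_separatedOn (T := T)
    (vec := Projectivization.rep) (fun x hx => (hrep x (hA hx)).1)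
    (fun x hx => (hrep x (Finset.sdiff_subset hx)).1)
    (fun x _ y _ h => not_ne_iff.1 fun hne => wedge_rep_ne_zero hne h) hcA.ge hcB
  replace hA := hA₁.trans hA
  have hB := hB₁.trans Finset.sdiff_subset
  obtain ⟨A₂, hA₂, B₂, hB₂, hcA₂, hcB₂, hsep₂⟩ := exists_separatedOn (T := T)
    (vec := fun P => (φ.toFun P).rep) (fun x hx => (hrep x (hA hx)).2)
    (fun x hx => (hrep x (hB hx)).2) (fun x hx y hy => hinj x (hA hx) y (hA hy)) hcA₁ hcB₁
  have hdisj : Disjoint A₂ B₂ := Finset.disjoint_sdiff.mono (hA₂.trans hA₁) (hB₂.trans hB₁)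
  have hle := hφ.card_le_of_separatedOn hdisj (fun x hx => hper x (hA (hA₂ hx)))
    (fun x hx => hper x (hB (hB₂ hx))) (hsep₁.mono hA₂ hB₂) hsep₂ hd (by lia)
  lia

end Bound

end PeriodicPoints

noncomputable section Counting

section Estimates

variable {s d n : ℕ}

lemma separationBound_le (hs : 1 ≤ s) : separationBound s ≤ (10 ^ s) ^ 11 := by
  have h10 : 10 ^ 1 ≤ 10 ^ s := Nat.pow_le_pow_right (by norm_num) hs
  have hs' : s ≤ 10 ^ s := (Nat.lt_pow_self (by norm_num)).le
  rw [separationBound, ← pow_mul, mul_comm 7 s, pow_mul]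
  generalize 10 ^ s = x at *
  calc x ^ 7 * (200 * s) + 1 ≤ x ^ 7 * (200 * x) + x ^ 7 * x := by
        gcongr
        exact Nat.mul_pos (pow_pos (by lia) 7) (by lia)
    _ = 201 * x ^ 8 := by ring
    _ ≤ 10 ^ 3 * x ^ 8 := by gcongr; norm_num
    _ ≤ x ^ 3 * x ^ 8 := by gcongr; exact h10
    _ = x ^ 11 := by ring

lemma four_le_separationBound (hs : 1 ≤ s) : 4 ≤ separationBound s := by
  rw [separationBound]
  have := Nat.mul_le_mul (Nat.one_le_pow s (10 ^ 7) (by norm_num)) (Nat.mul_le_mul_left 200 hs)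
  lia

lemma periodicBound_add_tailBound_le (hs : 1 ≤ s) :
    2 * ((10 ^ 7) ^ s * ((10 ^ 7) ^ s * (d + 3))) + 1 + 2 * separationBound s ≤
      (d + 2) * (10 ^ s) ^ 35 := by
  have h10 : 10 ^ 1 ≤ 10 ^ s := Nat.pow_le_pow_right (by norm_num) hs
  have hN := separationBound_le hs
  rw [← pow_mul, mul_comm 7 s, pow_mul]
  generalize separationBound s = N at *
  generalize 10 ^ s = x at *
  have h₁ : 1 ≤ x ^ 33 := Nat.one_le_pow _ _ (by lia)
  have h₁₁ : x ^ 11 ≤ x ^ 33 := Nat.pow_le_pow_right (by lia) (by norm_num)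
  have h₁₄ : x ^ 14 ≤ x ^ 33 := Nat.pow_le_pow_right (by lia) (by norm_num)
  calc 2 * (x ^ 7 * (x ^ 7 * (d + 3))) + 1 + 2 * N
      = 2 * (x ^ 14 * (d + 3)) + 1 + 2 * N := by ring
    _ ≤ 2 * (x ^ 33 * (d + 3)) + x ^ 33 + 2 * x ^ 33 := by gcongr; exact hN.trans h₁₁
    _ ≤ (d + 2) * (10 ^ 2 * x ^ 33) := by nlinarith
    _ ≤ (d + 2) * (x ^ 2 * x ^ 33) := by gcongr; exact h10
    _ = (d + 2) * x ^ 35 := by ring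

lemma shadowBound_le (hs : 1 ≤ s) :
    2 * separationBound s + (4 * separationBound s + 2 * separationBound s *
      (4 * separationBound s)) * (2 * separationBound s) ≤ (10 ^ s) ^ 35 := by
  have h10 : 10 ^ 1 ≤ 10 ^ s := Nat.pow_le_pow_right (by norm_num) hs
  have h₄ := four_le_separationBound hs
  have hN := separationBound_le hs
  generalize separationBound s = N at *
  generalize 10 ^ s = x at *
  have h₁ : N ≤ N ^ 3 := Nat.le_self_pow (by norm_num) _
  have h₂ : N ^ 2 ≤ N ^ 3 := Nat.pow_le_pow_right (by lia) (by norm_num)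
  calc 2 * N + (4 * N + 2 * N * (4 * N)) * (2 * N)
      = 2 * N + 8 * N ^ 2 + 16 * N ^ 3 := by ring
    _ ≤ 10 ^ 2 * N ^ 3 := by lia
    _ ≤ x ^ 2 * (x ^ 11) ^ 3 := by gcongr; exact h10
    _ = x ^ 35 := by ring

lemma ten_pow_le_Cconst (hs : 1 ≤ s) : (10 : ℝ) ^ (70 * s) ≤ Cconst 5 s := by
  have hexp : (10 : ℝ) ≤ Real.exp 3 := by
    calc (10 : ℝ) ≤ 2.7 ^ 3 := by norm_num
      _ ≤ Real.exp 1 ^ 3 := by gcongr; linarith [Real.exp_one_gt_d9]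
      _ = Real.exp 3 := by rw [← Real.exp_nat_mul]; norm_num
  have hs' : (1 : ℝ) ≤ s := mod_cast hs
  calc (10 : ℝ) ^ (70 * s) ≤ Real.exp 3 ^ (70 * s) := by gcongr
    _ = Real.exp ((70 * s : ℕ) * 3) := by rw [← Real.exp_nat_mul]
    _ ≤ Real.exp ((6 * (5 : ℕ) : ℝ) ^ (3 * 5) * ((5 : ℕ) * s + 1 - (5 : ℕ))) := by
      refine Real.exp_le_exp.2 ?_
      push_cast
      norm_num
      linarith

lemma Cconst_le_CVconst : Cconst 5 s ≤ CVconst d s := by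
  have hC : 0 ≤ Cconst 3 s := (Real.exp_pos _).le
  have hd : (0 : ℝ) ≤ (3 * (Bconst s : ℝ) + 13) * d := by positivity
  rw [CVconst]
  linarith

lemma sq_add_two_le_L1const (hs : 1 ≤ s) (hd : 2 ≤ d) :
    (d + 2) * (d + 2) ≤ 3 * L1const d s + 3 := by
  have hB : 2 ^ 16 ≤ Bconst s := Nat.pow_le_pow_right two_pos (by lia)
  obtain ⟨e, rfl⟩ := Nat.exists_eq_add_of_le hd
  have hL : (e + 1) * (1 + (2 + e) * 16) ≤ (e + 1) * (1 + (2 + e) * (1 + Bconst s)) := by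
    gcongr
    lia
  rw [L1const, show 2 + e - 1 = e + 1 by lia]
  nlinarith

/-- Either `d + 2` is at most the power of ten, and the exponential constant `C(5, s)` wins, or the
bound is at most `(d + 2) ^ 2`, and the quadratic one does. -/
lemma le_max_CVconst_L1const (hs : 1 ≤ s) (hd : 2 ≤ d) (hn : n ≤ (d + 2) * (10 ^ s) ^ 35) :
    (n : ℝ) ≤ max ((12 * 7 ^ (4 * s) : ℝ) + CVconst d s) (3 * (L1const d s : ℝ) + 3) := by
  rcases le_or_gt (d + 2) ((10 ^ s) ^ 35) with hle | hlt
  · have hpow : n ≤ 10 ^ (70 * s) := by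
      calc n ≤ (10 ^ s) ^ 35 * (10 ^ s) ^ 35 := hn.trans (Nat.mul_le_mul_right _ hle)
        _ = 10 ^ (70 * s) := by ring
    have hn' : (n : ℝ) ≤ CVconst d s := by
      calc (n : ℝ) ≤ 10 ^ (70 * s) := mod_cast hpow
        _ ≤ CVconst d s := (ten_pow_le_Cconst hs).trans Cconst_le_CVconst
    exact le_max_of_le_left (hn'.trans (le_add_of_nonneg_left (by positivity)))
  · refine le_max_of_le_right ?_
    exact_mod_cast (hn.trans (Nat.mul_le_mul_left _ hlt.le)).trans (sq_add_two_le_L1const hs hd)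

end Estimates

namespace GoodReductionOutside

variable {K : Type*} [Field K] [NumberField K] {T : Finset (HeightOneSpectrum (𝓞 K))} {d : ℕ}
  {φ : P1Map K d} {Z : Finset (P1 K)}

lemma tailSystem (hφ : GoodReductionOutside φ T) :
    TailSystem φ.toFun (logDistOff T) (separationBound (sCard K T)) where
  nonneg _ _ h := logDistOff_nonneg h
  symm := logDistOff_comm
  sum_le_iterate _ _ _ _ hS hY := hφ.sum_logDistOff_iterate_le hS hY
  le_of_fixed _ _ _ hP h h' := hφ.logDistOff_fixed_le hP h h'
  not_unbalanced _ _ _ hAB hA hB := not_unbalanced hAB hA hB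
  four_le := four_le_separationBound sCard_pos

lemma card_le_of_two_mul_le (hφ : GoodReductionOutside φ T) (hd : 2 ≤ d) {A : Finset (P1 K)}
    (hA : ∀ a ∈ A, a ∈ Function.periodicPts φ.toFun)
    (hcA : 2 * separationBound (sCard K T) ≤ A.card)
    (hZ : ∀ y ∈ Z, ∃ m, φ.toFun^[m] y ∈ Function.periodicPts φ.toFun) :
    Z.card ≤ (d + 2) * (10 ^ sCard K T) ^ 35 := by
  have hper := hφ.card_periodic_le hd (Z := Z.filter (· ∈ Function.periodicPts φ.toFun))
    fun y hy => (Finset.mem_filter.1 hy).2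
  have htail := hφ.tailSystem.card_lt_of_two_mul_le hA hcA
    (B := Z.filter (· ∉ Function.periodicPts φ.toFun)) fun y hy =>
      ⟨(Finset.mem_filter.1 hy).2,
        (hZ y (Finset.mem_filter.1 hy).1).elim fun _ => exists_isShadow⟩
  rw [← Finset.card_filter_add_card_filter_not (s := Z) (· ∈ Function.periodicPts φ.toFun)]
  exact (add_le_add hper htail.le).trans (periodicBound_add_tailBound_le sCard_pos)

lemma card_le_of_card_periodic_le (hφ : GoodReductionOutside φ T) (hd : 2 ≤ d)
    (hper : ∀ A : Finset (P1 K), (∀ a ∈ A, a ∈ Function.periodicPts φ.toFun) →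
      A.card ≤ 2 * separationBound (sCard K T))
    (hZ : ∀ y ∈ Z, ∃ m, φ.toFun^[m] y ∈ Function.periodicPts φ.toFun) :
    Z.card ≤ (d + 2) * (10 ^ sCard K T) ^ 35 := by
  have hfibre : Z.card ≤ (d + 2) * (Z.image φ.toFun).card :=
    Finset.card_le_mul_card_image _ _ fun _ _ =>
      φ.card_fibre_le hd fun _ hx => (Finset.mem_filter.1 hx).2
  have htail := hφ.tailSystem.card_le_of_notMem_periodicPts hper
    (V := (Z.image φ.toFun).filter (· ∉ Function.periodicPts φ.toFun))
    (fun y hy => by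
      obtain ⟨hy, hy'⟩ := Finset.mem_filter.1 hy
      obtain ⟨z, hz, rfl⟩ := Finset.mem_image.1 hy
      obtain ⟨m, hm⟩ := hZ z hz
      refine ⟨hy', exists_isShadow (m := m) ?_⟩
      rw [← Function.iterate_succ_apply, Function.iterate_succ_apply']
      exact (Function.bijOn_periodicPts φ.toFun).mapsTo hm)
    fun y hy => by
      obtain ⟨z, -, rfl⟩ := Finset.mem_image.1 (Finset.mem_filter.1 hy).1
      exact Set.mem_range_self z
  refine hfibre.trans (Nat.mul_le_mul_left _ ?_)
  rw [← Finset.card_filter_add_card_filter_not (s := Z.image φ.toFun)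
    (· ∈ Function.periodicPts φ.toFun)]
  exact (add_le_add (hper _ fun y hy => (Finset.mem_filter.1 hy).2) htail).trans
    (shadowBound_le sCard_pos)

lemma card_preperiodic_le (hφ : GoodReductionOutside φ T) (hd : 2 ≤ d)
    (hZ : ∀ y ∈ Z, ∃ m, φ.toFun^[m] y ∈ Function.periodicPts φ.toFun) :
    Z.card ≤ (d + 2) * (10 ^ sCard K T) ^ 35 := by
  by_cases hper : ∃ A : Finset (P1 K), (∀ a ∈ A, a ∈ Function.periodicPts φ.toFun) ∧
      2 * separationBound (sCard K T) ≤ A.card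
  · obtain ⟨A, hA, hcA⟩ := hper
    exact hφ.card_le_of_two_mul_le hd hA hcA hZ
  · push Not at hper
    exact hφ.card_le_of_card_periodic_le hd (fun A hA => (hper A hA).le) hZ

end GoodReductionOutside

end Counting

/-- **Theorem (quadratic bound on preperiodic points).**
If `φ : ℙ¹ → ℙ¹` of degree `d ≥ 2` is defined over a number field `K` and has good reduction
outside a finite set `S` of places of `K` containing all archimedean ones, then
`|PrePer(φ,K)| ≤ max{T(|S|) + CV(d,|S|), 3·L₁(d,|S|) + 3}`, a quadratic polynomial in `d`
whose coefficients depend only on `|S|`. -/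
theorem preper_bound_quadratic
    {K : Type*} [Field K] [NumberField K]
    (T : Finset (HeightOneSpectrum (𝓞 K))) {d : ℕ} (hd : 2 ≤ d)
    (φ : P1Map K d) (hgr : GoodReductionOutside φ T) :
    {P : P1 K | IsPreperiodicPoint φ P}.Finite ∧
      ({P : P1 K | IsPreperiodicPoint φ P}.ncard : ℝ) ≤
        max ((12 * 7 ^ (4 * sCard K T) : ℝ) + CVconst d (sCard K T))
          (3 * (L1const d (sCard K T) : ℝ) + 3) := by
  have hcard : ∀ Z : Finset (P1 K), (Z : Set (P1 K)) ⊆ {P : P1 K | IsPreperiodicPoint φ P} →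
      Z.card ≤ (d + 2) * (10 ^ sCard K T) ^ 35 :=
    fun Z hZ => hgr.card_preperiodic_le hd fun y hy => hZ hy
  have hfin : {P : P1 K | IsPreperiodicPoint φ P}.Finite := by
    by_contra hinf
    obtain ⟨Z, hZ, hZcard⟩ := Set.Infinite.exists_subset_card_eq hinf
      ((d + 2) * (10 ^ sCard K T) ^ 35 + 1)
    exact absurd (hcard Z hZ) (by lia)
  refine ⟨hfin, ?_⟩
  rw [Set.ncard_eq_toFinset_card _ hfin]
  exact le_max_CVconst_L1const sCard_pos hd (hcard _ hfin.coe_toFinset.subset)
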